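/- arXiv:math/0402165 — 2 statements merged into one kernel-verified Lean document; each statement's English description precedes it below -/
import Mathlib

section
/- Let d > 1 and let α be a faithful, irreducible ℤ^d-action by automorphisms of 𝕋^n, and let λ denote Lebesgue (Haar) measure on 𝕋^n. For any α-invariant Borel probability measure μ on 𝕋^n there exists a single constant c = c_μ ∈ [0,1] such that for every 𝐧 ∈ ℤ^d, h_μ(α_𝐧) = c · h_λ(α_𝐧). -/
open MeasureTheory ENNReal

section Entropy

variable {α : Type*} [MeasurableSpace α]

/-- `P : Fin m → Set α` is a finite measurable partition of `α` modulo `μ`-null sets. -/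
def IsFinMeasPartition (μ : Measure α) {m : ℕ} (P : Fin m → Set α) : Prop :=
  (∀ i, MeasurableSet (P i)) ∧ Pairwise (Function.onFun Disjoint P) ∧ μ (⋃ i, P i)ᶜ = 0

/-- Shannon entropy (information) of a finite family of sets with respect to `μ`. -/
noncomputable def finPartitionEntropy (μ : Measure α) {ι : Type*} [Fintype ι]
    (P : ι → Set α) : ℝ≥0∞ :=
  ENNReal.ofReal (∑ i, Real.negMulLog ((μ (P i)).toReal))

/-- The common refinement `P ∨ T⁻¹ P ∨ ⋯ ∨ T^{-(n-1)} P`, indexed by `Fin n → Fin m`. -/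
def refinedPartition (T : α → α) {m : ℕ} (P : Fin m → Set α) (n : ℕ) :
    (Fin n → Fin m) → Set α :=
  fun f => ⋂ i : Fin n, T^[(i : ℕ)] ⁻¹' P (f i)

/-- The measure-theoretic (Kolmogorov–Sinai) entropy `h_μ(T)` of a transformation `T`
preserving `μ`, defined as the supremum over all finite measurable partitions `P` of
`inf_n H_μ(P ∨ T⁻¹P ∨ ⋯ ∨ T^{-n}P)/(n+1)` (by subadditivity this infimum equals the
usual limit). -/
noncomputable def ksEntropy (T : α → α) (μ : Measure α) : ℝ≥0∞ :=
  ⨆ (m : ℕ) (P : Fin m → Set α) (_ : IsFinMeasPartition μ P),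
    ⨅ n : ℕ, finPartitionEntropy μ (refinedPartition T P (n + 1)) / (n + 1 : ℝ≥0∞)

end Entropy

open MeasureTheory

/-- The endomorphism of the torus `𝕋^n = (ℝ/ℤ)^n` induced by an integer matrix `A`. -/
noncomputable def toralMap {N : ℕ} (A : Matrix (Fin N) (Fin N) ℤ)
    (x : Fin N → UnitAddCircle) : Fin N → UnitAddCircle :=
  fun i => ∑ j, A i j • x j

/-- A `ℤ^d`-action `α` by toral automorphisms is irreducible when restricted to a
subgroup `Λ ≤ ℤ^d` if every closed `Λ`-invariant proper subgroup of the torus is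
finite. -/
def IsIrreducibleOn {d N : ℕ} (α : (Fin d → ℤ) → Matrix (Fin N) (Fin N) ℤ)
    (Λ : AddSubgroup (Fin d → ℤ)) : Prop :=
  ∀ S : AddSubgroup (Fin N → UnitAddCircle), IsClosed (S : Set (Fin N → UnitAddCircle)) →
    (∀ v ∈ Λ, ∀ x ∈ S, toralMap (α v) x ∈ S) → S ≠ ⊤ →
    (S : Set (Fin N → UnitAddCircle)).Finite


set_option linter.unusedSectionVars false

namespace EntProp

section EntA
variable {Ω : Type*} [MeasurableSpace Ω]

/-- Shannon entropy of a finite valued function. -/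
noncomputable def HH (μ : Measure Ω) {ι : Type*} [Fintype ι] (f : Ω → ι) : ℝ :=
  ∑ i, Real.negMulLog (μ.real (f ⁻¹' {i}))

lemma gibbs {ι : Type*} (s : Finset ι) (p q : ι → ℝ) (hp : ∀ i ∈ s, 0 ≤ p i)
    (hq : ∀ i ∈ s, 0 ≤ q i) (h0 : ∀ i ∈ s, q i = 0 → p i = 0)
    (hs : ∑ i ∈ s, q i ≤ ∑ i ∈ s, p i) :
    ∑ i ∈ s, Real.negMulLog (p i) ≤ ∑ i ∈ s, -(p i * Real.log (q i)) := by
  have key : ∀ i ∈ s, Real.negMulLog (p i) ≤ -(p i * Real.log (q i)) + (q i - p i) := by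
    intro i hi
    rcases (hp i hi).eq_or_lt with h | h
    · rw [← h]; simp [hq i hi]
    · have hqp : 0 < q i := by
        rcases (hq i hi).eq_or_lt with h' | h'
        · have := h0 i hi h'.symm; linarith
        · exact h'
      have h1 := Real.log_le_sub_one_of_pos (div_pos hqp h)
      rw [Real.log_div hqp.ne' h.ne'] at h1
      have h2 := mul_le_mul_of_nonneg_left h1 h.le
      have h3 : p i * (q i / p i - 1) = q i - p i := by field_simp
      rw [h3] at h2
      unfold Real.negMulLog
      nlinarith
  calc _ ≤ ∑ i ∈ s, (-(p i * Real.log (q i)) + (q i - p i)) := Finset.sum_le_sum key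
    _ = ∑ i ∈ s, -(p i * Real.log (q i)) + (∑ i ∈ s, q i - ∑ i ∈ s, p i) := by
        rw [Finset.sum_add_distrib, Finset.sum_sub_distrib]
    _ ≤ _ := by linarith

variable {ι κ : Type*} [Fintype ι] [MeasurableSpace ι] [MeasurableSingletonClass ι]
  [Fintype κ] [MeasurableSpace κ] [MeasurableSingletonClass κ]
  (μ : Measure Ω) [IsProbabilityMeasure μ]

lemma meas_fib {f : Ω → ι} (hf : Measurable f) (i : ι) : MeasurableSet (f ⁻¹' {i}) :=
  hf (measurableSet_singleton i)

lemma HH_nonneg (f : Ω → ι) : 0 ≤ HH μ f :=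
  Finset.sum_nonneg fun _ _ => Real.negMulLog_nonneg measureReal_nonneg measureReal_le_one

lemma real_eq_sum {f : Ω → ι} (hf : Measurable f) {s : Set Ω} (hs : MeasurableSet s) :
    μ.real s = ∑ i, μ.real (s ∩ f ⁻¹' {i}) := by
  have h : s = ⋃ i ∈ (Finset.univ : Finset ι), (s ∩ f ⁻¹' {i}) := by
    ext x; simp
  conv_lhs => rw [h]
  rw [measureReal_biUnion_finset]
  · intro i _ j _ hij
    refine Set.disjoint_left.2 ?_
    rintro x ⟨_, h1⟩ ⟨_, h2⟩
    exact hij (h1.symm.trans h2)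
  · intro i _
    exact hs.inter (meas_fib hf i)

lemma sum_fib {f : Ω → ι} (hf : Measurable f) : ∑ i, μ.real (f ⁻¹' {i}) = 1 := by
  have := real_eq_sum μ hf MeasurableSet.univ
  simpa using this.symm

lemma prod_fib (f : Ω → ι) (g : Ω → κ) (p : ι × κ) :
    (fun x => (f x, g x)) ⁻¹' {p} = f ⁻¹' {p.1} ∩ g ⁻¹' {p.2} := by
  ext x; simp [Prod.ext_iff]

lemma HH_prod_le {f : Ω → ι} {g : Ω → κ} (hf : Measurable f) (hg : Measurable g) :
    HH μ (fun x => (f x, g x)) ≤ HH μ f + HH μ g := by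
  have e1 : ∀ i, μ.real (f ⁻¹' {i}) = ∑ j, μ.real (f ⁻¹' {i} ∩ g ⁻¹' {j}) :=
    fun i => real_eq_sum μ hg (meas_fib hf i)
  have e2 : ∀ j, μ.real (g ⁻¹' {j}) = ∑ i, μ.real (f ⁻¹' {i} ∩ g ⁻¹' {j}) := fun j => by
    rw [real_eq_sum μ hf (meas_fib hg j)]
    exact Finset.sum_congr rfl fun i _ => by rw [Set.inter_comm]
  unfold HH
  simp_rw [prod_fib]
  have := gibbs (Finset.univ : Finset (ι × κ)) (fun p => μ.real (f ⁻¹' {p.1} ∩ g ⁻¹' {p.2}))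
    (fun p => μ.real (f ⁻¹' {p.1}) * μ.real (g ⁻¹' {p.2})) (fun _ _ => measureReal_nonneg)
    (fun _ _ => by positivity) ?_ ?_
  · refine this.trans (le_of_eq ?_)
    have : ∀ p : ι × κ, -(μ.real (f ⁻¹' {p.1} ∩ g ⁻¹' {p.2}) *
        Real.log (μ.real (f ⁻¹' {p.1}) * μ.real (g ⁻¹' {p.2}))) =
        μ.real (f ⁻¹' {p.1} ∩ g ⁻¹' {p.2}) * (-Real.log (μ.real (f ⁻¹' {p.1}))) +
        μ.real (f ⁻¹' {p.1} ∩ g ⁻¹' {p.2}) * (-Real.log (μ.real (g ⁻¹' {p.2}))) := by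
      intro p
      by_cases h1 : μ.real (f ⁻¹' {p.1}) = 0
      · have : μ.real (f ⁻¹' {p.1} ∩ g ⁻¹' {p.2}) = 0 :=
          le_antisymm (h1 ▸ measureReal_mono Set.inter_subset_left) measureReal_nonneg
        simp [this]
      by_cases h2 : μ.real (g ⁻¹' {p.2}) = 0
      · have : μ.real (f ⁻¹' {p.1} ∩ g ⁻¹' {p.2}) = 0 :=
          le_antisymm (h2 ▸ measureReal_mono Set.inter_subset_right) measureReal_nonneg
        simp [this]
      rw [Real.log_mul h1 h2]; ring
    simp_rw [this]
    rw [Finset.sum_add_distrib]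
    congr 1
    · rw [Fintype.sum_prod_type]
      refine Finset.sum_congr rfl fun i _ => ?_
      simp only
      rw [← Finset.sum_mul, ← e1]; unfold Real.negMulLog; ring
    · rw [Fintype.sum_prod_type_right]
      refine Finset.sum_congr rfl fun i _ => ?_
      simp only
      rw [← Finset.sum_mul, ← e2]; unfold Real.negMulLog; ring
  · intro p _ h
    rcases mul_eq_zero.1 h with h1 | h1
    · exact le_antisymm (h1 ▸ measureReal_mono Set.inter_subset_left) measureReal_nonneg
    · exact le_antisymm (h1 ▸ measureReal_mono Set.inter_subset_right) measureReal_nonneg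
  · rw [Fintype.sum_prod_type, Fintype.sum_prod_type]
    simp only
    simp_rw [← Finset.mul_sum, ← e1, sum_fib μ hg]
    simp

lemma HH_le_count {f : Ω → ι} {g : Ω → κ} (hf : Measurable f) (hg : Measurable g)
    (J : κ → Finset ι) (C : ℕ) (hJ : ∀ x, f x ∈ J (g x)) (hC : ∀ j, (J j).card ≤ C) :
    HH μ (fun x => (f x, g x)) ≤ HH μ g + Real.log C := by
  classical
  have hne : Nonempty Ω := nonempty_of_isProbabilityMeasure μ
  have hC0 : 0 < C := by
    obtain ⟨x⟩ := hne
    exact lt_of_lt_of_le (Finset.card_pos.2 ⟨_, hJ x⟩) (hC (g x))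
  have hC1 : (0:ℝ) < C := by exact_mod_cast hC0
  have e2 : ∀ j, μ.real (g ⁻¹' {j}) = ∑ i, μ.real (f ⁻¹' {i} ∩ g ⁻¹' {j}) := fun j => by
    rw [real_eq_sum μ hf (meas_fib hg j)]
    exact Finset.sum_congr rfl fun i _ => by rw [Set.inter_comm]
  have e0 : ∀ i j, i ∉ J j → μ.real (f ⁻¹' {i} ∩ g ⁻¹' {j}) = 0 := by
    intro i j h
    have : f ⁻¹' {i} ∩ g ⁻¹' {j} = ∅ := by
      ext x
      simp only [Set.mem_inter_iff, Set.mem_preimage, Set.mem_singleton_iff,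
        Set.mem_empty_iff_false, iff_false, not_and]
      rintro rfl rfl
      exact h (hJ x)
    simp [this]
  unfold HH
  simp_rw [prod_fib]
  have := gibbs (Finset.univ : Finset (ι × κ)) (fun p => μ.real (f ⁻¹' {p.1} ∩ g ⁻¹' {p.2}))
    (fun p => if p.1 ∈ J p.2 then μ.real (g ⁻¹' {p.2}) / C else 0) (fun _ _ => measureReal_nonneg)
    (fun _ _ => by split_ifs <;> positivity) ?_ ?_
  · refine this.trans (le_of_eq ?_)
    have : ∀ p : ι × κ, -(μ.real (f ⁻¹' {p.1} ∩ g ⁻¹' {p.2}) *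
        Real.log (if p.1 ∈ J p.2 then μ.real (g ⁻¹' {p.2}) / C else 0)) =
        μ.real (f ⁻¹' {p.1} ∩ g ⁻¹' {p.2}) * (-Real.log (μ.real (g ⁻¹' {p.2}))) +
        μ.real (f ⁻¹' {p.1} ∩ g ⁻¹' {p.2}) * Real.log C := by
      intro p
      by_cases h1 : p.1 ∈ J p.2
      · by_cases h2 : μ.real (g ⁻¹' {p.2}) = 0
        · have : μ.real (f ⁻¹' {p.1} ∩ g ⁻¹' {p.2}) = 0 :=
            le_antisymm (h2 ▸ measureReal_mono Set.inter_subset_right) measureReal_nonneg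
          simp [this]
        rw [if_pos h1, Real.log_div h2 hC1.ne']; ring
      · simp [e0 _ _ h1]
    simp_rw [this]
    rw [Finset.sum_add_distrib]
    congr 1
    · rw [Fintype.sum_prod_type_right]
      refine Finset.sum_congr rfl fun i _ => ?_
      simp only
      rw [← Finset.sum_mul, ← e2]; unfold Real.negMulLog; ring
    · rw [Fintype.sum_prod_type_right]
      simp only
      simp_rw [← Finset.sum_mul, ← e2, sum_fib μ hg, one_mul]
  · intro p _ h
    by_cases h1 : p.1 ∈ J p.2
    · rw [if_pos h1] at h
      have h2 : μ.real (g ⁻¹' {p.2}) = 0 := by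
        rcases div_eq_zero_iff.1 h with h | h
        · exact h
        · exact absurd h hC1.ne'
      exact le_antisymm (h2 ▸ measureReal_mono Set.inter_subset_right) measureReal_nonneg
    · exact e0 _ _ h1
  · rw [Fintype.sum_prod_type_right, Fintype.sum_prod_type_right]
    refine Finset.sum_le_sum fun j _ => ?_
    simp only
    rw [← e2, Finset.sum_ite_mem, Finset.univ_inter, Finset.sum_const, nsmul_eq_mul]
    have : ((J j).card : ℝ) ≤ C := by exact_mod_cast hC j
    calc ((J j).card : ℝ) * (μ.real (g ⁻¹' {j}) / C) ≤ C * (μ.real (g ⁻¹' {j}) / C) := by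
          gcongr
      _ = _ := by field_simp

lemma HH_comp_le {f : Ω → ι} (hf : Measurable f) (φ : ι → κ) :
    HH μ (fun x => φ (f x)) ≤ HH μ f := by
  classical
  have hm : Measurable (fun x => φ (f x)) := (measurable_of_finite φ).comp hf
  have e1 : ∀ j, μ.real ((fun x => φ (f x)) ⁻¹' {j}) =
      ∑ i, if φ i = j then μ.real (f ⁻¹' {i}) else 0 := by
    intro j
    rw [real_eq_sum μ hf (meas_fib hm j)]
    refine Finset.sum_congr rfl fun i _ => ?_
    split_ifs with h
    · congr 1; ext x; simp only [Set.mem_inter_iff, Set.mem_preimage, Set.mem_singleton_iff]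
      constructor
      · exact fun h => h.2
      · rintro rfl; exact ⟨h, rfl⟩
    · have : (fun x => φ (f x)) ⁻¹' {j} ∩ f ⁻¹' {i} = ∅ := by
        ext x
        simp only [Set.mem_inter_iff, Set.mem_preimage, Set.mem_singleton_iff,
          Set.mem_empty_iff_false, iff_false, not_and]
        rintro h1 rfl; exact h h1
      simp [this]
  unfold HH
  have : ∀ j, Real.negMulLog (μ.real ((fun x => φ (f x)) ⁻¹' {j})) ≤
      ∑ i, if φ i = j then Real.negMulLog (μ.real (f ⁻¹' {i})) else 0 := by
    intro j
    set t := μ.real ((fun x => φ (f x)) ⁻¹' {j}) with ht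
    have h1 : Real.negMulLog t = ∑ i, if φ i = j then μ.real (f ⁻¹' {i}) * (-Real.log t) else 0 := by
      have : Real.negMulLog t = t * (-Real.log t) := by unfold Real.negMulLog; ring
      rw [this]
      have h2 : t = ∑ i, if φ i = j then μ.real (f ⁻¹' {i}) else 0 := e1 j
      have h3 : ∀ r : ℝ, t * r = (∑ i, if φ i = j then μ.real (f ⁻¹' {i}) else 0) * r :=
        fun r => by rw [← h2]
      rw [h3, Finset.sum_mul]
      refine Finset.sum_congr rfl fun i _ => ?_
      split_ifs <;> simp
    rw [h1]
    refine Finset.sum_le_sum fun i _ => ?_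
    split_ifs with h
    · rcases (measureReal_nonneg (μ := μ) (s := f ⁻¹' {i})).eq_or_lt with h0 | h0
      · rw [← h0]; simp
      · have : μ.real (f ⁻¹' {i}) ≤ t := by
          refine measureReal_mono ?_
          rintro x rfl; exact h
        have := Real.log_le_log h0 this
        unfold Real.negMulLog
        nlinarith
    · exact le_rfl
  refine (Finset.sum_le_sum fun j _ => this j).trans (le_of_eq ?_)
  rw [Finset.sum_comm]
  simp

lemma HH_le_count' {f : Ω → ι} {g : Ω → κ} (hf : Measurable f) (hg : Measurable g)
    (J : κ → Finset ι) (C : ℕ) (hJ : ∀ x, f x ∈ J (g x)) (hC : ∀ j, (J j).card ≤ C) :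
    HH μ f ≤ HH μ g + Real.log C :=
  (HH_comp_le μ (f := fun x => (f x, g x)) (hf.prodMk hg) Prod.fst).trans
    (HH_le_count μ hf hg J C hJ hC)

lemma HH_le_log {f : Ω → ι} (hf : Measurable f) : HH μ f ≤ Real.log (Fintype.card ι) := by
  have := HH_le_count' μ hf (g := fun _ : Ω => ()) measurable_const (fun _ => Finset.univ)
    (Fintype.card ι) (fun _ => Finset.mem_univ _) (fun _ => le_rfl)
  refine this.trans ?_
  simp [HH]

lemma HH_ge {f : Ω → ι} (hf : Measurable f) {t : ℝ} 
    (h : ∀ i, μ.real (f ⁻¹' {i}) ≤ t) : -Real.log t ≤ HH μ f := by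
  have : -Real.log t = ∑ i, μ.real (f ⁻¹' {i}) * (-Real.log t) := by
    rw [← Finset.sum_mul, sum_fib μ hf, one_mul]
  rw [this]
  refine Finset.sum_le_sum fun i _ => ?_
  rcases (measureReal_nonneg (μ := μ) (s := f ⁻¹' {i})).eq_or_lt with h0 | h0
  · rw [← h0]; simp
  · have := Real.log_le_log h0 (h i)
    unfold Real.negMulLog
    nlinarith

lemma HH_map {T : Ω → Ω} (hT : MeasurePreserving T μ μ) {f : Ω → ι} (hf : Measurable f) :
    HH μ (fun x => f (T x)) = HH μ f := by
  unfold HH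
  refine Finset.sum_congr rfl fun i _ => ?_
  congr 1
  have : (fun x => f (T x)) ⁻¹' {i} = T ⁻¹' (f ⁻¹' {i}) := rfl
  rw [this, hT.measureReal_preimage (meas_fib hf i).nullMeasurableSet]

/-- joint itinerary map -/
def join (T : Ω → Ω) (f : Ω → ι) (n : ℕ) : Ω → (Fin n → ι) := fun x j => f (T^[(j : ℕ)] x)

lemma measurable_join {T : Ω → Ω} (hT : Measurable T) {f : Ω → ι} (hf : Measurable f) (n : ℕ) :
    Measurable (join T f n) :=
  measurable_pi_lambda _ fun j => hf.comp (hT.iterate j)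

noncomputable def uu (μ : Measure Ω) (T : Ω → Ω) (f : Ω → ι) (n : ℕ) : ℝ := HH μ (join T f n)

lemma uu_subadd {T : Ω → Ω} (hT : MeasurePreserving T μ μ) {f : Ω → ι} (hf : Measurable f) :
    Subadditive (uu μ T f) := by
  intro m n
  have hj := measurable_join hT.measurable hf
  have h1 : HH μ (join T f (m + n)) ≤
      HH μ (fun x => (join T f m x, join T f n (T^[m] x))) := by
    have := HH_comp_le μ (f := fun x => (join T f m x, join T f n (T^[m] x)))
      ((hj m).prodMk ((hj n).comp (hT.measurable.iterate m)))
      (fun p : (Fin m → ι) × (Fin n → ι) => (Fin.append p.1 p.2 : Fin (m + n) → ι))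
    convert this using 2
    funext x j
    refine Fin.addCases (fun i => ?_) (fun i => ?_) j
    · simp [join]
    · simp only [join, Fin.append_right, Fin.val_natAdd]
      rw [← Function.iterate_add_apply, add_comm]
  refine h1.trans ((HH_prod_le μ (hj m) ((hj n).comp (hT.measurable.iterate m))).trans ?_)
  have := HH_map μ (hT.iterate m) (hj n)
  unfold uu
  exact add_le_add le_rfl this.le

lemma uu_nonneg (T : Ω → Ω) (f : Ω → ι) (n : ℕ) : 0 ≤ uu μ T f n := HH_nonneg μ _

lemma uu_bdd (T : Ω → Ω) (f : Ω → ι) : BddBelow (Set.range fun n => uu μ T f n / n) :=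
  ⟨0, by rintro _ ⟨n, rfl⟩; exact div_nonneg (uu_nonneg μ T f n) n.cast_nonneg⟩

noncomputable def hh (μ : Measure Ω) (T : Ω → Ω) (f : Ω → ι) : ℝ :=
  sInf ((fun n : ℕ => uu μ T f n / n) '' Set.Ici 1)

lemma hh_tendsto {T : Ω → Ω} (hT : MeasurePreserving T μ μ) {f : Ω → ι} (hf : Measurable f) :
    Filter.Tendsto (fun n : ℕ => uu μ T f n / n) Filter.atTop (nhds (hh μ T f)) := by
  have h := (uu_subadd μ hT hf).tendsto_lim (uu_bdd μ T f)
  rw [Subadditive.lim] at h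
  exact h

lemma hh_le (T : Ω → Ω) (f : Ω → ι) {n : ℕ} (hn : 1 ≤ n) : hh μ T f ≤ uu μ T f n / n :=
  csInf_le ((uu_bdd μ T f).mono (Set.image_subset_range _ _)) ⟨n, hn, rfl⟩

lemma hh_nonneg (T : Ω → Ω) (f : Ω → ι) : 0 ≤ hh μ T f := by
  apply Real.sInf_nonneg
  rintro _ ⟨n, _, rfl⟩
  exact div_nonneg (uu_nonneg μ T f n) n.cast_nonneg

lemma uu_le_mul {T : Ω → Ω} (hT : MeasurePreserving T μ μ) {f : Ω → ι} (hf : Measurable f) (n : ℕ) :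
    uu μ T f n ≤ n * HH μ f := by
  have hone : uu μ T f 1 ≤ HH μ f := by
    have := HH_comp_le μ hf (fun i => (fun _ => i : Fin 1 → ι))
    convert this using 1
    unfold uu
    congr 1
    funext x j
    simp [join]
  have hz : uu μ T f 0 = 0 := by
    unfold uu HH
    rw [Fintype.sum_unique]
    have : join T f 0 ⁻¹' {default} = Set.univ := by
      ext x; simp only [Set.mem_preimage, Set.mem_singleton_iff, Set.mem_univ, iff_true]
      exact Subsingleton.elim _ _
    simp [this]
  induction n with
  | zero => simp [hz]
  | succ n ih =>
    have := uu_subadd μ hT hf n 1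
    push_cast
    linarith

/-- `M * h(T,f) ≤ h(T^M, join f M)` -/
lemma hh_pow {T : Ω → Ω} (hT : MeasurePreserving T μ μ) {f : Ω → ι} (hf : Measurable f) (M : ℕ)
    (hM : 1 ≤ M) : M * hh μ T f ≤ hh μ (T^[M]) (join T f M) := by
  have hMp : (0:ℝ) < M := by exact_mod_cast hM
  refine le_csInf ⟨_, 1, Set.mem_Ici.2 le_rfl, rfl⟩ ?_
  rintro _ ⟨s, hs, rfl⟩
  have hs' : 1 ≤ s := hs
  have hsp : (0:ℝ) < s := by exact_mod_cast hs'
  have h1 : uu μ T f (s * M) ≤ uu μ (T^[M]) (join T f M) s := by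
    have := HH_comp_le μ (measurable_join (hT.measurable.iterate M)
      (measurable_join hT.measurable hf M) s)
      (fun (w : Fin s → Fin M → ι) (j : Fin (s * M)) => w (finProdFinEquiv.symm j).1
        (finProdFinEquiv.symm j).2)
    refine le_trans (le_of_eq ?_) this
    unfold uu
    congr 1
    funext x j
    obtain ⟨⟨a, b⟩, rfl⟩ := finProdFinEquiv.surjective j
    simp only [join, Equiv.symm_apply_apply]
    rw [← Function.iterate_mul, ← Function.iterate_add_apply]
    congr 2
  have h2 := hh_le μ T f (n := s * M) (Nat.mul_pos hs' hM)
  simp only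
  rw [le_div_iff₀ (by push_cast; positivity)] at h2
  rw [le_div_iff₀ hsp]
  push_cast at h2
  calc _ = hh μ T f * (s * M) := by ring
    _ ≤ _ := h2.trans h1

/-- `h(T^M, f) ≤ M * h(T,f)` -/
lemma hh_pow_le {T : Ω → Ω} (hT : MeasurePreserving T μ μ) {f : Ω → ι} (hf : Measurable f) (M : ℕ)
    (hM : 1 ≤ M) : hh μ (T^[M]) f ≤ M * hh μ T f := by
  have hMp : (0:ℝ) < M := by exact_mod_cast hM
  have h1 : ∀ s : ℕ, uu μ (T^[M]) f s ≤ uu μ T f (s * M) := by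
    intro s
    have := HH_comp_le μ (measurable_join hT.measurable hf (s * M))
      (fun (w : Fin (s * M) → ι) (j : Fin s) => w (finProdFinEquiv (j, ⟨0, hM⟩)))
    refine le_trans (le_of_eq ?_) this
    unfold uu
    congr 1
    funext x j
    simp only [join]
    rw [← Function.iterate_mul]
    congr 2
    simp
  have ht := (hh_tendsto μ hT hf).comp
    (Filter.tendsto_id.atTop_mul_const' (show 0 < M from hM) : Filter.Tendsto (fun s : ℕ => s * M) _ _)
  have ht2 := ht.const_mul (M : ℝ)
  refine ge_of_tendsto ht2 ?_
  filter_upwards [Filter.eventually_ge_atTop 1] with s hs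
  have hsp : (0:ℝ) < s := by exact_mod_cast hs
  refine (hh_le μ _ f hs).trans ?_
  simp only [Function.comp]
  push_cast
  rw [show (M:ℝ) * (uu μ T f (s * M) / (s * M)) = uu μ T f (s*M) / s by field_simp]
  gcongr
  exact h1 s

end EntA
end EntProp

set_option linter.unusedSectionVars false
namespace EntProp

section EntB
variable {Ω : Type*} [MeasurableSpace Ω]
variable {ι κ : Type*} [Fintype ι] [MeasurableSpace ι] [MeasurableSingletonClass ι]
  [Fintype κ] [MeasurableSpace κ] [MeasurableSingletonClass κ]
  (μ : Measure Ω) [IsProbabilityMeasure μ]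

lemma join_fib (T : Ω → Ω) {m : ℕ} (f : Ω → Fin m) (n : ℕ) (w : Fin n → Fin m) :
    refinedPartition T (fun i => f ⁻¹' {i}) n w = join T f n ⁻¹' {w} := by
  ext x
  simp [refinedPartition, join, funext_iff]

lemma ofReal_hh_eq {T : Ω → Ω} (hT : MeasurePreserving T μ μ) {f : Ω → ι} (hf : Measurable f) :
    ⨅ n : ℕ, ENNReal.ofReal (uu μ T f (n + 1)) / (n + 1 : ℝ≥0∞) = ENNReal.ofReal (hh μ T f) := by
  have e : ∀ n : ℕ, ENNReal.ofReal (uu μ T f (n + 1)) / (n + 1 : ℝ≥0∞) =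
      ENNReal.ofReal (uu μ T f (n + 1) / ((n + 1 : ℕ) : ℝ)) := by
    intro n
    rw [ENNReal.ofReal_div_of_pos (by positivity), ENNReal.ofReal_natCast]
    push_cast; rfl
  simp_rw [e]
  apply le_antisymm
  · have h1 := (hh_tendsto μ hT hf).comp (Filter.tendsto_add_atTop_nat 1)
    have h2 := (ENNReal.continuous_ofReal.tendsto _).comp h1
    refine ge_of_tendsto' h2 fun n => ?_
    exact iInf_le _ n
  · exact le_iInf fun n => ENNReal.ofReal_le_ofReal (hh_le μ T f (by omega))

lemma le_ks_fin {T : Ω → Ω} (hT : MeasurePreserving T μ μ) {m : ℕ} {f : Ω → Fin m}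
    (hf : Measurable f) : ENNReal.ofReal (hh μ T f) ≤ ksEntropy T μ := by
  unfold ksEntropy
  refine le_trans ?_ (le_iSup _ m)
  refine le_trans ?_ (le_iSup _ (fun i => f ⁻¹' {i}))
  refine le_trans ?_ (le_iSup _ ?_)
  · rw [← ofReal_hh_eq μ hT hf]
    refine iInf_mono fun n => ?_
    unfold finPartitionEntropy
    simp_rw [join_fib]
    exact le_rfl
  · refine ⟨fun i => meas_fib hf i, ?_, ?_⟩
    · intro i j hij
      refine Set.disjoint_left.2 fun x h1 h2 => hij ?_
      exact (Set.mem_singleton_iff.1 h1).symm.trans h2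
    · have : (⋃ i, f ⁻¹' {i})ᶜ = ∅ := by
        ext x; simp
      simp [this]

lemma hh_comp_le {T : Ω → Ω} (hT : MeasurePreserving T μ μ) {f : Ω → ι} (hf : Measurable f)
    (φ : ι → κ) : hh μ T (fun x => φ (f x)) ≤ hh μ T f := by
  refine le_csInf ⟨_, 1, Set.mem_Ici.2 le_rfl, rfl⟩ ?_
  rintro _ ⟨s, hs, rfl⟩
  refine (hh_le μ T _ hs).trans ?_
  simp only
  gcongr
  exact HH_comp_le μ (measurable_join hT.measurable hf s) (fun w j => φ (w j))

lemma le_ks {T : Ω → Ω} (hT : MeasurePreserving T μ μ) {f : Ω → ι}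
    (hf : Measurable f) : ENNReal.ofReal (hh μ T f) ≤ ksEntropy T μ := by
  let e := Fintype.equivFin ι
  have h1 := hh_comp_le μ hT (f := fun x => e (f x)) ((measurable_of_finite e).comp hf) e.symm
  simp only [Equiv.symm_apply_apply] at h1
  exact (ENNReal.ofReal_le_ofReal h1).trans (le_ks_fin μ hT ((measurable_of_finite e).comp hf))

lemma ks_le {T : Ω → Ω} (hT : MeasurePreserving T μ μ) (a : ℝ≥0∞)
    (h : ∀ (m : ℕ) (f : Ω → Fin m), Measurable f → ENNReal.ofReal (hh μ T f) ≤ a) :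
    ksEntropy T μ ≤ a := by
  classical
  unfold ksEntropy
  refine iSup_le fun m => iSup_le fun P => iSup_le fun hP => ?_
  obtain ⟨hmeas, hdisj, hnull⟩ := hP
  have hne : Nonempty (Fin m) := by
    by_contra hcon
    rw [not_nonempty_iff] at hcon
    simp at hnull
  let i0 : Fin m := hne.some
  let f : Ω → Fin m := fun x => if h : ∃ i, x ∈ P i then h.choose else i0
  have hfP : ∀ x i, x ∈ P i → f x = i := by
    intro x i hi
    have hex : ∃ i, x ∈ P i := ⟨i, hi⟩
    have hfx : f x = hex.choose := dif_pos hex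
    rw [hfx]
    by_contra hcon
    exact Set.disjoint_left.1 (hdisj hcon) hex.choose_spec hi
  have hmU : MeasurableSet (⋃ i, P i) := MeasurableSet.iUnion hmeas
  have hf : Measurable f := by
    refine measurable_to_countable' fun i => ?_
    have : f ⁻¹' {i} = P i ∪ (if i = i0 then (⋃ i, P i)ᶜ else ∅) := by
      ext x
      by_cases hex : ∃ i, x ∈ P i
      · obtain ⟨k, hk⟩ := hex
        have h1 := hfP x k hk
        have hxU : x ∈ ⋃ i, P i := Set.mem_iUnion.2 ⟨k, hk⟩
        have hnot : x ∉ (if i = i0 then (⋃ i, P i)ᶜ else ∅) := by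
          split_ifs
          · exact fun h => h hxU
          · exact fun h => h
        constructor
        · intro hx
          have : k = i := h1.symm.trans hx
          exact Or.inl (this ▸ hk)
        · rintro (hx | hx)
          · exact hfP x i hx
          · exact absurd hx hnot
      · have hfx : f x = i0 := dif_neg hex
        have hxU : x ∈ (⋃ i, P i)ᶜ := fun hx => hex (Set.mem_iUnion.1 hx)
        constructor
        · intro hx
          right
          have : i = i0 := (Set.mem_singleton_iff.1 hx).symm.trans hfx
          rw [if_pos this]; exact hxU
        · rintro (hx | hx)
          · exact absurd ⟨i, hx⟩ hex
          · split_ifs at hx with h2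
            · simp [hfx, h2]
            · exact absurd hx (fun h => h)
    rw [this]
    refine (hmeas i).union ?_
    split_ifs
    · exact hmU.compl
    · exact MeasurableSet.empty
  refine le_trans (le_of_eq ?_) (h m f hf)
  rw [← ofReal_hh_eq μ hT hf]
  refine iInf_congr fun n => ?_
  congr 1
  unfold finPartitionEntropy uu HH
  congr 1
  refine Finset.sum_congr rfl fun w _ => ?_
  congr 1
  unfold Measure.real
  congr 1
  have hae : ∀ᵐ x ∂μ, x ∈ ⋃ i, P i := by
    rw [ae_iff]; exact hnull
  have hae2 : ∀ᵐ x ∂μ, ∀ j : ℕ, T^[j] x ∈ ⋃ i, P i := by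
    rw [ae_all_iff]
    intro j
    exact (hT.iterate j).quasiMeasurePreserving.ae hae
  refine measure_congr ?_
  filter_upwards [hae2] with x hx
  apply propext
  change x ∈ refinedPartition T P (n+1) w ↔ x ∈ join T f (n + 1) ⁻¹' {w}
  simp only [refinedPartition, join, Set.mem_iInter, Set.mem_preimage, Set.mem_singleton_iff,
    funext_iff]
  refine forall_congr' fun j => ?_
  constructor
  · exact hfP _ _
  · intro h2
    obtain ⟨k, hk⟩ := Set.mem_iUnion.1 (hx j)
    have := hfP _ _ hk
    rw [← h2, this]; exact hk

lemma ks_pow_ge {T : Ω → Ω} (hT : MeasurePreserving T μ μ) (M : ℕ) (hM : 1 ≤ M) :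
    M * ksEntropy T μ ≤ ksEntropy (T^[M]) μ := by
  have hM0 : (M : ℝ≥0∞) ≠ 0 := by exact_mod_cast (by omega : M ≠ 0)
  rw [mul_comm, ← ENNReal.le_div_iff_mul_le (Or.inl hM0) (Or.inl (ENNReal.natCast_ne_top M))]
  refine ks_le μ hT _ fun m f hf => ?_
  rw [ENNReal.le_div_iff_mul_le (Or.inl hM0) (Or.inl (ENNReal.natCast_ne_top M))]
  rw [← ENNReal.ofReal_natCast M, ← ENNReal.ofReal_mul (hh_nonneg μ T f), mul_comm]
  exact (ENNReal.ofReal_le_ofReal (hh_pow μ hT hf M hM)).trans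
    (le_ks μ (hT.iterate M) (measurable_join hT.measurable hf M))

lemma ks_pow_le {T : Ω → Ω} (hT : MeasurePreserving T μ μ) (M : ℕ) (hM : 1 ≤ M) :
    ksEntropy (T^[M]) μ ≤ M * ksEntropy T μ := by
  refine ks_le μ (hT.iterate M) _ fun m f hf => ?_
  refine (ENNReal.ofReal_le_ofReal (hh_pow_le μ hT hf M hM)).trans ?_
  rw [ENNReal.ofReal_mul (Nat.cast_nonneg M), ENNReal.ofReal_natCast]
  gcongr
  exact le_ks μ hT hf

end EntB

section Approx
variable {X : Type*} [MetricSpace X] [CompactSpace X] [MeasurableSpace X] [BorelSpace X]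
  (μ : Measure X) [IsProbabilityMeasure μ]

lemma HH_small (m : ℕ) (ε : ℝ) (hε : 0 < ε) : ∃ t > 0, ∀ g : X → Option (Fin m),
    (∀ i, MeasurableSet (g ⁻¹' {i})) → μ.real (g ⁻¹' {none})ᶜ ≤ t → HH μ g ≤ ε := by
  have hc0 : Filter.Tendsto Real.negMulLog (nhds 0) (nhds 0) := by
    have := Real.continuous_negMulLog.tendsto 0; simpa using this
  have hc1 : Filter.Tendsto Real.negMulLog (nhds 1) (nhds 0) := by
    have := Real.continuous_negMulLog.tendsto 1; simpa using this
  set e := ε / (m + 1) with he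
  have hep : 0 < e := by positivity
  obtain ⟨t0, ht0, h0⟩ := Metric.eventually_nhds_iff.1 (hc0.eventually (gt_mem_nhds hep))
  obtain ⟨t1, ht1, h1⟩ := Metric.eventually_nhds_iff.1 (hc1.eventually (gt_mem_nhds hep))
  refine ⟨min t0 t1 / 2, by positivity, fun g hg ht => ?_⟩
  have hmin0 : min t0 t1 / 2 < t0 := by
    have := min_le_left t0 t1; have := lt_min ht0 ht1; linarith
  have hmin1 : min t0 t1 / 2 < t1 := by
    have := min_le_right t0 t1; have := lt_min ht0 ht1; linarith
  unfold HH
  rw [Fintype.sum_option]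
  have hn : Real.negMulLog (μ.real (g ⁻¹' {none})) ≤ e := by
    refine (h1 ?_).le
    rw [Real.dist_eq, abs_sub_comm]
    rw [probReal_compl_eq_one_sub (hg none)] at ht
    rw [abs_of_nonneg (by linarith [measureReal_le_one (μ := μ) (s := g ⁻¹' {none})])]
    linarith
  have hs : ∀ i, Real.negMulLog (μ.real (g ⁻¹' {some i})) ≤ e := by
    intro i
    refine (h0 ?_).le
    rw [Real.dist_eq, sub_zero, abs_of_nonneg measureReal_nonneg]
    refine lt_of_le_of_lt (le_trans (measureReal_mono ?_) ht) hmin0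
    intro x hx hx2
    rw [Set.mem_preimage, Set.mem_singleton_iff] at hx hx2
    rw [hx] at hx2; cases hx2
  calc _ ≤ e + ∑ i : Fin m, e := add_le_add hn (Finset.sum_le_sum fun i _ => hs i)
    _ = ε := by rw [Finset.sum_const, Finset.card_univ, Fintype.card_fin, nsmul_eq_mul, he]; field_simp; ring

instance optMS (n : ℕ) : MeasurableSpace (Option (Fin n)) := ⊤
instance optDMS (n : ℕ) : DiscreteMeasurableSpace (Option (Fin n)) := ⟨fun _ => trivial⟩

lemma approx {m : ℕ} {f : X → Fin m} (hf : Measurable f) (ε : ℝ) (hε : 0 < ε) :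
    ∃ δ > 0, ∃ g : X → Option (Fin m), Measurable g ∧ HH μ g ≤ ε ∧
      ∀ {Y κ : Type} (l : Y → κ) (e : Y → X), (∀ y y', l y = l y' → dist (e y) (e y') < δ) →
        ∃ fh : κ → Fin m, ∀ y, f (e y) = (g (e y)).getD (fh (l y)) := by
  classical
  obtain ⟨t, ht, hsmall⟩ := HH_small μ m ε hε
  have hne : Nonempty X := nonempty_of_isProbabilityMeasure μ
  have hm : 0 < m := (f hne.some).pos
  have hK : ∀ i, ∃ K ⊆ f ⁻¹' {i}, IsCompact K ∧ μ (f ⁻¹' {i} \ K) < ENNReal.ofReal (t / m) := by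
    intro i
    have := (meas_fib hf i).exists_isCompact_sdiff_lt (μ := μ) (measure_ne_top _ _)
      (ε := ENNReal.ofReal (t / m)) (by
        have : 0 < t / m := by positivity
        simpa using this)
    exact this
  choose K hKs hKc hKm using hK
  have hKmeas : ∀ i, MeasurableSet (K i) := fun i => (hKc i).measurableSet
  let G : Set X := ⋃ i, K i
  have hG : MeasurableSet G := MeasurableSet.iUnion hKmeas
  -- distance
  have hd : ∀ i j, i ≠ j → ∃ δ > 0, ∀ x ∈ K i, ∀ y ∈ K j, δ ≤ dist x y := by
    intro i j hij
    have hdis : Disjoint (K i) (K j) := by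
      refine Set.disjoint_left.2 fun x h1 h2 => hij ?_
      exact (Set.mem_singleton_iff.1 (hKs i h1)).symm.trans (hKs j h2)
    obtain ⟨δ, hδ, h⟩ := Metric.exists_pos_forall_lt_edist (hKc i) (hKc j).isClosed hdis
    refine ⟨δ, hδ, fun x hx y hy => ?_⟩
    have := (h x hx y hy).le
    rw [edist_dist] at this
    have h2 := (ENNReal.le_ofReal_iff_toReal_le ENNReal.coe_ne_top dist_nonneg).1 this
    simpa using h2
  have hd' : ∀ p : Fin m × Fin m, ∃ δ > 0, p.1 ≠ p.2 → ∀ x ∈ K p.1, ∀ y ∈ K p.2, δ ≤ dist x y := by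
    intro p
    by_cases hp : p.1 = p.2
    · exact ⟨1, one_pos, fun h => absurd hp h⟩
    · obtain ⟨δ, hδ, h⟩ := hd _ _ hp
      exact ⟨δ, hδ, fun _ => h⟩
  choose D hD hDd using hd'
  have hne2 : (Finset.univ : Finset (Fin m × Fin m)).Nonempty := ⟨(⟨0, hm⟩, ⟨0, hm⟩), Finset.mem_univ _⟩
  let δ := (Finset.univ : Finset (Fin m × Fin m)).inf' hne2 D
  have hδ : 0 < δ := by
    rw [Finset.lt_inf'_iff]; exact fun p _ => hD p
  let g : X → Option (Fin m) := fun x => if x ∈ G then none else some (f x)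
  have hg : Measurable g := by
    refine Measurable.ite hG measurable_const ?_
    exact (measurable_of_finite some).comp hf
  refine ⟨δ, hδ, g, hg, hsmall g (fun i => hg (measurableSet_singleton i)) ?_, ?_⟩
  · have hsub : (g ⁻¹' {none})ᶜ ⊆ ⋃ i, (f ⁻¹' {i} \ K i) := by
      intro x hx
      refine Set.mem_iUnion.2 ⟨f x, rfl, fun hxK => hx ?_⟩
      have hxG : x ∈ G := Set.mem_iUnion.2 ⟨_, hxK⟩
      simp [g, hxG]
    have h1 : μ (g ⁻¹' {none})ᶜ ≤ ENNReal.ofReal t := by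
      calc μ (g ⁻¹' {none})ᶜ ≤ μ (⋃ i, (f ⁻¹' {i} \ K i)) := measure_mono hsub
        _ ≤ ∑ i, μ (f ⁻¹' {i} \ K i) := measure_iUnion_fintype_le _ _
        _ ≤ ∑ i : Fin m, ENNReal.ofReal (t / m) := Finset.sum_le_sum fun i _ => (hKm i).le
        _ = ENNReal.ofReal t := by
          rw [Finset.sum_const, Finset.card_univ, Fintype.card_fin, nsmul_eq_mul,
            ← ENNReal.ofReal_natCast, ← ENNReal.ofReal_mul (by positivity)]
          congr 1; field_simp
    exact ENNReal.toReal_le_of_le_ofReal ht.le h1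
  · intro Y κ l e hle
    let i0 : Fin m := ⟨0, hm⟩
    let fh : κ → Fin m := fun k => if h : ∃ y, l y = k ∧ e y ∈ G then f (e h.choose) else i0
    refine ⟨fh, fun y => ?_⟩
    by_cases hy : e y ∈ G
    · have hgy : g (e y) = none := if_pos hy
      rw [hgy, Option.getD_none]
      have hex : ∃ y', l y' = l y ∧ e y' ∈ G := ⟨y, rfl, hy⟩
      have hfh : fh (l y) = f (e hex.choose) := dif_pos hex
      rw [hfh]
      obtain ⟨h1, h2⟩ := hex.choose_spec
      obtain ⟨i, hi⟩ := Set.mem_iUnion.1 hy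
      obtain ⟨j, hj⟩ := Set.mem_iUnion.1 h2
      have hi' : f (e y) = i := hKs i hi
      have hj' : f (e hex.choose) = j := hKs j hj
      rw [hi', hj']
      by_contra hij
      have h3 := hDd (i, j) hij _ hi _ hj
      have h4 : δ ≤ D (i, j) := Finset.inf'_le _ (Finset.mem_univ _)
      have h5 := hle _ _ h1.symm
      linarith
    · have hgy : g (e y) = some (f (e y)) := if_neg hy
      rw [hgy]; rfl

end Approx
end EntProp

set_option linter.unusedSectionVars false
namespace EntProp

section Gen
variable {X : Type} [MetricSpace X] [CompactSpace X] [MeasurableSpace X] [BorelSpace X]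
  (μ : Measure X) [IsProbabilityMeasure μ]

lemma generator {U : X → X} (hU : MeasurePreserving U μ μ) {m : ℕ} {F : X → Fin m}
    (hF : Measurable F) (ε : ℝ) (hε : 0 < ε) :
    ∃ δ > 0, ∀ (p : ℕ) (η : X → Fin p) (R : ℕ), Measurable η →
      (∀ x y, join U η (2 * R + 1) x = join U η (2 * R + 1) y → dist (U^[R] x) (U^[R] y) < δ) →
      hh μ U F ≤ hh μ U η + ε := by
  obtain ⟨δ, hδ, g, hg, hgε, H⟩ := approx μ hF ε hε
  refine ⟨δ, hδ, fun p η R hη hsep => ?_⟩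
  obtain ⟨fh, hfh⟩ := H (join U η (2 * R + 1)) (U^[R]) hsep
  have hmj := measurable_join hU.measurable hη
  have hmg := measurable_join hU.measurable hg
  have key : ∀ s : ℕ, uu μ U F s ≤ s * ε + (uu μ U η s + uu μ U η (2 * R)) := by
    intro s
    have h1 : uu μ U F s = HH μ (fun x => join U F s (U^[R] x)) :=
      (HH_map μ (hU.iterate R) (measurable_join hU.measurable hF s)).symm
    have h2 := HH_comp_le μ
      (f := fun x => (join U g s (U^[R] x), join U η (s + 2 * R) x))
      (((hmg s).comp (hU.measurable.iterate R)).prodMk (hmj _))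
      (fun (w : (Fin s → Option (Fin m)) × (Fin (s + 2 * R) → Fin p)) (j : Fin s) =>
        (w.1 j).getD (fh (fun i : Fin (2 * R + 1) => w.2 ⟨i + j, by omega⟩)))
    have h3 : (fun x => join U F s (U^[R] x)) = fun x (j : Fin s) =>
        ((join U g s (U^[R] x)) j).getD
          (fh (fun i : Fin (2 * R + 1) => (join U η (s + 2 * R) x) ⟨i + j, by omega⟩)) := by
      funext x j
      have e1 : U^[(j:ℕ)] (U^[R] x) = U^[R] (U^[(j:ℕ)] x) := by
        rw [← Function.iterate_add_apply, ← Function.iterate_add_apply, add_comm]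
      simp only [join]
      rw [e1, hfh]
      congr 2
      funext i
      simp only [join]
      rw [← Function.iterate_add_apply]
    rw [h1, h3]
    refine h2.trans ((HH_prod_le μ ((hmg s).comp (hU.measurable.iterate R)) (hmj _)).trans ?_)
    have h4 : HH μ (fun x => join U g s (U^[R] x)) = uu μ U g s :=
      HH_map μ (hU.iterate R) (hmg s)
    refine add_le_add ?_ (uu_subadd μ hU hη s (2 * R))
    refine le_trans h4.le ((uu_le_mul μ hU hg s).trans ?_)
    gcongr
  have ht : Filter.Tendsto (fun s : ℕ => ε + (uu μ U η s / s + uu μ U η (2 * R) / s)) Filter.atTop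
      (nhds (ε + (hh μ U η + 0))) :=
    tendsto_const_nhds.add ((hh_tendsto μ hU hη).add
      (tendsto_const_nhds.div_atTop tendsto_natCast_atTop_atTop))
  have hfin : hh μ U F ≤ ε + (hh μ U η + 0) := by
    refine ge_of_tendsto ht ?_
    filter_upwards [Filter.eventually_ge_atTop 1] with s hs
    have hsp : (0:ℝ) < s := by exact_mod_cast hs
    refine (hh_le μ U F hs).trans ?_
    rw [div_le_iff₀ hsp]
    refine (key s).trans (le_of_eq ?_)
    field_simp
  linarith

end Gen

section Geom

abbrev Tor (N : ℕ) := Fin N → UnitAddCircle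

lemma circ_univ : (volume : Measure UnitAddCircle) Set.univ = 1 := by
  rw [AddCircle.measure_univ]; simp

instance circProb : IsProbabilityMeasure (volume : Measure UnitAddCircle) := ⟨circ_univ⟩

instance torProb (N : ℕ) : IsProbabilityMeasure (volume : Measure (Tor N)) := by
  rw [volume_pi]; infer_instance

/-- projection to the torus -/
noncomputable def pr (N : ℕ) : (Fin N → ℝ) →+ Tor N where
  toFun u := fun i => (u i : UnitAddCircle)
  map_zero' := by funext i; simp
  map_add' u v := by funext i; simp

lemma pr_apply {N : ℕ} (u : Fin N → ℝ) (i : Fin N) : pr N u i = (u i : UnitAddCircle) := rfl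

lemma continuous_pr (N : ℕ) : Continuous (pr N) :=
  continuous_pi fun i => (AddCircle.continuous_mk' 1).comp (continuous_apply i)

lemma pr_eq_zero {N : ℕ} {u : Fin N → ℝ} (h : pr N u = 0) :
    ∃ z : Fin N → ℤ, u = fun j => (z j : ℝ) := by
  have : ∀ i, ∃ n : ℤ, u i = n := by
    intro i
    have h1 : ((u i : ℝ) : UnitAddCircle) = 0 := congrFun h i
    rw [AddCircle.coe_eq_zero_iff] at h1
    obtain ⟨n, hn⟩ := h1
    exact ⟨n, by simpa using hn.symm⟩
  choose z hz using this
  exact ⟨z, funext hz⟩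

lemma pr_lift {N : ℕ} (x : Tor N) : ∃ u : Fin N → ℝ, pr N u = x ∧ ∀ i, |u i| ≤ 1 := by
  have : ∀ i, ∃ t : ℝ, (t : UnitAddCircle) = x i ∧ |t| ≤ 1 := by
    intro i
    obtain ⟨t, ht⟩ := QuotientAddGroup.mk_surjective (x i)
    refine ⟨Int.fract t, ?_, ?_⟩
    · rw [← ht]
      change ((Int.fract t : ℝ) : UnitAddCircle) = ((t : ℝ) : UnitAddCircle)
      rw [← sub_eq_zero, ← AddCircle.coe_sub, AddCircle.coe_eq_zero_iff]
      refine ⟨-⌊t⌋, ?_⟩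
      rw [zsmul_eq_mul, mul_one, Int.cast_neg]
      linarith [Int.floor_add_fract t]
    · rw [abs_of_nonneg (Int.fract_nonneg t)]; exact (Int.fract_lt_one t).le
  choose u hu using this
  exact ⟨u, funext fun i => (hu i).1, fun i => (hu i).2⟩

lemma toralMap_pr {N : ℕ} (A : Matrix (Fin N) (Fin N) ℤ) (u : Fin N → ℝ) :
    toralMap A (pr N u) = pr N ((A.map (Int.cast : ℤ → ℝ)).mulVec u) := by
  funext i
  simp only [toralMap, pr_apply, Matrix.mulVec, dotProduct, Matrix.map_apply]
  have : ((∑ j, (A i j : ℝ) * u j : ℝ) : UnitAddCircle) = ∑ j, (((A i j : ℝ) * u j : ℝ) : UnitAddCircle) :=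
    map_sum (QuotientAddGroup.mk' (AddSubgroup.zmultiples (1:ℝ))) _ _
  rw [this]
  refine Finset.sum_congr rfl fun j _ => ?_
  rw [← AddCircle.coe_zsmul, zsmul_eq_mul]

lemma toralMap_sub {N : ℕ} (A : Matrix (Fin N) (Fin N) ℤ) (x y : Tor N) :
    toralMap A (x - y) = toralMap A x - toralMap A y := by
  funext i
  simp [toralMap, smul_sub, Finset.sum_sub_distrib]

lemma toralMap_iter_sub {N : ℕ} (A : Matrix (Fin N) (Fin N) ℤ) (n : ℕ) (x y : Tor N) :
    (toralMap A)^[n] (x - y) = (toralMap A)^[n] x - (toralMap A)^[n] y := by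
  induction n generalizing x y with
  | zero => rfl
  | succ n ih => simp only [Function.iterate_succ, Function.comp]; rw [toralMap_sub, ih]

lemma continuous_toralMap {N : ℕ} (A : Matrix (Fin N) (Fin N) ℤ) : Continuous (toralMap A) := by
  unfold toralMap
  refine continuous_pi fun i => continuous_finsetSum _ fun j _ => ?_
  exact (continuous_apply j).zsmul _

/-- the geometric data: eigenfunctionals with a product formula -/
structure Geo (N : ℕ) where
  ι : Type
  fin : Fintype ι
  φ : ι → (Fin N → ℝ) →ₗ[ℝ] ℂ
  c : ℝ
  hc : 0 < c
  prod : ∀ z : Fin N → ℤ, z ≠ 0 → c ≤ ∏ i, ‖φ i (fun j => (z j : ℝ))‖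
  C0 : ℝ
  hC0 : 0 < C0
  bound : ∀ (u : Fin N → ℝ) (r : ℝ), 0 ≤ r → (∀ i, ‖φ i u‖ ≤ r) → ‖u‖ ≤ C0 * r

attribute [instance] Geo.fin

variable {N : ℕ} (G : Geo N)

def UBox (ρ : G.ι → ℝ) : Set (Fin N → ℝ) := {u | ∀ i, ‖G.φ i u‖ ≤ ρ i}

def Box (ρ : G.ι → ℝ) : Set (Tor N) := pr N '' UBox G ρ

lemma Box_mono {ρ ρ' : G.ι → ℝ} (h : ∀ i, ρ i ≤ ρ' i) : Box G ρ ⊆ Box G ρ' :=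
  Set.image_mono fun _ hu i => (hu i).trans (h i)

lemma Box_sub {ρ ρ' : G.ι → ℝ} {x y : Tor N} (hx : x ∈ Box G ρ) (hy : y ∈ Box G ρ') :
    x - y ∈ Box G (fun i => ρ i + ρ' i) := by
  obtain ⟨u, hu, rfl⟩ := hx
  obtain ⟨v, hv, rfl⟩ := hy
  refine ⟨u - v, fun i => ?_, by simp⟩
  rw [map_sub]
  exact (norm_sub_le _ _).trans (add_le_add (hu i) (hv i))

lemma Box_neg {ρ : G.ι → ℝ} {x : Tor N} (hx : x ∈ Box G ρ) : -x ∈ Box G ρ := by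
  obtain ⟨u, hu, rfl⟩ := hx
  exact ⟨-u, fun i => by rw [map_neg, norm_neg]; exact hu i, by simp⟩

lemma Box_add {ρ ρ' : G.ι → ℝ} {x y : Tor N} (hx : x ∈ Box G ρ) (hy : y ∈ Box G ρ') :
    x + y ∈ Box G (fun i => ρ i + ρ' i) := by
  have := Box_sub G hx (Box_neg G hy)
  simpa using this

lemma Box_zero {ρ : G.ι → ℝ} (h : ∀ i, 0 ≤ ρ i) : (0 : Tor N) ∈ Box G ρ :=
  ⟨0, fun i => by simpa using h i, by simp⟩

lemma isCompact_Box (ρ : G.ι → ℝ) (hρ : ∀ i, 0 ≤ ρ i) : IsCompact (Box G ρ) := by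
  refine IsCompact.image ?_ (continuous_pr N)
  refine Metric.isCompact_of_isClosed_isBounded ?_ ?_
  · have : UBox G ρ = ⋂ i, {u | ‖G.φ i u‖ ≤ ρ i} := by ext u; simp [UBox]
    rw [this]
    exact isClosed_iInter fun i => isClosed_le
      ((G.φ i).continuous_of_finiteDimensional.norm) continuous_const
  · rw [isBounded_iff_forall_norm_le]
    refine ⟨G.C0 * ∑ i, ρ i, fun u hu => G.bound u _ (Finset.sum_nonneg fun i _ => hρ i) fun i => ?_⟩
    exact (hu i).trans (Finset.single_le_sum (fun i _ => hρ i) (Finset.mem_univ i))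

lemma dist_lt_of_Box {δ r : ℝ} (hr : 0 ≤ r) (h : G.C0 * r < δ) {x y : Tor N}
    (hxy : x - y ∈ Box G (fun _ => r)) : dist x y < δ := by
  obtain ⟨u, hu, hux⟩ := hxy
  have h1 := G.bound u r hr hu
  refine lt_of_le_of_lt ?_ h
  refine le_trans ?_ h1
  rw [dist_eq_norm, ← hux, pi_norm_le_iff_of_nonneg (norm_nonneg u)]
  intro i
  rw [pr_apply]
  refine le_trans ?_ (norm_le_pi_norm u i)
  exact QuotientAddGroup.norm_mk_le_norm

open Classical in
/-- counting constant -/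
noncomputable def Cnt (r : ℝ) : ℕ :=
  (Fintype.piFinset fun _ : G.ι => (Finset.Icc ⌊-(2 * r)⌋ ⌊2 * r⌋) ×ˢ (Finset.Icc ⌊-(2 * r)⌋ ⌊2 * r⌋)).card

lemma Cnt_mono {r r' : ℝ} (h : r ≤ r') : Cnt G r ≤ Cnt G r' := by
  classical
  refine Finset.card_le_card ?_
  refine Fintype.piFinset_subset _ _ fun i => ?_
  have : Finset.Icc ⌊-(2 * r)⌋ ⌊2 * r⌋ ⊆ Finset.Icc ⌊-(2 * r')⌋ ⌊2 * r'⌋ :=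
    Finset.Icc_subset_Icc (Int.floor_mono (by linarith)) (Int.floor_mono (by linarith))
  exact Finset.product_subset_product this this

lemma sep_card {ρ : G.ι → ℝ} (hρ : ∀ i, 0 < ρ i) (s : Finset (Tor N))
    (hs : ∀ x ∈ s, ∀ y ∈ s, x ≠ y → x - y ∉ Box G ρ) (y : Tor N) (r : ℝ)
    (hr : ∀ x ∈ s, x - y ∈ Box G (fun i => r * ρ i)) : s.card ≤ Cnt G r := by
  classical
  have : ∀ x : Tor N, ∃ u : Fin N → ℝ, x ∈ s → (pr N u = x - y ∧ ∀ i, ‖G.φ i u‖ ≤ r * ρ i) := by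
    intro x
    by_cases hx : x ∈ s
    · obtain ⟨u, hu, hux⟩ := hr x hx
      exact ⟨u, fun _ => ⟨hux, hu⟩⟩
    · exact ⟨0, fun h => absurd h hx⟩
  choose u hu using this
  refine Finset.card_le_card_of_injOn
    (fun x i => (⌊2 * (G.φ i (u x)).re / ρ i⌋, ⌊2 * (G.φ i (u x)).im / ρ i⌋)) ?_ ?_
  · intro x hx
    have hx' : x ∈ s := hx
    simp only [Finset.mem_coe, Fintype.mem_piFinset, Finset.mem_product, Finset.mem_Icc]
    intro i
    have h1 := (hu x hx').2 i
    have h2 := (Complex.abs_re_le_norm (G.φ i (u x))).trans h1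
    have h3 := (Complex.abs_im_le_norm (G.φ i (u x))).trans h1
    rw [abs_le] at h2 h3
    refine ⟨⟨Int.floor_mono ?_, Int.floor_mono ?_⟩, ⟨Int.floor_mono ?_, Int.floor_mono ?_⟩⟩
    · rw [le_div_iff₀ (hρ i)]; nlinarith [h2.1]
    · rw [div_le_iff₀ (hρ i)]; nlinarith [h2.2]
    · rw [le_div_iff₀ (hρ i)]; nlinarith [h3.1]
    · rw [div_le_iff₀ (hρ i)]; nlinarith [h3.2]
  · intro x hx x' hx' hxx
    by_contra hne
    refine hs x hx x' hx' hne ⟨u x - u x', fun i => ?_, ?_⟩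
    · have h1 := congrFun hxx i
      simp only [Prod.mk.injEq] at h1
      have h2 := Int.abs_sub_lt_one_of_floor_eq_floor h1.1
      have h3 := Int.abs_sub_lt_one_of_floor_eq_floor h1.2
      rw [← sub_div, abs_div, abs_of_pos (hρ i), div_lt_one (hρ i), ← mul_sub, abs_mul, abs_two] at h2 h3
      rw [map_sub]
      refine (Complex.norm_le_abs_re_add_abs_im _).trans ?_
      rw [Complex.sub_re, Complex.sub_im]
      linarith
    · rw [map_sub, (hu x hx).1, (hu x' hx').1]; abel

lemma Box_whole {ρ : G.ι → ℝ} (hρ : ∀ i, 0 < ρ i) : ∃ r : ℝ, ∀ x : Tor N, x ∈ Box G (fun i => r * ρ i) := by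
  classical
  let K : G.ι → ℝ := fun i => ∑ j, ‖G.φ i (Pi.single j 1)‖
  have hK : ∀ i, 0 ≤ K i := fun i => Finset.sum_nonneg fun _ _ => norm_nonneg _
  refine ⟨∑ i, K i / ρ i, fun x => ?_⟩
  obtain ⟨u, hu, hu1⟩ := pr_lift x
  refine ⟨u, fun i => ?_, hu⟩
  have h1 : ‖G.φ i u‖ ≤ K i := by
    have : u = ∑ j, u j • (Pi.single j (1:ℝ) : Fin N → ℝ) := by
      funext k; simp [Finset.sum_apply, Pi.single_apply]
    conv_lhs => rw [this]
    rw [map_sum]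
    refine (norm_sum_le _ _).trans (Finset.sum_le_sum fun j _ => ?_)
    rw [map_smul, norm_smul]
    exact mul_le_of_le_one_left (norm_nonneg _) (hu1 j)
  have h2 : K i / ρ i ≤ ∑ i, K i / ρ i :=
    Finset.single_le_sum (f := fun i => K i / ρ i) (fun i _ => div_nonneg (hK i) (hρ i).le) (Finset.mem_univ i)
  rw [div_le_iff₀ (hρ i)] at h2
  exact h1.trans h2

structure IsLabel (ρ : G.ι → ℝ) {m : ℕ} (l : Tor N → Fin m) : Prop where
  meas : Measurable l
  close : ∀ x y, l x = l y → x - y ∈ Box G (fun i => 2 * ρ i)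
  count : ∀ (r : ℝ) (y : Tor N), ∃ J : Finset (Fin m), J.card ≤ Cnt G (r + 1) ∧
    ∀ x, x - y ∈ Box G (fun i => r * ρ i) → l x ∈ J
  vol : (m : ℝ) * (volume : Measure (Tor N)).real (Box G (fun i => ρ i / 2)) ≤ 1

lemma exists_label {ρ : G.ι → ℝ} (hρ : ∀ i, 0 < ρ i) :
    ∃ (m : ℕ) (l : Tor N → Fin m), IsLabel G ρ l := by
  classical
  obtain ⟨r, hr⟩ := Box_whole G hρ
  let Q : ℕ → Prop := fun n => ∃ s : Finset (Tor N),
    (∀ x ∈ s, ∀ y ∈ s, x ≠ y → x - y ∉ Box G ρ) ∧ s.card = n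
  have hQ0 : Q 0 := ⟨∅, by simp, rfl⟩
  have hQb : ∀ n, Q n → n ≤ Cnt G r := by
    rintro n ⟨s, hs, rfl⟩
    exact sep_card G hρ s hs 0 r fun x _ => hr _
  set n0 := Nat.findGreatest Q (Cnt G r) with hn0
  have hQn : Q n0 := Nat.findGreatest_spec (Nat.zero_le _) hQ0
  obtain ⟨s, hs, hcard⟩ := hQn
  have hmax : ∀ x, ∃ y ∈ s, x - y ∈ Box G ρ := by
    intro x
    by_contra hcon
    push Not at hcon
    have hxs : x ∉ s := by
      intro hx
      refine hcon x hx ?_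
      rw [sub_self]; exact Box_zero G fun i => (hρ i).le
    have hQ1 : Q (n0 + 1) := by
      refine ⟨insert x s, ?_, by rw [Finset.card_insert_of_notMem hxs, hcard]⟩
      intro a ha b hb hab
      rcases Finset.mem_insert.1 ha with rfl | ha'
      · rcases Finset.mem_insert.1 hb with rfl | hb'
        · exact absurd rfl hab
        · exact hcon b hb'
      · rcases Finset.mem_insert.1 hb with rfl | hb'
        · intro h
          refine hcon a ha' ?_
          have := Box_neg G h
          simpa using this
        · exact hs a ha' b hb' hab
    have := Nat.le_findGreatest (hQb _ hQ1) hQ1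
    omega
  let e := s.equivFin.symm
  let B : Fin s.card → Set (Tor N) := fun i => (fun x => x - (e i : Tor N)) ⁻¹' Box G ρ
  have hBm : ∀ i, MeasurableSet (B i) := fun i =>
    ((isCompact_Box G ρ fun i => (hρ i).le).isClosed.preimage (by fun_prop)).measurableSet
  have hex : ∀ x, ∃ i, x ∈ B i ∧ ∀ j < i, x ∉ B j := by
    intro x
    obtain ⟨y, hy, hxy⟩ := hmax x
    have hne : ({i | x ∈ B i} : Set (Fin s.card)).Nonempty := by
      refine ⟨s.equivFin ⟨y, hy⟩, ?_⟩
      simp only [Set.mem_ofPred_eq, B, e, Set.mem_preimage, Equiv.symm_apply_apply]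
      exact hxy
    obtain ⟨i, hi⟩ := WellFounded.has_min (wellFounded_lt (α := Fin s.card)) _ hne
    exact ⟨i, hi.1, fun j hj hjB => hi.2 j hjB hj⟩
  choose l hl hl2 using hex
  refine ⟨s.card, l, ?_, ?_, ?_, ?_⟩
  · refine measurable_to_countable' fun i => ?_
    have : l ⁻¹' {i} = B i ∩ ⋂ j : Fin s.card, ⋂ _ : j < i, (B j)ᶜ := by
      ext x
      simp only [Set.mem_preimage, Set.mem_singleton_iff, Set.mem_inter_iff, Set.mem_iInter,
        Set.mem_compl_iff]
      constructor
      · rintro rfl; exact ⟨hl x, hl2 x⟩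
      · rintro ⟨h1, h2⟩
        rcases lt_trichotomy (l x) i with h | h | h
        · exact absurd (hl x) (h2 _ h)
        · exact h
        · exact absurd h1 (hl2 x _ h)
    rw [this]
    exact (hBm i).inter (MeasurableSet.iInter fun j => MeasurableSet.iInter fun _ => (hBm j).compl)
  · intro x y hxy
    have h1 : x - (e (l x) : Tor N) ∈ Box G ρ := hl x
    have h2 : y - (e (l x) : Tor N) ∈ Box G ρ := by rw [hxy]; exact hl y
    have := Box_sub G h1 h2
    simp only [sub_sub_sub_cancel_right] at this
    convert this using 3
    ring
  · intro r y
    refine ⟨Finset.univ.filter (fun i => (e i : Tor N) - y ∈ Box G (fun k => (r + 1) * ρ k)), ?_, ?_⟩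
    · rw [← Finset.card_map (e.toEmbedding.trans (Function.Embedding.subtype _))]
      refine sep_card G hρ _ ?_ y (r + 1) ?_
      · intro a ha b hb
        simp only [Finset.mem_map] at ha hb
        obtain ⟨i, _, rfl⟩ := ha
        obtain ⟨j, _, rfl⟩ := hb
        exact hs _ (e i).2 _ (e j).2
      · intro a ha
        simp only [Finset.mem_map] at ha
        obtain ⟨i, hi, rfl⟩ := ha
        exact (Finset.mem_filter.1 hi).2
    · intro x hx
      refine Finset.mem_filter.2 ⟨Finset.mem_univ _, ?_⟩
      have h1 : x - (e (l x) : Tor N) ∈ Box G ρ := hl x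
      have := Box_sub G hx h1
      rw [show x - y - (x - (e (l x) : Tor N)) = (e (l x) : Tor N) - y by abel] at this
      convert this using 3
      ring
  · set Bh := Box G (fun i => ρ i / 2) with hBh
    have hBhm : MeasurableSet Bh :=
      (isCompact_Box G _ fun i => (half_pos (hρ i)).le).isClosed.measurableSet
    let D : Fin s.card → Set (Tor N) := fun i => (fun x => x + (-(e i : Tor N))) ⁻¹' Bh
    have hDm : ∀ i, MeasurableSet (D i) := fun i => hBhm.preimage (by fun_prop)
    have hDv : ∀ i, volume.real (D i) = volume.real Bh := by
      intro i
      unfold Measure.real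
      congr 1
      exact measure_preimage_add_right volume _ _
    have hdisj : Set.PairwiseDisjoint (↑(Finset.univ : Finset (Fin s.card))) D := by
      intro i _ j _ hij
      refine Set.disjoint_left.2 fun x h1 h2 => ?_
      have h3 := Box_sub G h2 h1
      rw [show x + -(e j : Tor N) - (x + -(e i : Tor N)) = (e i : Tor N) - e j by abel] at h3
      refine hs _ (e i).2 _ (e j).2 ?_ ?_
      · intro h; exact hij (e.injective (Subtype.ext h))
      · convert h3 using 2
        funext k; ring
    have h1 := measureReal_biUnion_finset (μ := (volume : Measure (Tor N))) hdisj (fun i _ => hDm i)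
    simp_rw [hDv] at h1
    rw [Finset.sum_const, Finset.card_univ, Fintype.card_fin, nsmul_eq_mul] at h1
    rw [← h1]
    exact measureReal_le_one

end Geom
end EntProp
set_option linter.unusedSectionVars false
namespace EntProp

section Dyn
variable {N : ℕ}

lemma toralMap_mul (A B : Matrix (Fin N) (Fin N) ℤ) :
    toralMap (A * B) = toralMap A ∘ toralMap B := by
  funext x
  obtain ⟨u, rfl, _⟩ := pr_lift x
  have h : (A * B).map (Int.cast : ℤ → ℝ) = A.map (Int.cast : ℤ → ℝ) * B.map (Int.cast : ℤ → ℝ) :=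
    Matrix.map_mul (f := Int.castRingHom ℝ)
  simp only [Function.comp, toralMap_pr]
  rw [h, Matrix.mulVec_mulVec]

lemma toralMap_one : toralMap (1 : Matrix (Fin N) (Fin N) ℤ) = id := by
  funext x
  obtain ⟨u, rfl, _⟩ := pr_lift x
  have h : (1 : Matrix (Fin N) (Fin N) ℤ).map (Int.cast : ℤ → ℝ) = 1 :=
    Matrix.map_one _ Int.cast_zero Int.cast_one
  rw [toralMap_pr, h, Matrix.one_mulVec]; rfl

lemma toralMap_pow (A : Matrix (Fin N) (Fin N) ℤ) (n : ℕ) :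
    toralMap (A ^ n) = (toralMap A)^[n] := by
  induction n with
  | zero => rw [pow_zero, toralMap_one]; rfl
  | succ n ih => rw [pow_succ, toralMap_mul, ih, Function.iterate_succ]

lemma vol_mp (A A' : Matrix (Fin N) (Fin N) ℤ) (h : A * A' = 1) :
    MeasurePreserving (toralMap A) (volume : Measure (Tor N)) volume := by
  have hs : Function.Surjective (toralMap A) := by
    intro x
    refine ⟨toralMap A' x, ?_⟩
    have := congrFun (toralMap_mul A A') x
    rw [h, toralMap_one] at this
    exact this.symm
  have h0 : ∀ x y, toralMap A (x + y) = toralMap A x + toralMap A y := by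
    intro x y
    funext i
    simp [toralMap, smul_add, Finset.sum_add_distrib]
  exact AddMonoidHom.measurePreserving (f := AddMonoidHom.mk' (toralMap A) h0)
    (continuous_toralMap A) hs rfl

variable (G : Geo N)

def Adapted (A : Matrix (Fin N) (Fin N) ℤ) (a : G.ι → ℝ) : Prop :=
  (∀ i, 0 < a i) ∧ ∀ i u, ‖G.φ i ((A.map (Int.cast : ℤ → ℝ)).mulVec u)‖ = a i * ‖G.φ i u‖

variable {G}

lemma Adapted.pow {A : Matrix (Fin N) (Fin N) ℤ} {a : G.ι → ℝ} (h : Adapted G A a) (n : ℕ) :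
    Adapted G (A ^ n) (fun i => a i ^ n) := by
  refine ⟨fun i => pow_pos (h.1 i) n, ?_⟩
  induction n with
  | zero =>
    intro i u
    have h1 : (1 : Matrix (Fin N) (Fin N) ℤ).map (Int.cast : ℤ → ℝ) = 1 :=
      Matrix.map_one _ Int.cast_zero Int.cast_one
    rw [pow_zero, h1, Matrix.one_mulVec]; simp
  | succ n ih =>
    intro i u
    have h1 : (A ^ n * A).map (Int.cast : ℤ → ℝ) =
        (A ^ n).map (Int.cast : ℤ → ℝ) * A.map (Int.cast : ℤ → ℝ) :=
      Matrix.map_mul (f := Int.castRingHom ℝ)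
    rw [pow_succ, h1, ← Matrix.mulVec_mulVec, ih, h.2]
    simp only [pow_succ]; ring

lemma Box_map {A : Matrix (Fin N) (Fin N) ℤ} {a : G.ι → ℝ} (h : Adapted G A a) (n : ℕ)
    {ρ : G.ι → ℝ} {x : Tor N} (hx : x ∈ Box G ρ) :
    (toralMap A)^[n] x ∈ Box G (fun i => a i ^ n * ρ i) := by
  obtain ⟨u, hu, rfl⟩ := hx
  rw [← toralMap_pow, toralMap_pr]
  refine ⟨_, fun i => ?_, rfl⟩
  rw [(h.pow n).2]
  exact mul_le_mul_of_nonneg_left (hu i) (pow_pos (h.1 i) n).le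

lemma lift_chain {A : Matrix (Fin N) (Fin N) ℤ} {a : G.ι → ℝ} (h : Adapted G A a)
    {ρ : G.ι → ℝ} (hρ : ∏ i, (ρ i * (a i + 1)) < G.c) {x : Tor N} (n : ℕ)
    (hx : ∀ j ≤ n, (toralMap A)^[j] x ∈ Box G ρ) :
    ∃ u, pr N u = x ∧ ∀ j ≤ n, ∀ i, a i ^ j * ‖G.φ i u‖ ≤ ρ i := by
  induction n with
  | zero =>
    obtain ⟨u, hu, hux⟩ := hx 0 le_rfl
    refine ⟨u, hux, fun j hj i => ?_⟩
    rw [Nat.le_zero.1 hj, pow_zero, one_mul]; exact hu i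
  | succ n ih =>
    obtain ⟨u, hux, hu⟩ := ih fun j hj => hx j (by omega)
    refine ⟨u, hux, fun j hj i => ?_⟩
    rcases Nat.lt_or_ge j (n + 1) with hj' | hj'
    · exact hu j (by omega) i
    have hjn : j = n + 1 := le_antisymm hj hj'
    subst hjn
    obtain ⟨w, hw, hwx⟩ := hx (n + 1) le_rfl
    rw [← hux, ← toralMap_pow, toralMap_pr] at hwx
    set v := ((A ^ (n + 1)).map (Int.cast : ℤ → ℝ)).mulVec u with hv
    have hvn : ∀ i, ‖G.φ i v‖ = a i ^ (n + 1) * ‖G.φ i u‖ := fun i => (h.pow (n + 1)).2 i u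
    obtain ⟨z, hz⟩ := pr_eq_zero (u := w - v) (by rw [map_sub, hwx, sub_self])
    have hz0 : z = 0 := by
      by_contra hne
      refine absurd (G.prod z hne) (not_le.2 (lt_of_le_of_lt ?_ hρ))
      refine Finset.prod_le_prod (fun i _ => norm_nonneg _) fun i _ => ?_
      rw [← hz, map_sub]
      refine (norm_sub_le _ _).trans ?_
      have h1 := hw i
      have h2 := mul_le_mul_of_nonneg_left (hu n le_rfl i) (h.1 i).le
      rw [hvn, pow_succ]
      nlinarith
    have hwv : w = v := by
      rw [← sub_eq_zero, hz, hz0]; funext j; simp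
    rw [← hvn, ← hwv]
    exact hw i

lemma exists_small [Nonempty G.ι] (q : G.ι → ℝ) (C δ : ℝ) (hδ : 0 < δ) :
    ∃ t : ℝ, 0 < t ∧ C * (2 * t) < δ ∧ ∏ i, (2 * t * q i) < G.c := by
  have h1 : Filter.Tendsto (fun t : ℝ => C * (2 * t)) (nhds 0) (nhds (C * (2 * 0))) :=
    (Continuous.tendsto (by fun_prop) 0)
  have h2 : Filter.Tendsto (fun t : ℝ => ∏ i, (2 * t * q i)) (nhds 0) (nhds (∏ i, (2 * 0 * q i))) :=
    (Continuous.tendsto (f := fun t : ℝ => ∏ i, (2 * t * q i)) (by fun_prop) 0)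
  have e1 := h1.eventually (gt_mem_nhds (show C * (2 * 0) < δ by simpa using hδ))
  have e2 := h2.eventually (gt_mem_nhds (show ∏ i, (2 * 0 * q i) < G.c by
    obtain ⟨i⟩ := ‹Nonempty G.ι›
    rw [Finset.prod_eq_zero (Finset.mem_univ i) (by simp)]; exact G.hc))
  have e3 := ((e1.and e2).filter_mono (nhdsWithin_le_nhds (s := Set.Ioi 0))).and
    self_mem_nhdsWithin
  obtain ⟨t, ⟨ht1, ht2⟩, ht3⟩ := e3.exists
  exact ⟨t, ht3, ht1, ht2⟩

variable (μ : Measure (Tor N)) [IsProbabilityMeasure μ]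

lemma core_step [Nonempty G.ι] {A : Matrix (Fin N) (Fin N) ℤ} {a : G.ι → ℝ} (hA : Adapted G A a)
    (hT : MeasurePreserving (toralMap A) μ μ) {β : G.ι → ℝ} (hβ : ∀ i, 1 ≤ β i)
    (hprod : ∏ i, max 1 (a i) ≤ ∏ i, β i) {M : ℕ} (hM : 1 ≤ M) {t : ℝ} (ht : 0 < t)
    (htc : ∏ i, (2 * t * (a i ^ M + 1)) < G.c) {δ : ℝ} (htδ : G.C0 * (2 * t) < δ)
    {s : ℕ} (hs : 1 ≤ s) {m : ℕ} {ζ : Tor N → Fin m}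
    (hζ : IsLabel G (fun i => t * (β i)⁻¹ ^ (M * s)) ζ) :
    ∃ (p : ℕ) (η : Tor N → Fin p), Measurable η ∧
      (∀ x y, join ((toralMap A)^[M]) η (2 * s + 1) x = join ((toralMap A)^[M]) η (2 * s + 1) y →
        dist (((toralMap A)^[M])^[s] x) (((toralMap A)^[M])^[s] y) < δ) ∧
      uu μ ((toralMap A)^[M]) η s ≤ HH μ ζ + s * Real.log (Cnt G 3) := by
  classical
  have hapos := hA.1
  have hAM := hA.pow M
  set k := M * s with hk
  set ρ : G.ι → ℝ := fun i => t * (β i)⁻¹ ^ k * (max 1 (a i)) ^ k with hρdef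
  have hβ0 : ∀ i, 0 < β i := fun i => lt_of_lt_of_le one_pos (hβ i)
  have hmax : ∀ i, 0 < max 1 (a i) := fun i => lt_of_lt_of_le one_pos (le_max_left _ _)
  have hρ : ∀ i, 0 < ρ i := fun i => by
    have := inv_pos.2 (hβ0 i)
    have := hmax i
    positivity
  have hβinv : ∀ i, (β i)⁻¹ ^ k ≤ 1 := fun i =>
    pow_le_one₀ (inv_pos.2 (hβ0 i)).le (inv_le_one_of_one_le₀ (hβ i))
  obtain ⟨p, η, hη⟩ := exists_label G hρ
  refine ⟨p, η, hη.meas, ?_, ?_⟩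
  · intro x y hxy
    rw [← toralMap_pow] at hxy ⊢
    have hchain : ∀ j ≤ 2 * s, (toralMap (A ^ M))^[j] (x - y) ∈ Box G (fun i => 2 * ρ i) := by
      intro j hj
      rw [toralMap_iter_sub]
      exact hη.close _ _ (congrFun hxy ⟨j, by omega⟩)
    have hpr : ∏ i, ((fun i => 2 * ρ i) i * (a i ^ M + 1)) < G.c := by
      refine lt_of_le_of_lt ?_ htc
      have e1 : ∏ i, ((fun i => 2 * ρ i) i * (a i ^ M + 1)) =
          (∏ i, (2 * t * (a i ^ M + 1))) * ((∏ i, (max 1 (a i))) / (∏ i, β i)) ^ k := by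
        rw [← Finset.prod_div_distrib, ← Finset.prod_pow, ← Finset.prod_mul_distrib]
        refine Finset.prod_congr rfl fun i _ => ?_
        simp only [hρdef]
        rw [div_eq_mul_inv, mul_pow]; ring
      rw [e1]
      refine mul_le_of_le_one_right (Finset.prod_nonneg fun i _ => ?_) ?_
      · have := hapos i; positivity
      · refine pow_le_one₀ (div_nonneg (Finset.prod_nonneg fun i _ => (hmax i).le)
          (Finset.prod_nonneg fun i _ => (hβ0 i).le)) ?_
        exact div_le_one_of_le₀ hprod (Finset.prod_nonneg fun i _ => (hβ0 i).le)
    obtain ⟨u, hux, hu⟩ := lift_chain hAM hpr (2 * s) hchain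
    refine dist_lt_of_Box G (r := 2 * t) (by linarith) htδ ?_
    rw [← toralMap_iter_sub, ← hux, ← toralMap_pow, toralMap_pr]
    refine ⟨_, fun i => ?_, rfl⟩
    rw [(hAM.pow s).2]
    rcases le_or_gt (a i) 1 with h1 | h1
    · refine (hu s (by omega) i).trans ?_
      simp only [hρdef, max_eq_left h1, one_pow, mul_one]
      nlinarith [hβinv i]
    · have h2 := hu (2 * s) le_rfl i
      simp only [hρdef, max_eq_right h1.le] at h2
      have h3 : 0 < (a i ^ M) ^ s := pow_pos (pow_pos (hapos i) _) _
      have h4 : a i ^ k = (a i ^ M) ^ s := by rw [hk, pow_mul]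
      rw [h4, two_mul s, pow_add] at h2
      have h5 : (a i ^ M) ^ s * ((a i ^ M) ^ s * ‖(G.φ i) u‖) ≤ (a i ^ M) ^ s * (2 * t) := by
        have : t * (β i)⁻¹ ^ k ≤ t := mul_le_of_le_one_right ht.le (hβinv i)
        nlinarith
      exact le_of_mul_le_mul_left h5 h3
  · have hmeas := measurable_join (hT.iterate M).measurable hη.meas s
    have hJ : ∀ (q : Fin m), ∃ J : Finset (Fin s → Fin p), J.card ≤ (Cnt G 3) ^ s ∧
        ∀ x, ζ x = q → join ((toralMap A)^[M]) η s x ∈ J := by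
      intro q
      by_cases hq : ∃ y, ζ y = q
      · obtain ⟨y, hy⟩ := hq
        have := fun j : Fin s => hη.count 2 (((toralMap A)^[M])^[(j:ℕ)] y)
        choose J hJc hJ using this
        refine ⟨Fintype.piFinset J, ?_, ?_⟩
        · rw [Fintype.card_piFinset]
          refine (Finset.prod_le_pow_card _ _ (Cnt G 3) fun j _ => ?_).trans (by simp)
          have := hJc j
          norm_num at this
          exact this
        · intro x hx
          rw [Fintype.mem_piFinset]
          intro j
          refine hJ j _ ?_
          have h1 := hζ.close x y (hx.trans hy.symm)
          rw [← toralMap_pow, ← toralMap_iter_sub]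
          refine Box_mono G (fun i => ?_) (Box_map hAM j h1)
          simp only [hρdef]
          have h2 : (a i ^ M) ^ (j : ℕ) ≤ max 1 (a i) ^ k := by
            rw [← pow_mul]
            calc a i ^ (M * j) ≤ max 1 (a i) ^ (M * j) :=
                  pow_le_pow_left₀ (hapos i).le (le_max_right _ _) _
              _ ≤ max 1 (a i) ^ k := pow_le_pow_right₀ (le_max_left _ _) (by
                  rw [hk]; exact Nat.mul_le_mul_left _ j.2.le)
          have h3 : 0 ≤ 2 * (t * (β i)⁻¹ ^ k) := by
            have := inv_pos.2 (hβ0 i); positivity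
          nlinarith
      · exact ⟨∅, by simp, fun x hx => absurd ⟨x, hx⟩ hq⟩
    choose J hJc hJ using hJ
    have := HH_le_count' μ hmeas hζ.meas J ((Cnt G 3) ^ s) (fun x => hJ _ x rfl) hJc
    rw [Nat.cast_pow, Real.log_pow] at this
    exact this

lemma core [Nonempty G.ι] {A : Matrix (Fin N) (Fin N) ℤ} {a : G.ι → ℝ} (hA : Adapted G A a)
    (hT : MeasurePreserving (toralMap A) μ μ) {β : G.ι → ℝ} (hβ : ∀ i, 1 ≤ β i)
    (hprod : ∏ i, max 1 (a i) ≤ ∏ i, β i) {Ak : ℕ → ℝ} {L : ℝ}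
    (hAk : Filter.Tendsto (fun k : ℕ => Ak k / k) Filter.atTop (nhds L))
    (H : ∀ t > 0, ∃ C : ℝ, ∀ k ≥ 1, ∃ (m : ℕ) (ζ : Tor N → Fin m),
      IsLabel G (fun i => t * (β i)⁻¹ ^ k) ζ ∧ HH μ ζ ≤ Ak k + C)
    {m : ℕ} {f : Tor N → Fin m} (hf : Measurable f) : hh μ (toralMap A) f ≤ L := by
  have key : ∀ M : ℕ, 1 ≤ M → M * hh μ (toralMap A) f ≤ M * L + (Real.log (Cnt G 3) + 1) := by
    intro M hM
    have hU := hT.iterate M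
    set U := (toralMap A)^[M] with hUdef
    let e := Fintype.equivFin (Fin M → Fin m)
    let F := fun x => e (join (toralMap A) f M x)
    have hjm := measurable_join hT.measurable hf M
    have hF : Measurable F := (measurable_of_countable e).comp hjm
    have h1 : hh μ U (join (toralMap A) f M) ≤ hh μ U F := by
      have := hh_comp_le μ hU hF (fun i => e.symm i)
      simpa [F] using this
    have h2 := hh_pow μ hT hf M hM
    obtain ⟨δ, hδ, hgen⟩ := generator μ hU hF 1 one_pos
    obtain ⟨t, ht, htδ, htc⟩ := exists_small (G := G) (fun i => a i ^ M + 1) G.C0 δ hδ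
    obtain ⟨C, hC⟩ := H t ht
    have hM0 : (0:ℝ) < M := by exact_mod_cast hM
    have hlim : Filter.Tendsto (fun s : ℕ => M * (Ak (M * s) / ((M * s : ℕ) : ℝ)) + C / s +
        (Real.log (Cnt G 3) + 1)) Filter.atTop (nhds (M * L + 0 + (Real.log (Cnt G 3) + 1))) := by
      refine Filter.Tendsto.add_const _ ?_
      refine Filter.Tendsto.add ?_ (tendsto_const_nhds.div_atTop tendsto_natCast_atTop_atTop)
      refine Filter.Tendsto.const_mul _ ?_
      exact hAk.comp (Filter.tendsto_id.const_mul_atTop' (by omega))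
    rw [add_zero] at hlim
    refine ge_of_tendsto hlim ?_
    filter_upwards [Filter.eventually_ge_atTop 1] with s hs
    obtain ⟨m', ζ, hζ, hζA⟩ := hC (M * s) (Nat.mul_pos hM hs)
    obtain ⟨p, η, hη, hsep, huu⟩ := core_step μ hA hT hβ hprod hM ht htc htδ hs hζ
    have h3 := hgen p η s hη hsep
    have h4 := hh_le μ U η hs
    have hs0 : (0:ℝ) < s := by exact_mod_cast hs
    have h5 : uu μ U η s / s ≤ M * (Ak (M * s) / ((M * s : ℕ) : ℝ)) + C / s + Real.log (Cnt G 3) := by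
      rw [div_le_iff₀ hs0]
      refine huu.trans ?_
      have : (M * (Ak (M * s) / ((M * s : ℕ) : ℝ)) + C / s + Real.log (Cnt G 3)) * s
        = Ak (M * s) + C + s * Real.log (Cnt G 3) := by
        push_cast; field_simp
      rw [this]; linarith
    linarith
  by_contra hcon
  push Not at hcon
  obtain ⟨M, hM⟩ := exists_nat_gt ((Real.log (Cnt G 3) + 1) / (hh μ (toralMap A) f - L))
  have hpos : 0 < hh μ (toralMap A) f - L := by linarith
  rw [div_lt_iff₀ hpos] at hM
  have hlog : 0 ≤ Real.log (Cnt G 3) := Real.log_natCast_nonneg _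
  have hM1 : 1 ≤ M := by
    rcases Nat.eq_zero_or_pos M with h | h
    · rw [h, Nat.cast_zero, zero_mul] at hM; linarith
    · exact h
  have := key M hM1
  nlinarith

/-- atoms of the dynamical partition are small -/
lemma atom_close [Nonempty G.ι] {B : Matrix (Fin N) (Fin N) ℤ} {b : G.ι → ℝ} (hB : Adapted G B b) :
    ∃ (p : ℕ) (ξ : Tor N → Fin p), Measurable ξ ∧ ∀ t > 0, ∃ Q : ℝ, 0 ≤ Q ∧ ∀ k ≥ 1, ∀ x y,
      join (toralMap B) ξ k x = join (toralMap B) ξ k y →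
      x - y ∈ Box G (fun i => Q * (t * (max 1 (b i))⁻¹ ^ k)) := by
  obtain ⟨r, hr, -, hrc⟩ := exists_small (G := G) (fun i => b i + 1) 1 1 one_pos
  obtain ⟨p, ξ, hξ⟩ := exists_label G (ρ := fun _ => r) (fun _ => hr)
  have hmax : ∀ i, 0 < max 1 (b i) := fun i => lt_of_lt_of_le one_pos (le_max_left _ _)
  refine ⟨p, ξ, hξ.meas, fun t ht => ⟨∑ i, 2 * r * max 1 (b i) / t, ?_, ?_⟩⟩
  · exact Finset.sum_nonneg fun i _ => by have := hmax i; positivity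
  intro k hk x y hxy
  have hchain : ∀ j ≤ k - 1, (toralMap B)^[j] (x - y) ∈ Box G (fun i => 2 * r) := by
    intro j hj
    rw [toralMap_iter_sub]
    exact hξ.close _ _ (congrFun hxy ⟨j, by omega⟩)
  obtain ⟨u, hux, hu⟩ := lift_chain hB hrc (k - 1) hchain
  refine ⟨u, fun i => ?_, hux⟩
  have h1 : ‖G.φ i u‖ ≤ 2 * r * max 1 (b i) / t * (t * (max 1 (b i))⁻¹ ^ k) := by
    have h2 : max 1 (b i) ^ (k - 1) * ‖G.φ i u‖ ≤ 2 * r := by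
      rcases le_total (b i) 1 with h | h
      · rw [max_eq_left h, one_pow]; simpa using hu 0 (by omega) i
      · rw [max_eq_right h]; exact hu (k - 1) le_rfl i
    have h3 : 2 * r * max 1 (b i) / t * (t * (max 1 (b i))⁻¹ ^ k) = 2 * r / max 1 (b i) ^ (k - 1) := by
      obtain ⟨k', rfl⟩ : ∃ k', k = k' + 1 := ⟨k - 1, by omega⟩
      have := (hmax i).ne'
      rw [Nat.add_sub_cancel, inv_pow, pow_succ]
      field_simp
    rw [h3, le_div_iff₀ (pow_pos (hmax i) _)]
    linarith
  refine h1.trans (mul_le_mul_of_nonneg_right ?_ ?_)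
  · exact Finset.single_le_sum (f := fun i => 2 * r * max 1 (b i) / t)
      (fun i _ => by have := hmax i; positivity) (Finset.mem_univ i)
  · have := inv_pos.2 (hmax i); positivity

lemma ks_mono [Nonempty G.ι] {A B : Matrix (Fin N) (Fin N) ℤ} {a b : G.ι → ℝ} (hA : Adapted G A a)
    (hB : Adapted G B b)
    (hT : MeasurePreserving (toralMap A) μ μ) (hS : MeasurePreserving (toralMap B) μ μ)
    (hprod : ∏ i, max 1 (a i) ≤ ∏ i, max 1 (b i)) :
    ksEntropy (toralMap A) μ ≤ ksEntropy (toralMap B) μ ∧ ksEntropy (toralMap A) μ ≠ ⊤ := by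
  have hmax : ∀ i, 0 < max 1 (b i) := fun i => lt_of_lt_of_le one_pos (le_max_left _ _)
  obtain ⟨p, ξ, hξ, hcl⟩ := atom_close (G := G) hB
  have main : ksEntropy (toralMap A) μ ≤ ENNReal.ofReal (hh μ (toralMap B) ξ) := by
    refine ks_le μ hT _ fun m f hf => ENNReal.ofReal_le_ofReal ?_
    refine core μ hA hT (β := fun i => max 1 (b i)) (fun i => le_max_left _ _) hprod
      (hh_tendsto μ hS hξ) ?_ hf
    intro t ht
    obtain ⟨Q, hQ, hcl'⟩ := hcl t ht
    refine ⟨Real.log (Cnt G (Q + 1)), fun k hk => ?_⟩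
    obtain ⟨m', ζ, hζ⟩ := exists_label G (ρ := fun i => t * (max 1 (b i))⁻¹ ^ k)
      (fun i => by have := inv_pos.2 (hmax i); positivity)
    refine ⟨m', ζ, hζ, ?_⟩
    have hJ : ∀ q : Fin k → Fin p, ∃ J : Finset (Fin m'), J.card ≤ Cnt G (Q + 1) ∧
        ∀ x, join (toralMap B) ξ k x = q → ζ x ∈ J := by
      intro q
      by_cases hq : ∃ y, join (toralMap B) ξ k y = q
      · obtain ⟨y, hy⟩ := hq
        obtain ⟨J, hJ1, hJ2⟩ := hζ.count Q y
        exact ⟨J, hJ1, fun x hx => hJ2 x (hcl' k hk x y (hx.trans hy.symm))⟩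
      · exact ⟨∅, by simp, fun x hx => absurd ⟨x, hx⟩ hq⟩
    choose J hJc hJ using hJ
    exact HH_le_count' μ hζ.meas (measurable_join hS.measurable hξ k) J _ (fun x => hJ _ x rfl) hJc
  exact ⟨main.trans (le_ks μ hS hξ), ne_top_of_le_ne_top ENNReal.ofReal_ne_top main⟩

lemma ks_le_vol [Nonempty G.ι] {A : Matrix (Fin N) (Fin N) ℤ} {a : G.ι → ℝ} (hA : Adapted G A a)
    (hT : MeasurePreserving (toralMap A) μ μ)
    (hV : MeasurePreserving (toralMap A) (volume : Measure (Tor N)) volume) :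
    ksEntropy (toralMap A) μ ≤ ksEntropy (toralMap A) volume := by
  have hmax : ∀ i, 0 < max 1 (a i) := fun i => lt_of_lt_of_le one_pos (le_max_left _ _)
  obtain ⟨p, ξ, hξ, hcl⟩ := atom_close (G := G) hA
  have main : ksEntropy (toralMap A) μ ≤ ENNReal.ofReal (hh volume (toralMap A) ξ) := by
    refine ks_le μ hT _ fun m f hf => ENNReal.ofReal_le_ofReal ?_
    refine core μ hA hT (β := fun i => max 1 (a i)) (fun i => le_max_left _ _) le_rfl
      (hh_tendsto volume hV hξ) ?_ hf
    intro t ht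
    obtain ⟨Q, hQ, hcl'⟩ := hcl t ht
    refine ⟨Real.log (Cnt G (4 * Q + 1)), fun k hk => ?_⟩
    have hρ : ∀ i, 0 < t * (max 1 (a i))⁻¹ ^ k :=
      fun i => by have := inv_pos.2 (hmax i); positivity
    obtain ⟨m', ζ, hζ⟩ := exists_label G hρ
    refine ⟨m', ζ, hζ, ?_⟩
    obtain ⟨m4, l4, hl4⟩ := exists_label G
      (ρ := fun i => t * (max 1 (a i))⁻¹ ^ k / 4) (fun i => div_pos (hρ i) (by norm_num))
    set Bh := Box G (fun i => t * (max 1 (a i))⁻¹ ^ k / 2) with hBh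
    set K := Cnt G (4 * Q + 1) with hKdef
    have hm' : 0 < m' := (ζ 0).pos
    have hm'R : (0:ℝ) < m' := by exact_mod_cast hm'
    have hK : 0 < K := by
      obtain ⟨J, hJ1, hJ2⟩ := hl4.count (4 * Q) 0
      refine lt_of_lt_of_le (Finset.card_pos.2 ⟨l4 0, hJ2 0 ?_⟩) hJ1
      rw [sub_zero]
      exact Box_zero G fun i => mul_nonneg (by linarith) (div_pos (hρ i) (by norm_num)).le
    have hatom : ∀ q : Fin k → Fin p,
        (volume : Measure (Tor N)).real (join (toralMap A) ξ k ⁻¹' {q}) ≤ K / m' := by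
      intro q
      have hvol : volume.real Bh ≤ 1 / m' := by
        rw [le_div_iff₀ hm'R, mul_comm]; exact hζ.vol
      by_cases hq : ∃ y, join (toralMap A) ξ k y = q
      · obtain ⟨y, hy⟩ := hq
        obtain ⟨J, hJ1, hJ2⟩ := hl4.count (4 * Q) y
        have hsub : join (toralMap A) ξ k ⁻¹' {q} ⊆ ⋃ j ∈ J, l4 ⁻¹' {j} := by
          intro x hx
          have h1 := hcl' k hk x y (Eq.trans hx hy.symm)
          have h2 := hJ2 x (by convert h1 using 3; ring)
          exact Set.mem_biUnion h2 rfl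
        have hcls : ∀ j, volume.real (l4 ⁻¹' {j}) ≤ volume.real Bh := by
          intro j
          by_cases hj : ∃ w, l4 w = j
          · obtain ⟨w, hw⟩ := hj
            have h1 : l4 ⁻¹' {j} ⊆ (fun x => x + (-w)) ⁻¹' Bh := by
              intro x hx
              have := hl4.close x w (Eq.trans hx hw.symm)
              rw [Set.mem_preimage, ← sub_eq_add_neg]
              convert this using 3
              ring
            refine (measureReal_mono h1).trans (le_of_eq ?_)
            unfold Measure.real
            congr 1
            exact measure_preimage_add_right volume _ _
          · have : l4 ⁻¹' {j} = ∅ := by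
              ext x; simp only [Set.mem_preimage, Set.mem_singleton_iff, Set.mem_empty_iff_false, iff_false]
              exact fun h => hj ⟨x, h⟩
            rw [this]; simp
        refine (measureReal_mono hsub (measure_ne_top _ _)).trans ((measureReal_biUnion_finset_le J _).trans ?_)
        refine (Finset.sum_le_sum fun j _ => (hcls j).trans hvol).trans ?_
        rw [Finset.sum_const, nsmul_eq_mul, mul_one_div]
        gcongr
      · have : join (toralMap A) ξ k ⁻¹' {q} = ∅ := by
          ext x; simp only [Set.mem_preimage, Set.mem_singleton_iff, Set.mem_empty_iff_false, iff_false]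
          exact fun h => hq ⟨x, h⟩
        rw [this]; simp only [measureReal_empty]; positivity
    have h1 := HH_ge (volume : Measure (Tor N)) (measurable_join hV.measurable hξ k) hatom
    have h2 := HH_le_log μ hζ.meas
    rw [Fintype.card_fin] at h2
    rw [Real.log_div (by exact_mod_cast hK.ne') hm'R.ne'] at h1
    unfold uu
    linarith
  exact main.trans (le_ks volume hV hξ)

end Dyn
end EntProp
namespace EntProp

lemma prop_cross {V : Type*} {L h : V → ℝ} (hL : ∀ v, 0 ≤ L v) (hh0 : ∀ v, 0 ≤ h v)
    (H : ∀ v w (p q : ℕ), 1 ≤ p → 1 ≤ q → q * L v ≤ p * L w → q * h v ≤ p * h w) (v w : V) :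
    h v * L w ≤ h w * L v := by
  rcases (hL w).eq_or_lt with h0 | hpos
  · rw [← h0, mul_zero]; exact mul_nonneg (hh0 _) (hL _)
  have h1 : h v ≤ L v / L w * h w := by
    have h2 : ∀ r : ℝ, L v / L w < r → h v ≤ r * h w := by
      intro r hr
      obtain ⟨x, hx1, hx2⟩ := exists_rat_btwn hr
      have hx0 : 0 < x := by
        have : (0:ℝ) < x := lt_of_le_of_lt (div_nonneg (hL v) hpos.le) hx1
        exact_mod_cast this
      have hn : (x.num.toNat : ℤ) = x.num := Int.toNat_of_nonneg (Rat.num_pos.2 hx0).le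
      have hnpos : 1 ≤ x.num.toNat := by have := Rat.num_pos.2 hx0; omega
      have hd : (0:ℝ) < x.den := by exact_mod_cast x.den_pos
      have hxe : (x:ℝ) = (x.num.toNat : ℝ) / x.den := by
        have h9 : ((x.num.toNat : ℕ) : ℝ) = (x.num : ℝ) := by
          exact_mod_cast congrArg (Int.cast : ℤ → ℝ) hn
        rw [Rat.cast_def, h9]
      have h3 := H v w x.num.toNat x.den hnpos x.den_pos (by
        rw [hxe, div_lt_div_iff₀ hpos hd] at hx1; linarith)
      have h4 : h v ≤ x * h w := by
        rw [hxe, div_mul_eq_mul_div, le_div_iff₀ hd]; linarith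
      exact h4.trans (mul_le_mul_of_nonneg_right hx2.le (hh0 _))
    have ht : Filter.Tendsto (fun r : ℝ => r * h w) (nhdsWithin (L v / L w) (Set.Ioi (L v / L w)))
        (nhds (L v / L w * h w)) :=
      ((continuous_id.mul continuous_const).tendsto _).mono_left nhdsWithin_le_nhds
    refine ge_of_tendsto ht ?_
    filter_upwards [self_mem_nhdsWithin] with r hr using h2 r hr
  rw [div_mul_eq_mul_div, le_div_iff₀ hpos] at h1
  linarith

lemma prop_abs {V : Type*} {L h h' : V → ℝ} (hL : ∀ v, 0 ≤ L v) (hh0 : ∀ v, 0 ≤ h v)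
    (hle : ∀ v, h v ≤ h' v)
    (H : ∀ v w (p q : ℕ), 1 ≤ p → 1 ≤ q → q * L v ≤ p * L w → q * h v ≤ p * h w)
    (H' : ∀ v w (p q : ℕ), 1 ≤ p → 1 ≤ q → q * L v ≤ p * L w → q * h' v ≤ p * h' w) :
    ∃ c : ℝ, 0 ≤ c ∧ c ≤ 1 ∧ ∀ v, h v = c * h' v := by
  have hh0' : ∀ v, 0 ≤ h' v := fun v => (hh0 v).trans (hle v)
  have e1 : ∀ v w, h v * L w = h w * L v := fun v w =>
    le_antisymm (prop_cross hL hh0 H v w) (prop_cross hL hh0 H w v)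
  have e2 : ∀ v w, h' v * L w = h' w * L v := fun v w =>
    le_antisymm (prop_cross hL hh0' H' v w) (prop_cross hL hh0' H' w v)
  by_cases hall : ∀ v, L v = 0
  · refine ⟨0, le_rfl, zero_le_one, fun v => ?_⟩
    have := H v v 1 2 le_rfl (by norm_num) (by rw [hall v]; simp)
    push_cast at this
    have := hh0 v
    linarith
  push Not at hall
  obtain ⟨w, hw⟩ := hall
  by_cases hw' : h' w = 0
  · refine ⟨0, le_rfl, zero_le_one, fun v => ?_⟩
    have h1 : h w = 0 := le_antisymm (hw' ▸ hle w) (hh0 w)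
    have := e1 v w
    rw [h1, zero_mul] at this
    rw [zero_mul]
    exact (mul_eq_zero.1 this).resolve_right hw
  · refine ⟨h w / h' w, div_nonneg (hh0 _) (hh0' _), div_le_one_of_le₀ (hle w) (hh0' _), fun v => ?_⟩
    have h1 := e1 v w
    have h2 := e2 v w
    rw [div_mul_eq_mul_div, eq_div_iff hw']
    refine mul_right_cancel₀ hw ?_
    calc h v * h' w * L w = (h v * L w) * h' w := by ring
      _ = h w * (h' w * L v) := by rw [h1]; ring
      _ = h w * h' v * L w := by rw [← h2]; ring

lemma H_of {N : ℕ} {V : Type*} (α : V → Matrix (Fin N) (Fin N) ℤ) (G : Geo N) [Nonempty G.ι]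
    (a : V → G.ι → ℝ) (ha : ∀ v, Adapted G (α v) (a v))
    (μ : Measure (Tor N)) [IsProbabilityMeasure μ]
    (hT : ∀ v, MeasurePreserving (toralMap (α v)) μ μ) (v w : V) (p q : ℕ) (hp : 1 ≤ p) (hq : 1 ≤ q)
    (h : q * Real.log (∏ i, max 1 (a v i)) ≤ p * Real.log (∏ i, max 1 (a w i))) :
    q * (ksEntropy (toralMap (α v)) μ).toReal ≤ p * (ksEntropy (toralMap (α w)) μ).toReal := by
  have hpos : ∀ v, 0 < ∏ i, max 1 (a v i) := fun v =>
    Finset.prod_pos fun i _ => lt_of_lt_of_le one_pos (le_max_left _ _)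
  have hpw : ∀ v (n : ℕ), ∏ i, max 1 (a v i ^ n) = (∏ i, max 1 (a v i)) ^ n := by
    intro v n
    rw [← Finset.prod_pow]
    refine Finset.prod_congr rfl fun i _ => ?_
    rcases le_total (a v i) 1 with h | h
    · rw [max_eq_left h, one_pow, max_eq_left (pow_le_one₀ ((ha v).1 i).le h)]
    · rw [max_eq_right h, max_eq_right (one_le_pow₀ h)]
  have hMP : ∀ v (n : ℕ), MeasurePreserving (toralMap (α v ^ n)) μ μ := fun v n => by
    rw [toralMap_pow]; exact (hT v).iterate n
  have h1 := (ks_mono μ ((ha v).pow q) ((ha w).pow p) (hMP v q) (hMP w p) (by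
    rw [hpw, hpw]
    rw [← Real.log_pow, ← Real.log_pow] at h
    exact (Real.log_le_log_iff (pow_pos (hpos _) _) (pow_pos (hpos _) _)).1 h)).1
  rw [toralMap_pow, toralMap_pow] at h1
  have h2 := (ks_pow_ge μ (hT v) q hq).trans (h1.trans (ks_pow_le μ (hT w) p hp))
  have hfin : ksEntropy (toralMap (α w)) μ ≠ ⊤ := (ks_mono μ (ha w) (ha w) (hT w) (hT w) le_rfl).2
  have h3 := ENNReal.toReal_mono (ENNReal.mul_ne_top (ENNReal.natCast_ne_top p) hfin) h2
  simpa using h3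

lemma final {N : ℕ} {V : Type*} (α : V → Matrix (Fin N) (Fin N) ℤ) (G : Geo N) [Nonempty G.ι]
    (a : V → G.ι → ℝ) (ha : ∀ v, Adapted G (α v) (a v))
    (μ : Measure (Tor N)) [IsProbabilityMeasure μ]
    (hT : ∀ v, MeasurePreserving (toralMap (α v)) μ μ)
    (hV : ∀ v, MeasurePreserving (toralMap (α v)) (volume : Measure (Tor N)) volume) :
    ∃ c : ℝ≥0∞, c ≤ 1 ∧ ∀ v,
      ksEntropy (toralMap (α v)) μ = c * ksEntropy (toralMap (α v)) volume := by
  have hf : ∀ v, ksEntropy (toralMap (α v)) μ ≠ ⊤ := fun v =>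
    (ks_mono μ (ha v) (ha v) (hT v) (hT v) le_rfl).2
  have hf' : ∀ v, ksEntropy (toralMap (α v)) volume ≠ ⊤ := fun v =>
    (ks_mono volume (ha v) (ha v) (hV v) (hV v) le_rfl).2
  obtain ⟨c, hc0, hc1, hc⟩ := prop_abs (L := fun v => Real.log (∏ i, max 1 (a v i)))
    (h := fun v => (ksEntropy (toralMap (α v)) μ).toReal)
    (h' := fun v => (ksEntropy (toralMap (α v)) volume).toReal)
    (fun v => Real.log_nonneg (by
      calc (1:ℝ) = ∏ i : G.ι, 1 := by simp
        _ ≤ _ := Finset.prod_le_prod (fun _ _ => zero_le_one) fun i _ => le_max_left _ _))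
    (fun v => ENNReal.toReal_nonneg)
    (fun v => ENNReal.toReal_mono (hf' v) (ks_le_vol μ (ha v) (hT v) (hV v)))
    (H_of α G a ha μ hT) (H_of α G a ha volume hV)
  refine ⟨ENNReal.ofReal c, by simpa using hc1, fun v => ?_⟩
  rw [← ENNReal.ofReal_toReal (hf v), hc v, ENNReal.ofReal_mul hc0, ENNReal.ofReal_toReal (hf' v)]

end EntProp
namespace EntProp

section Alg

lemma clear_den {N : ℕ} (q : Fin N → ℚ) : ∃ n : ℕ, n ≠ 0 ∧ ∃ z : Fin N → ℤ, ∀ j, (z j : ℚ) = n * q j := by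
  refine ⟨∏ j, (q j).den, Finset.prod_ne_zero_iff.2 fun j _ => (q j).den_nz, ?_⟩
  have : ∀ j, ∃ z : ℤ, (z : ℚ) = ((∏ j, (q j).den : ℕ) : ℚ) * q j := by
    intro j
    obtain ⟨k, hk⟩ := Finset.dvd_prod_of_mem (fun j => (q j).den) (Finset.mem_univ j)
    refine ⟨k * (q j).num, ?_⟩
    rw [hk]
    push_cast
    have h1 : ((q j).den : ℚ) * q j = (q j).num := by rw [mul_comm]; exact Rat.mul_den_eq_num _
    rw [← h1]; ring
  choose z hz using this
  exact ⟨z, hz⟩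

lemma no_inv {d N : ℕ} (α : (Fin d → ℤ) → Matrix (Fin N) (Fin N) ℤ) (hirr : IsIrreducibleOn α ⊤)
    (W : Submodule ℚ (Fin N → ℚ))
    (hW : ∀ v, ∀ x ∈ W, ((α v).map (Int.cast : ℤ → ℚ)).mulVec x ∈ W) : W = ⊥ ∨ W = ⊤ := by
  classical
  by_contra hcon
  push Not at hcon
  obtain ⟨hb, ht⟩ := hcon
  obtain ⟨f, hf0, hf⟩ := Submodule.exists_le_ker_of_lt_top W (lt_top_iff_ne_top.2 ht)
  have hfe : ∀ x : Fin N → ℚ, f x = ∑ j, f (Pi.single j 1) * x j := by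
    intro x
    conv_lhs => rw [show x = ∑ j, x j • (Pi.single j (1:ℚ) : Fin N → ℚ) by
      funext k; simp [Finset.sum_apply, Pi.single_apply]]
    rw [map_sum]
    refine Finset.sum_congr rfl fun j _ => ?_
    rw [map_smul, smul_eq_mul, mul_comm]
  obtain ⟨n, hn, a, ha⟩ := clear_den (fun j => f (Pi.single j 1))
  have haW : ∀ w ∈ W, ∑ j, (a j : ℚ) * w j = 0 := by
    intro w hw
    have h1 : f w = 0 := hf hw
    rw [hfe] at h1
    simp only [ha, mul_assoc, ← Finset.mul_sum, h1, mul_zero]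
  have ha0 : ∃ j, a j ≠ 0 := by
    by_contra hall
    push Not at hall
    refine hf0 (LinearMap.ext fun x => ?_)
    rw [hfe]
    refine Finset.sum_eq_zero fun j _ => ?_
    have := ha j
    rw [hall j, Int.cast_zero] at this
    rw [(mul_eq_zero.1 this.symm).resolve_left (by exact_mod_cast hn), zero_mul]
  obtain ⟨w, hw, hw0⟩ := Submodule.exists_mem_ne_zero_of_ne_bot hb
  obtain ⟨n', hn', z, hz⟩ := clear_den w
  have hz0 : ∃ j, z j ≠ 0 := by
    by_contra hall
    push Not at hall
    refine hw0 (funext fun j => ?_)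
    have := hz j
    rw [hall j, Int.cast_zero] at this
    exact (mul_eq_zero.1 this.symm).resolve_left (by exact_mod_cast hn')
  let S : AddSubgroup (Tor N) :=
    { carrier := {x | ∀ a : Fin N → ℤ, (∀ w ∈ W, ∑ j, (a j : ℚ) * w j = 0) → ∑ j, a j • x j = 0}
      zero_mem' := by intro a _; simp
      add_mem' := by
        intro x y hx hy a haa
        simp only [Pi.add_apply, smul_add, Finset.sum_add_distrib]
        rw [hx a haa, hy a haa, add_zero]
      neg_mem' := by
        intro x hx a haa
        simp only [Pi.neg_apply, smul_neg, Finset.sum_neg_distrib]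
        rw [hx a haa, neg_zero] }
  have hfin := hirr S ?_ ?_ ?_
  · -- infinite
    obtain ⟨j, hj⟩ := hz0
    have hjR : (z j : ℝ) ≠ 0 := by exact_mod_cast hj
    refine Set.infinite_of_injective_forall_mem
      (f := fun m : ℕ => pr N (fun k => (1 / ((m : ℝ) + 2) / z j) * z k)) ?_ ?_ hfin
    · intro m m' hmm
      have h1 := congrFun hmm j
      simp only [pr_apply] at h1
      rw [div_mul_cancel₀ _ hjR, div_mul_cancel₀ _ hjR, ← sub_eq_zero, ← AddCircle.coe_sub,
        AddCircle.coe_eq_zero_iff] at h1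
      obtain ⟨q, hq⟩ := h1
      rw [zsmul_eq_mul, mul_one] at hq
      have b1 : ∀ m : ℕ, 0 < 1 / ((m:ℝ) + 2) := fun m => by positivity
      have b2 : ∀ m : ℕ, 1 / ((m:ℝ) + 2) < 1 := fun m => by
        rw [div_lt_one (by positivity)]; have : (0:ℝ) ≤ m := Nat.cast_nonneg m; linarith
      have hq1 : (q:ℝ) < 1 := by rw [hq]; linarith [b1 m', b2 m]
      have hq2 : (-1:ℝ) < q := by rw [hq]; linarith [b1 m, b2 m']
      have hq0 : q = 0 := by
        have c1 : q < 1 := by exact_mod_cast hq1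
        have c2 : -1 < q := by exact_mod_cast hq2
        omega
      rw [hq0, Int.cast_zero, eq_comm, sub_eq_zero, one_div, one_div, inv_inj] at hq
      have : (m:ℝ) = m' := by linarith
      exact_mod_cast this
    · intro m
      change ∀ a : Fin N → ℤ, _ → _
      intro a haa
      have h1 : ∑ k, (a k : ℚ) * z k = 0 := by
        have := haa w hw
        simp only [hz]
        calc ∑ k, (a k : ℚ) * (n' * w k) = n' * ∑ k, (a k : ℚ) * w k := by
              rw [Finset.mul_sum]; exact Finset.sum_congr rfl fun k _ => by ring
          _ = 0 := by rw [this, mul_zero]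
      have h2 : ∑ k, (a k : ℝ) * z k = 0 := by exact_mod_cast h1
      set s := 1 / ((m : ℝ) + 2) / z j with hs
      have h3 : ∑ k, a k • pr N (fun k => s * z k) k =
          ((∑ k, (a k : ℝ) * (s * z k) : ℝ) : UnitAddCircle) := by
        have : ((∑ k, (a k : ℝ) * (s * z k) : ℝ) : UnitAddCircle) =
            ∑ k, (((a k : ℝ) * (s * z k) : ℝ) : UnitAddCircle) :=
          map_sum (QuotientAddGroup.mk' (AddSubgroup.zmultiples (1:ℝ))) _ _
        rw [this]
        refine Finset.sum_congr rfl fun k _ => ?_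
        rw [pr_apply, ← AddCircle.coe_zsmul, zsmul_eq_mul]
      rw [h3]
      have h4 : ∑ k, (a k : ℝ) * (s * z k) = 0 := by
        calc ∑ k, (a k : ℝ) * (s * z k) = s * ∑ k, (a k : ℝ) * z k := by
              rw [Finset.mul_sum]; exact Finset.sum_congr rfl fun k _ => by ring
          _ = 0 := by rw [h2, mul_zero]
      rw [h4]; exact AddCircle.coe_zero _
  · have : (S : Set (Tor N)) = ⋂ a : Fin N → ℤ, ⋂ _ : (∀ w ∈ W, ∑ j, (a j : ℚ) * w j = 0),
        {x : Tor N | ∑ j, a j • x j = 0} := by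
      ext x
      simp only [Set.mem_iInter]
      exact Iff.rfl
    rw [this]
    refine isClosed_iInter fun a => isClosed_iInter fun _ => isClosed_eq ?_ continuous_const
    exact continuous_finsetSum _ fun j _ => (continuous_apply j).zsmul _
  · intro v _ x hx
    change ∀ a : Fin N → ℤ, _ → _
    intro a haa
    have h1 := hx (Matrix.vecMul a (α v)) (fun w hw => by
      have h2 := haa _ (hW v w hw)
      rw [← h2]
      simp only [Matrix.vecMul, dotProduct, Matrix.mulVec, Matrix.map_apply, Int.cast_sum,
        Int.cast_mul, Finset.sum_mul, Finset.mul_sum]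
      rw [Finset.sum_comm]
      exact Finset.sum_congr rfl fun i _ => Finset.sum_congr rfl fun k _ => by ring)
    rw [← h1]
    simp only [Matrix.vecMul, dotProduct, toralMap, Finset.smul_sum, Finset.sum_smul]
    rw [Finset.sum_comm]
    exact Finset.sum_congr rfl fun i _ => Finset.sum_congr rfl fun k _ => by rw [mul_smul]
  · intro htop
    obtain ⟨j, hj⟩ := ha0
    have hjR : (a j : ℝ) ≠ 0 := by exact_mod_cast hj
    have hx : pr N (Pi.single j (1 / 2 / (a j : ℝ))) ∈ S := by rw [htop]; trivial
    have h1 := hx a haW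
    rw [Finset.sum_eq_single j] at h1
    · rw [pr_apply, Pi.single_eq_same, ← AddCircle.coe_zsmul, zsmul_eq_mul, mul_div_cancel₀ _ hjR,
        AddCircle.coe_eq_zero_iff] at h1
      obtain ⟨q, hq⟩ := h1
      rw [zsmul_eq_mul, mul_one] at hq
      have : (2 * q : ℝ) = 1 := by rw [hq]; norm_num
      have : 2 * q = 1 := by exact_mod_cast this
      omega
    · intro k _ hk
      rw [pr_apply, Pi.single_eq_of_ne hk]; simp
    · simp

lemma field_of {d N : ℕ} (hN : 0 < N) (α : (Fin d → ℤ) → Matrix (Fin N) (Fin N) ℤ)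
    (hα0 : α 0 = 1) (hαadd : ∀ v w, α (v + w) = α v * α w) (hirr : IsIrreducibleOn α ⊤) :
    ∃ (K : Type) (_ : Field K) (_ : Algebra ℚ K) (e : (Fin N → ℚ) ≃+ K) (θ : (Fin d → ℤ) → K),
      (∀ v, θ v ≠ 0) ∧ ∀ v x, e (((α v).map (Int.cast : ℤ → ℚ)).mulVec x) = θ v * e x := by
  classical
  have hmm : ∀ A B : Matrix (Fin N) (Fin N) ℤ, (A * B).map (Int.cast : ℤ → ℚ) =
      A.map (Int.cast : ℤ → ℚ) * B.map (Int.cast : ℤ → ℚ) :=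
    fun A B => Matrix.map_mul (f := Int.castRingHom ℚ)
  let ρ : Multiplicative (Fin d → ℤ) →* Module.End ℚ (Fin N → ℚ) :=
    { toFun := fun v => Matrix.toLin' ((α v.toAdd).map (Int.cast : ℤ → ℚ))
      map_one' := by
        have : (1 : Matrix (Fin N) (Fin N) ℤ).map (Int.cast : ℤ → ℚ) = 1 :=
          Matrix.map_one _ Int.cast_zero Int.cast_one
        rw [toAdd_one, hα0, this, Matrix.toLin'_one]; rfl
      map_mul' := by
        intro v w
        rw [toAdd_mul, hαadd, hmm, Matrix.toLin'_mul]; rfl }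
  let R := MonoidAlgebra ℚ (Multiplicative (Fin d → ℤ))
  let F : R →ₐ[ℚ] Module.End ℚ (Fin N → ℚ) := MonoidAlgebra.lift ℚ _ _ ρ
  have hF : ∀ v : Fin d → ℤ, F (MonoidAlgebra.single (Multiplicative.ofAdd v) 1) =
      Matrix.toLin' ((α v).map (Int.cast : ℤ → ℚ)) := by
    intro v
    exact (MonoidAlgebra.lift_single ρ (Multiplicative.ofAdd v) (1:ℚ)).trans (one_smul _ _)
  letI : Module R (Fin N → ℚ) := Module.compHom _ F.toRingHom
  have hsm : ∀ (r : R) (x : Fin N → ℚ), r • x = F r x := fun r x => rfl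
  haveI : Nontrivial (Fin N → ℚ) := by
    haveI : Nonempty (Fin N) := ⟨⟨0, hN⟩⟩
    infer_instance
  have hsimple : IsSimpleModule R (Fin N → ℚ) := by
    refine { toIsSimpleOrder := { eq_bot_or_eq_top := fun W => ?_ } }
    let W' : Submodule ℚ (Fin N → ℚ) :=
      { carrier := W
        zero_mem' := W.zero_mem
        add_mem' := W.add_mem
        smul_mem' := by
          intro c x hx
          have h1 := W.smul_mem (algebraMap ℚ R c) hx
          rw [hsm, AlgHom.commutes] at h1
          simpa using h1 }
    rcases no_inv α hirr W' (fun v x hx => by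
      have h1 := W.smul_mem (MonoidAlgebra.single (Multiplicative.ofAdd v) 1 : R) hx
      rw [hsm, hF, Matrix.toLin'_apply] at h1
      exact h1) with h | h
    · left
      ext x
      have := SetLike.ext_iff.1 h x
      exact this
    · right
      ext x
      have := SetLike.ext_iff.1 h x
      exact this
  obtain ⟨I, hI, ⟨e⟩⟩ := isSimpleModule_iff_quot_maximal.1 hsimple
  haveI := hI
  refine ⟨R ⧸ I, Ideal.Quotient.field I, inferInstance, e.toAddEquiv,
    fun v => Ideal.Quotient.mk I (MonoidAlgebra.single (Multiplicative.ofAdd v) 1), ?_, ?_⟩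
  · intro v hv
    have h1 : (Ideal.Quotient.mk I (MonoidAlgebra.single (Multiplicative.ofAdd v) 1)) *
      (Ideal.Quotient.mk I (MonoidAlgebra.single (Multiplicative.ofAdd (-v)) 1)) = 1 := by
      rw [← map_mul, MonoidAlgebra.single_mul_single, ← ofAdd_add, add_neg_cancel, mul_one]
      exact map_one _
    have hv' : (Ideal.Quotient.mk I (MonoidAlgebra.single (Multiplicative.ofAdd v) 1)) = 0 := hv
    rw [hv', zero_mul] at h1
    exact zero_ne_one h1
  · intro v x
    have h1 := e.map_smul (MonoidAlgebra.single (Multiplicative.ofAdd v) 1 : R) x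
    rw [hsm, hF, Matrix.toLin'_apply] at h1
    exact h1

end Alg
end EntProp
namespace EntProp

lemma geo_of_field {V : Type} {N : ℕ} (hN : 0 < N) (α : V → Matrix (Fin N) (Fin N) ℤ)
    (K : Type) [Field K] [Algebra ℚ K] (e : (Fin N → ℚ) ≃+ K) (θ : V → K) (hθ : ∀ v, θ v ≠ 0)
    (he : ∀ v x, e (((α v).map (Int.cast : ℤ → ℚ)).mulVec x) = θ v * e x) :
    ∃ G : Geo N, Nonempty G.ι ∧ ∃ a : V → G.ι → ℝ, ∀ v, Adapted G (α v) (a v) := by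
  classical
  let el : (Fin N → ℚ) ≃ₗ[ℚ] K := { e with map_smul' := fun c x => map_rat_smul e.toAddMonoidHom c x }
  let bs : Module.Basis (Fin N) ℚ K := Module.Basis.ofEquivFun el.symm
  have hbs : ∀ j, bs j = e (Pi.single j 1) := by
    intro j
    simp [bs, el]
  have : FiniteDimensional ℚ K := bs.finiteDimensional_of_finite
  have hrank : Module.finrank ℚ K = N := by
    rw [Module.finrank_eq_card_basis bs, Fintype.card_fin]
  have hcard : Fintype.card (K →ₐ[ℚ] ℂ) = N := by rw [AlgHom.card, hrank]
  let φ : (K →ₐ[ℚ] ℂ) → (Fin N → ℝ) →ₗ[ℝ] ℂ := fun σ =>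
    ∑ j, (LinearMap.proj j : (Fin N → ℝ) →ₗ[ℝ] ℝ).smulRight (σ (bs j))
  have hφ : ∀ σ u, φ σ u = ∑ j, (u j : ℂ) * σ (bs j) := by
    intro σ u
    simp [φ, LinearMap.sum_apply]
  -- expansion of elements
  have hexp : ∀ x : Fin N → ℚ, e x = ∑ j, x j • bs j := by
    intro x
    have h1 : x = ∑ j, x j • (Pi.single j (1:ℚ) : Fin N → ℚ) := by
      funext k; simp [Finset.sum_apply, Pi.single_apply]
    have h2 : el x = ∑ j, x j • el (Pi.single j 1) := by
      conv_lhs => rw [h1]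
      rw [map_sum]
      exact Finset.sum_congr rfl fun j _ => map_smul _ _ _
    simp only [hbs]
    exact h2
  have hφQ : ∀ σ (z : Fin N → ℤ), φ σ (fun j => (z j : ℝ)) = σ (e fun j => (z j : ℚ)) := by
    intro σ z
    rw [hφ, hexp, map_sum]
    refine Finset.sum_congr rfl fun j _ => ?_
    rw [map_smul, Algebra.smul_def]; simp
  have hint : ∀ σ v u, φ σ (((α v).map (Int.cast : ℤ → ℝ)).mulVec u) = σ (θ v) * φ σ u := by
    intro σ v u
    have h1 : ∀ j, θ v * bs j = ∑ i, ((α v i j : ℤ) : ℚ) • bs i := by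
      intro j
      rw [hbs j, ← he, hexp]
      refine Finset.sum_congr rfl fun i _ => ?_
      congr 1
      simp [Matrix.mulVec_single]
    rw [hφ, hφ, Finset.mul_sum]
    have h2 : ∀ j, σ (θ v) * ((u j : ℂ) * σ (bs j)) = ∑ i, (u j : ℂ) * ((α v i j : ℂ) * σ (bs i)) := by
      intro j
      rw [← Finset.mul_sum, ← mul_assoc, mul_comm (σ (θ v)), mul_assoc, ← map_mul, h1, map_sum]
      congr 1
      refine Finset.sum_congr rfl fun i _ => ?_
      rw [map_smul, Algebra.smul_def]; simp
    simp only [h2]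
    rw [Finset.sum_comm]
    refine Finset.sum_congr rfl fun i _ => ?_
    simp only [Matrix.mulVec, dotProduct, Matrix.map_apply]
    push_cast
    rw [Finset.sum_mul]
    exact Finset.sum_congr rfl fun j _ => by ring
  -- common denominator
  have hD : ∃ D : ℤ, D ≠ 0 ∧ ∀ j, IsIntegral ℤ ((D : K) * bs j) := by
    have h1 : ∀ j, ∃ D : ℤ, D ≠ 0 ∧ IsIntegral ℤ (D • bs j) := fun j => by
      have hal : IsAlgebraic ℤ (bs j) :=
        (IsFractionRing.isAlgebraic_iff ℤ ℚ K).2 (Algebra.IsAlgebraic.isAlgebraic (bs j))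
      obtain ⟨y, hy0, hy⟩ := hal.exists_integral_multiple
      exact ⟨y, hy0, hy⟩
    choose D hD0 hD using h1
    refine ⟨∏ j, D j, Finset.prod_ne_zero_iff.2 fun j _ => hD0 j, fun j => ?_⟩
    rw [← Finset.prod_erase_mul _ _ (Finset.mem_univ j), Int.cast_mul, mul_assoc]
    have h2 := hD j
    rw [zsmul_eq_mul] at h2
    exact (isIntegral_algebraMap (R := ℤ) (A := K) (x := ∏ j ∈ Finset.univ.erase j, D j)).mul h2
  obtain ⟨D, hD0, hD⟩ := hD
  have hDpos : (0:ℝ) < |(D:ℝ)| := abs_pos.2 (by exact_mod_cast hD0)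
  have hprod : ∀ z : Fin N → ℤ, z ≠ 0 →
      (|(D:ℝ)| ^ N)⁻¹ ≤ ∏ σ, ‖φ σ (fun j => (z j : ℝ))‖ := by
    intro z hz
    set y : K := e fun j => (z j : ℚ) with hy
    have hy0 : y ≠ 0 := by
      intro h0
      apply hz
      have : (fun j => (z j : ℚ)) = 0 := e.injective (by rw [← hy, h0, map_zero])
      funext j
      have h9 : (z j : ℚ) = 0 := congrFun this j
      exact_mod_cast h9
    have hyint : IsIntegral ℤ ((D : K) * y) := by
      rw [hy, hexp, Finset.mul_sum]
      refine IsIntegral.sum _ fun j _ => ?_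
      have : (D : K) * ((z j : ℚ) • bs j) = (z j : K) * ((D : K) * bs j) := by
        rw [Algebra.smul_def]; simp; ring
      rw [this]
      exact (isIntegral_algebraMap (R := ℤ) (A := K) (x := z j)).mul (hD j)
    have hni : IsIntegral ℤ (Algebra.norm ℚ ((D : K) * y)) := Algebra.isIntegral_norm ℚ hyint
    obtain ⟨n, hn⟩ := IsIntegrallyClosed.isIntegral_iff.1 hni
    have hn0 : n ≠ 0 := by
      intro h0
      rw [h0, map_zero, eq_comm, Algebra.norm_eq_zero_iff] at hn
      have hDK : (D : K) ≠ 0 := by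
        have : CharZero K := algebraRat.charZero K
        exact_mod_cast hD0
      exact mul_ne_zero hDK hy0 hn
    have h1 : (∏ σ : K →ₐ[ℚ] ℂ, σ ((D : K) * y)) = (n : ℂ) := by
      rw [← Algebra.norm_eq_prod_embeddings ℚ ℂ, ← hn]; simp
    have h2 : ∏ σ : K →ₐ[ℚ] ℂ, ‖σ ((D : K) * y)‖ = |(n:ℝ)| := by
      rw [← norm_prod, h1, Complex.norm_intCast]
    have h3 : ∏ σ : K →ₐ[ℚ] ℂ, ‖σ ((D : K) * y)‖ = |(D:ℝ)| ^ N * ∏ σ : K →ₐ[ℚ] ℂ, ‖σ y‖ := by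
      have : ∀ σ : K →ₐ[ℚ] ℂ, ‖σ ((D : K) * y)‖ = |(D:ℝ)| * ‖σ y‖ := by
        intro σ
        rw [map_mul, map_intCast, norm_mul, Complex.norm_intCast]
      simp only [this]
      rw [Finset.prod_mul_distrib, Finset.prod_const, Finset.card_univ, hcard]
    have h4 : (1:ℝ) ≤ |(n:ℝ)| := by exact_mod_cast Int.one_le_abs hn0
    simp only [hφQ]
    rw [inv_le_iff_one_le_mul₀ (pow_pos hDpos N), mul_comm, ← h3, h2]
    exact h4
  -- norm bound
  let Φ : (Fin N → ℝ) →ₗ[ℝ] ((K →ₐ[ℚ] ℂ) → ℂ) := LinearMap.pi φ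
  have hker : LinearMap.ker Φ = ⊥ := by
    rw [LinearMap.ker_eq_bot']
    intro u hu
    let eq : Fin N ≃ (K →ₐ[ℚ] ℂ) := (Fintype.equivFinOfCardEq hcard).symm
    have hdet : (Algebra.embeddingsMatrixReindex ℚ ℂ bs eq).det ≠ 0 := by
      intro h0
      have h1 := Algebra.discr_eq_det_embeddingsMatrixReindex_pow_two ℚ ℂ bs eq
      rw [h0, zero_pow two_ne_zero] at h1
      have h2 := Algebra.discr_not_zero_of_basis ℚ bs
      exact h2 (by simpa using h1)
    have h3 : Matrix.vecMul (fun j => (u j : ℂ)) (Algebra.embeddingsMatrixReindex ℚ ℂ bs eq) = 0 := by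
      funext k
      have h4 : φ (eq k) u = 0 := congrFun hu (eq k)
      rw [hφ] at h4
      simpa [Matrix.vecMul, dotProduct, Algebra.embeddingsMatrixReindex, Algebra.embeddingsMatrix] using h4
    have h5 := Matrix.eq_zero_of_vecMul_eq_zero hdet h3
    funext j
    have := congrFun h5 j
    simpa using this
  obtain ⟨κ, hκ, hanti⟩ := Φ.exists_antilipschitzWith hker
  let G : Geo N :=
    { ι := K →ₐ[ℚ] ℂ
      fin := inferInstance
      φ := φ
      c := (|(D:ℝ)| ^ N)⁻¹
      hc := inv_pos.2 (pow_pos hDpos N)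
      prod := hprod
      C0 := κ
      hC0 := by exact_mod_cast hκ
      bound := by
        intro u r hr hu
        have h1 := hanti.le_mul_dist u 0
        rw [map_zero, dist_zero_right, dist_zero_right] at h1
        refine h1.trans (mul_le_mul_of_nonneg_left ?_ κ.2)
        exact (pi_norm_le_iff_of_nonneg hr).2 hu }
  refine ⟨G, ?_, fun v σ => ‖(show K →ₐ[ℚ] ℂ from σ) (θ v)‖, fun v => ⟨fun σ => ?_, fun σ u => ?_⟩⟩
  · change Nonempty (K →ₐ[ℚ] ℂ)
    rw [← Fintype.card_pos_iff, hcard]; exact hN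
  · exact norm_pos_iff.2 ((map_ne_zero _).2 (hθ v))
  · change ‖φ σ _‖ = _
    rw [hint, norm_mul]

end EntProp
/-- one-dimensionality of the entropy function: Let `d > 1` and let `α` be
a faithful, irreducible `ℤ^d`-action by automorphisms of `𝕋^N`, and let `λ = volume`
denote Haar–Lebesgue measure.  For every `α`-invariant Borel probability measure `μ`
there is a constant `c = c_μ ∈ [0,1]` with `h_μ(α_𝐧) = c · h_λ(α_𝐧)` for all `𝐧`. -/
theorem entropy_proportional_for_irreducible_actions
    (d N : ℕ) (hd : 1 < d)
    (α : (Fin d → ℤ) → Matrix (Fin N) (Fin N) ℤ)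
    (hα0 : α 0 = 1)
    (hαadd : ∀ v w, α (v + w) = α v * α w)
    (hfaithful : ∀ v : Fin d → ℤ, v ≠ 0 → α v ≠ 1)
    (hirr : IsIrreducibleOn α ⊤)
    (μ : Measure (Fin N → UnitAddCircle)) [IsProbabilityMeasure μ]
    (hinv : ∀ v, Measure.map (toralMap (α v)) μ = μ) :
    ∃ c : ℝ≥0∞, c ≤ 1 ∧ ∀ v : Fin d → ℤ,
      ksEntropy (toralMap (α v)) μ = c * ksEntropy (toralMap (α v)) volume := by
  have hN : 0 < N := by
    rcases Nat.eq_zero_or_pos N with h | h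
    · subst h
      exact absurd (Subsingleton.elim _ _) (hfaithful (Pi.single ⟨0, by omega⟩ 1) (by simp))
    · exact h
  obtain ⟨K, iF, iA, e, θ, hθ, he⟩ := EntProp.field_of hN α hα0 hαadd hirr
  obtain ⟨G, hG, a, ha⟩ := EntProp.geo_of_field hN α K e θ hθ he
  exact EntProp.final α G a ha μ
    (fun v => ⟨(EntProp.continuous_toralMap (α v)).measurable, hinv v⟩)
    (fun v => EntProp.vol_mp (α v) (α (-v)) (by rw [← hαadd, add_neg_cancel, hα0]))
end

section
/- Let X = SL(3,ℤ)\SL(3,ℝ) and let H be the group of 3×3 diagonal matrices with positive diagonal entries and determinant 1, acting on X by right translation. If every nonempty compact H-invariant subset of X is a union of compact H-orbits, then for all real numbers α and β one has liminf_{n→∞} n · ‖nα‖ · ‖nβ‖ = 0. -/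
open Filter

/-- `SL(3,ℝ)`. -/
abbrev SL3R := Matrix.SpecialLinearGroup (Fin 3) ℝ

noncomputable instance : TopologicalSpace SL3R :=
  TopologicalSpace.induced (fun g : SL3R => (g : Matrix (Fin 3) (Fin 3) ℝ)) inferInstance

/-- The subgroup `SL(3,ℤ)` of `SL(3,ℝ)` (the image of the integer points). -/
def SL3Z : Subgroup SL3R :=
  (Matrix.SpecialLinearGroup.map (n := Fin 3) (Int.castRingHom ℝ)).range

/-- The homogeneous space `X = SL(3,ℤ) \ SL(3,ℝ)` of right cosets. -/
abbrev XSL3 := Quotient (QuotientGroup.rightRel SL3Z)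

/-- Right translation by `g ∈ SL(3,ℝ)` on `X = SL(3,ℤ)\SL(3,ℝ)`. -/
def rtSL3 (g : SL3R) (x : XSL3) : XSL3 :=
  Quotient.map' (fun h => h * g)
    (fun a b hab => by
      rw [QuotientGroup.rightRel_apply] at *
      simpa [mul_assoc] using hab) x

/-- Membership in `H`, the group of diagonal matrices with positive diagonal entries
(and determinant one) in `SL(3,ℝ)`. -/
def IsPosDiag3 (g : SL3R) : Prop :=
  (∀ i j, i ≠ j → (g : Matrix (Fin 3) (Fin 3) ℝ) i j = 0) ∧
    ∀ i, 0 < (g : Matrix (Fin 3) (Fin 3) ℝ) i i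

/-- The `H`-orbit of a point of `X`. -/
def HOrbit3 (x : XSL3) : Set XSL3 := {y | ∃ g : SL3R, IsPosDiag3 g ∧ y = rtSL3 g x}

/-- The distance from a real number to the nearest integer. -/
noncomputable def distToInt (x : ℝ) : ℝ := |x - round x|

open Topology

lemma sl3_isInducing : IsInducing (fun g : SL3R => (g : Matrix (Fin 3) (Fin 3) ℝ)) := ⟨rfl⟩

lemma sl3_isClosedEmbedding :
    IsClosedEmbedding (fun g : SL3R => (g : Matrix (Fin 3) (Fin 3) ℝ)) := by
  refine ⟨⟨sl3_isInducing, Subtype.val_injective⟩, ?_⟩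
  have : Set.range (fun g : SL3R => (g : Matrix (Fin 3) (Fin 3) ℝ)) = {A | A.det = 1} := by
    ext A
    constructor
    · rintro ⟨g, rfl⟩
      exact g.2
    · intro h
      exact ⟨⟨A, h⟩, rfl⟩
  rw [this]
  exact isClosed_eq (continuous_id.matrix_det) continuous_const

instance sl3_topgroup : IsTopologicalGroup SL3R :=
  Matrix.SpecialLinearGroup.topologicalGroup

instance sl3_t2 : T2Space SL3R := sl3_isClosedEmbedding.isEmbedding.t2Space

instance sl3_fc : FirstCountableTopology SL3R :=
  haveI : FirstCountableTopology (Matrix (Fin 3) (Fin 3) ℝ) :=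
    inferInstanceAs (FirstCountableTopology (Fin 3 → Fin 3 → ℝ))
  sl3_isInducing.firstCountableTopology

instance sl3_lc : LocallyCompactSpace SL3R :=
  haveI : LocallyCompactSpace (Matrix (Fin 3) (Fin 3) ℝ) :=
    inferInstanceAs (LocallyCompactSpace (Fin 3 → Fin 3 → ℝ))
  sl3_isClosedEmbedding.locallyCompactSpace

/-- bounded box -/
def boxSL (C : ℝ) : Set SL3R := {g | ∀ i j, |(g : Matrix (Fin 3) (Fin 3) ℝ) i j| ≤ C}

lemma boxSL_compact (C : ℝ) : IsCompact (boxSL C) := by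
  have hK : IsCompact {A : Matrix (Fin 3) (Fin 3) ℝ | ∀ i j, A i j ∈ Set.Icc (-C) C} := by
    have := isCompact_univ_pi (X := fun _ : Fin 3 => Fin 3 → ℝ) (s := fun _ => Set.pi Set.univ (fun _ => Set.Icc (-C) C))
      (fun i => isCompact_univ_pi (fun j => isCompact_Icc))
    have e : {A : Matrix (Fin 3) (Fin 3) ℝ | ∀ i j, A i j ∈ Set.Icc (-C) C} =
        Set.pi Set.univ (fun _ => Set.pi Set.univ (fun _ => Set.Icc (-C) C)) := by
      apply Set.ext
      intro A
      constructor
      · intro h i _ j _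
        exact h i j
      · intro h i j
        exact h i trivial j trivial
    rw [e]
    exact this
  have := sl3_isClosedEmbedding.isCompact_preimage hK
  convert this using 1
  ext g
  simp only [boxSL, abs_le]
  rfl

lemma sl3_entry_cont (i j : Fin 3) :
    Continuous (fun g : SL3R => (g : Matrix (Fin 3) (Fin 3) ℝ) i j) :=
  sl3_isInducing.continuous.matrix_elem i j

lemma compact_sub_box {K : Set SL3R} (hK : IsCompact K) : ∃ C, K ⊆ boxSL C := by
  have : ∀ i j, ∃ C, ∀ g ∈ K, |(g : Matrix (Fin 3) (Fin 3) ℝ) i j| ≤ C := by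
    intro i j
    obtain ⟨C, hC⟩ := hK.exists_bound_of_continuousOn (sl3_entry_cont i j).continuousOn
    exact ⟨C, hC⟩
  choose C hC using this
  refine ⟨∑ i, ∑ j, |C i j|, fun g hg i j => (hC i j g hg).trans ((le_abs_self _).trans ?_)⟩
  refine le_trans ?_ (Finset.single_le_sum (f := fun i => ∑ j, |C i j|) (fun i _ => Finset.sum_nonneg (fun j _ => abs_nonneg _)) (Finset.mem_univ i))
  exact Finset.single_le_sum (f := fun j => |C i j|) (fun j _ => abs_nonneg _) (Finset.mem_univ j)

lemma mem_SL3Z {g : SL3R} : g ∈ SL3Z ↔ ∃ A : Matrix.SpecialLinearGroup (Fin 3) ℤ,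
    ∀ i j, (g : Matrix (Fin 3) (Fin 3) ℝ) i j = (A i j : ℤ) := by
  unfold SL3Z
  rw [MonoidHom.mem_range]
  constructor
  · rintro ⟨A, rfl⟩
    exact ⟨A, fun i j => by simp⟩
  · rintro ⟨A, h⟩
    refine ⟨A, ?_⟩
    ext i j
    simp [h]

lemma SL3Z_finite_box (C : ℝ) : {g : SL3R | g ∈ SL3Z ∧ g ∈ boxSL C}.Finite := by
  have hfin : {M : Matrix (Fin 3) (Fin 3) ℤ | ∀ i j, M i j ∈ Set.Icc (-⌈C⌉) ⌈C⌉}.Finite := by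
    have := Set.Finite.pi' (ι := Fin 3) (t := fun _ => {r : Fin 3 → ℤ | ∀ j, r j ∈ Set.Icc (-⌈C⌉) ⌈C⌉})
      (fun i => Set.Finite.pi' (fun j => Set.finite_Icc _ _))
    exact this
  refine Set.Finite.of_finite_image (f := fun g : SL3R => (g : Matrix (Fin 3) (Fin 3) ℝ)) ?_
    Subtype.val_injective.injOn
  refine (hfin.image (fun M => M.map (Int.cast : ℤ → ℝ))).subset ?_
  rintro _ ⟨g, ⟨hg, hb⟩, rfl⟩
  obtain ⟨A, hA⟩ := mem_SL3Z.1 hg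
  refine ⟨(A : Matrix (Fin 3) (Fin 3) ℤ), fun i j => ?_, ?_⟩
  · have h1 := hb i j
    rw [hA, abs_le] at h1
    have h2 := Int.le_ceil C
    constructor
    · have : ((-⌈C⌉ : ℤ) : ℝ) ≤ (A i j : ℤ) := by push_cast; linarith [h1.1, Int.le_ceil C]
      exact_mod_cast this
    · have : ((A i j : ℤ) : ℝ) ≤ (⌈C⌉ : ℤ) := by linarith [h1.2]
      exact_mod_cast this
  · ext i j
    simp [hA]

lemma SL3Z_finite_compact {K : Set SL3R} (hK : IsCompact K) :
    {g : SL3R | g ∈ SL3Z ∧ g ∈ K}.Finite := by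
  obtain ⟨C, hC⟩ := compact_sub_box hK
  exact (SL3Z_finite_box C).subset fun g hg => ⟨hg.1, hC hg.2⟩

instance sl3_pd : ProperlyDiscontinuousSMul SL3Z SL3R := by
  apply Subgroup.properlyDiscontinuousSMul_of_tendsto_cofinite
  rw [hasBasis_cocompact.tendsto_right_iff]
  intro K hK
  rw [Filter.eventually_cofinite]
  have := SL3Z_finite_compact hK
  refine Set.Finite.of_finite_image (f := Subtype.val) (this.subset ?_) Subtype.val_injective.injOn
  rintro _ ⟨g, hg, rfl⟩
  refine ⟨g.2, ?_⟩
  simpa using hg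

instance XSL3_t2 : T2Space XSL3 :=
  t2Space_of_properlyDiscontinuousSMul_of_t2Space (Γ := SL3Z) (T := SL3R)

/-- projection -/
def prX (g : SL3R) : XSL3 := Quotient.mk _ g

lemma prX_open : IsOpenQuotientMap prX :=
  MulAction.isOpenQuotientMap_quotientMk (Γ := SL3Z) (T := SL3R)

lemma prX_eq {a b : SL3R} : prX a = prX b ↔ ∃ γ ∈ SL3Z, b = γ * a := by
  unfold prX
  rw [Quotient.eq, QuotientGroup.rightRel_apply]
  constructor
  · intro h
    exact ⟨_, h, by simp⟩
  · rintro ⟨γ, h, rfl⟩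
    simpa using h

lemma rt_prX (g h : SL3R) : rtSL3 g (prX h) = prX (h * g) := rfl

/-- log coordinates of the diagonal group -/
def LL (v : ℝ × ℝ) : Fin 3 → ℝ := ![-(v.1 + v.2), v.1, v.2]

lemma LL_add (v w : ℝ × ℝ) (i : Fin 3) : LL (v + w) i = LL v i + LL w i := by
  fin_cases i <;> simp [LL]
  ring

lemma LL_neg (v : ℝ × ℝ) (i : Fin 3) : LL (-v) i = - LL v i := by
  fin_cases i <;> simp [LL]
  ring

/-- the diagonal matrix -/
noncomputable def DD (v : ℝ × ℝ) : SL3R :=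
  ⟨Matrix.diagonal (fun i => Real.exp (LL v i)), by
    rw [Matrix.det_diagonal, Fin.prod_univ_three, ← Real.exp_add, ← Real.exp_add, Real.exp_eq_one_iff]
    simp [LL]⟩

lemma DD_coe (v : ℝ × ℝ) : (DD v : Matrix (Fin 3) (Fin 3) ℝ) =
  Matrix.diagonal (fun i => Real.exp (LL v i)) := rfl

lemma DD_add (v w : ℝ × ℝ) : DD (v + w) = DD v * DD w := by
  apply Subtype.ext
  rw [Matrix.SpecialLinearGroup.coe_mul, DD_coe, DD_coe, DD_coe, Matrix.diagonal_mul_diagonal]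
  simp only [LL_add, Real.exp_add]

lemma DD_zero : DD 0 = 1 := by
  have := DD_add 0 0
  simpa using this

lemma DD_neg (v : ℝ × ℝ) : DD (-v) = (DD v)⁻¹ := by
  rw [eq_inv_iff_mul_eq_one, ← DD_add]
  simp [DD_zero]

lemma mul_DD_apply (g : SL3R) (v : ℝ × ℝ) (i j : Fin 3) :
    ((g * DD v : SL3R) : Matrix (Fin 3) (Fin 3) ℝ) i j = g i j * Real.exp (LL v j) := by
  rw [Matrix.SpecialLinearGroup.coe_mul, DD_coe, Matrix.mul_diagonal]

lemma DD_mul_apply (g : SL3R) (v : ℝ × ℝ) (i j : Fin 3) :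
    ((DD v * g : SL3R) : Matrix (Fin 3) (Fin 3) ℝ) i j = Real.exp (LL v i) * g i j := by
  rw [Matrix.SpecialLinearGroup.coe_mul, DD_coe, Matrix.diagonal_mul]

lemma conj_apply (g : SL3R) (v : ℝ × ℝ) (i j : Fin 3) :
    (((DD v)⁻¹ * g * DD v : SL3R) : Matrix (Fin 3) (Fin 3) ℝ) i j =
      g i j * Real.exp (LL v j - LL v i) := by
  rw [mul_DD_apply, ← DD_neg, DD_mul_apply, LL_neg, sub_eq_add_neg, Real.exp_add]
  ring

lemma DD_posDiag (v : ℝ × ℝ) : IsPosDiag3 (DD v) := by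
  refine ⟨fun i j h => ?_, fun i => ?_⟩
  · rw [DD_coe, Matrix.diagonal_apply_ne _ h]
  · rw [DD_coe, Matrix.diagonal_apply_eq]
    exact Real.exp_pos _

lemma posDiag_iff {g : SL3R} : IsPosDiag3 g ↔ ∃ v, g = DD v := by
  constructor
  · rintro ⟨h0, hp⟩
    have hd : (g : Matrix (Fin 3) (Fin 3) ℝ) 0 0 * g 1 1 * g 2 2 = 1 := by
      have := g.2
      rw [Matrix.det_fin_three] at this
      have e1 := h0 0 1 (by decide)
      have e2 := h0 0 2 (by decide)
      have e3 := h0 1 2 (by decide)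
      have e4 := h0 1 0 (by decide)
      rw [e1, e2, e3, e4] at this
      simpa using this
    refine ⟨(Real.log (g 1 1), Real.log (g 2 2)), ?_⟩
    ext i j
    rw [DD_coe]
    by_cases hij : i = j
    · subst hij
      rw [Matrix.diagonal_apply_eq]
      fin_cases i
      · simp only [LL]
        simp only [Fin.zero_eta, Matrix.cons_val_zero]
        rw [Real.exp_neg, Real.exp_add, Real.exp_log (hp 1), Real.exp_log (hp 2)]
        have h1 := (hp 1).ne'
        have h2 := (hp 2).ne'
        field_simp
        linarith
      · simp only [LL]
        simp [Real.exp_log (hp 1)]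
      · simp only [LL]
        simp [Real.exp_log (hp 2)]
    · rw [Matrix.diagonal_apply_ne _ hij, h0 _ _ hij]
  · rintro ⟨v, rfl⟩
    exact DD_posDiag v

lemma LL_cont (i : Fin 3) : Continuous (fun v => LL v i) := by
  fin_cases i <;> simp [LL] <;> fun_prop

lemma DD_cont : Continuous DD := by
  rw [sl3_isInducing.continuous_iff]
  refine Continuous.matrix_diagonal (A := fun v i => Real.exp (LL v i)) ?_
  exact continuous_pi fun i => Real.continuous_exp.comp (LL_cont i)

/-- action on X -/
noncomputable instance actX : AddAction (ℝ × ℝ) XSL3 where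
  vadd v x := rtSL3 (DD v) x
  zero_vadd x := by
    induction x using Quotient.inductionOn with
    | h g => change prX (g * DD 0) = prX g; rw [DD_zero, mul_one]
  add_vadd v w x := by
    induction x using Quotient.inductionOn with
    | h g =>
      change prX (g * DD (v + w)) = prX (g * DD w * DD v)
      rw [add_comm, DD_add, mul_assoc]

lemma vadd_prX (v : ℝ × ℝ) (g : SL3R) : v +ᵥ prX g = prX (g * DD v) := rfl

instance actX_cont : ContinuousVAdd (ℝ × ℝ) XSL3 := by
  constructor
  have hq : IsOpenQuotientMap (Prod.map (id : ℝ × ℝ → ℝ × ℝ) prX) :=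
    IsOpenQuotientMap.id.prodMap prX_open
  rw [← hq.continuous_comp_iff]
  change Continuous (fun q : (ℝ × ℝ) × SL3R => prX (q.2 * DD q.1))
  exact prX_open.continuous.comp (continuous_snd.mul (DD_cont.comp continuous_fst))

lemma HOrbit_eq (x : XSL3) : HOrbit3 x = AddAction.orbit (ℝ × ℝ) x := by
  ext y
  constructor
  · rintro ⟨g, hg, rfl⟩
    obtain ⟨v, rfl⟩ := posDiag_iff.1 hg
    exact ⟨v, rfl⟩
  · rintro ⟨v, rfl⟩
    exact ⟨DD v, DD_posDiag v, rfl⟩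

lemma orbit_cocompact {p : SL3R} (h : IsCompact (HOrbit3 (prX p))) :
    ∃ r : ℝ, 0 ≤ r ∧ ∀ v : ℝ × ℝ, ∃ w : ℝ × ℝ, ‖w‖ ≤ r ∧ ∃ γ ∈ SL3Z, γ * p * DD v = p * DD w := by
  rw [HOrbit_eq] at h
  set O := AddAction.orbit (ℝ × ℝ) (prX p) with hO
  have : CompactSpace O := isCompact_iff_compactSpace.1 h
  have : ContinuousVAdd (ℝ × ℝ) O := by
    constructor
    refine Continuous.subtype_mk (f := fun q : (ℝ × ℝ) × O => q.1 +ᵥ (q.2 : XSL3)) ?_ _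
    fun_prop
  let x0 : O := ⟨prX p, AddAction.mem_orbit_self _⟩
  have hop : IsOpenMap (fun v : ℝ × ℝ => v +ᵥ x0) := isOpenMap_vadd_of_sigmaCompact x0
  have hcov : (Set.univ : Set O) ⊆ ⋃ n : ℕ, (fun v : ℝ × ℝ => v +ᵥ x0) '' Metric.ball 0 n := by
    rintro ⟨y, ⟨v, rfl⟩⟩ -
    obtain ⟨n, hn⟩ := exists_nat_gt ‖v‖
    refine Set.mem_iUnion.2 ⟨n, v, by simpa using hn, rfl⟩
  obtain ⟨n, hn⟩ := isCompact_univ.elim_directed_cover _ (fun n => hop _ Metric.isOpen_ball) hcov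
    (directed_of_isDirected_le fun a b hab => Set.image_mono
      (Metric.ball_subset_ball (by exact_mod_cast hab)))
  refine ⟨n, by positivity, fun v => ?_⟩
  obtain ⟨w, hw, hw'⟩ := hn (Set.mem_univ (v +ᵥ x0))
  refine ⟨w, by simpa using (Metric.mem_ball.1 hw).le, ?_⟩
  have h2 : prX (p * DD v) = prX (p * DD w) := (congrArg Subtype.val hw').symm
  obtain ⟨γ, hγ, e⟩ := prX_eq.1 h2
  exact ⟨γ, hγ, by rw [e, mul_assoc]⟩

/-- approximating any diagonal direction by the stabilizer -/
lemma exists_stab {p : SL3R} (h : IsCompact (HOrbit3 (prX p))) :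
    ∃ r : ℝ, 0 ≤ r ∧ ∀ v : ℝ × ℝ, ∃ w : ℝ × ℝ, ‖w‖ ≤ r ∧ ∃ γ ∈ SL3Z, γ * p * DD (v + w) = p := by
  obtain ⟨r, hr, H⟩ := orbit_cocompact h
  refine ⟨r, hr, fun v => ?_⟩
  obtain ⟨w, hw, γ, hγ, e⟩ := H v
  refine ⟨-w, by simpa using hw, γ, hγ, ?_⟩
  rw [DD_add, ← mul_assoc, e, DD_neg, mul_inv_cancel_right]

lemma LL_bound {w : ℝ × ℝ} {r : ℝ} (hw : ‖w‖ ≤ r) (i : Fin 3) : |LL w i| ≤ 2 * r := by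
  have h1 : |w.1| ≤ r := (norm_fst_le w).trans hw
  have h2 : |w.2| ≤ r := (norm_snd_le w).trans hw
  rw [abs_le] at *
  fin_cases i <;> simp [LL] <;> constructor <;> linarith [h1.1, h1.2, h2.1, h2.2]

lemma red_aux {A B C d e f : ℝ} (hA : 0 < A) (hAB : A ≤ B) (hBC : B ≤ C)
    (hdet : A * B * C + 2 * d * e * f - A * d ^ 2 - B * e ^ 2 - C * f ^ 2 = 1)
    (hB : ∀ m n : ℤ, 0 ≤ (m : ℝ) ^ 2 * A + (n : ℝ) ^ 2 * C + 2 * m * f + 2 * n * d + 2 * m * n * e)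
    (hC : ∀ m n : ℤ, 0 ≤ (m : ℝ) ^ 2 * A + (n : ℝ) ^ 2 * B + 2 * m * e + 2 * n * d + 2 * m * n * f) :
    A * B * C ≤ 8 / 3 := by
  have h1 := hB 1 0
  have h2 := hB (-1) 0
  norm_num at h1 h2
  have hf : f ^ 2 ≤ A * B / 4 := by nlinarith
  have hBp : 0 < B := by linarith
  have hABp : 0 < A * B := by positivity
  set Δ := A * B - f ^ 2 with hΔ
  have hΔp : 0 < Δ := by linarith
  obtain ⟨n, hn⟩ : ∃ n : ℤ, |(n : ℝ) + (A * d - e * f) / Δ| ≤ 1 / 2 := by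
    refine ⟨round (-((A * d - e * f) / Δ)), ?_⟩
    have := abs_sub_round (-((A * d - e * f) / Δ))
    rw [abs_sub_comm, sub_neg_eq_add] at this
    exact this
  obtain ⟨m, hm⟩ : ∃ m : ℤ, |(m : ℝ) + (e + n * f) / A| ≤ 1 / 2 := by
    refine ⟨round (-((e + n * f) / A)), ?_⟩
    have := abs_sub_round (-((e + n * f) / A))
    rw [abs_sub_comm, sub_neg_eq_add] at this
    exact this
  have key : C + ((m : ℝ) ^ 2 * A + (n : ℝ) ^ 2 * B + 2 * m * e + 2 * n * d + 2 * m * n * f) =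
      A * ((m : ℝ) + (e + n * f) / A) ^ 2 + Δ / A * ((n : ℝ) + (A * d - e * f) / Δ) ^ 2 + 1 / Δ := by
    rw [← hdet]
    have hC' : C = (C * Δ) / Δ := by field_simp
    field_simp
    rw [hΔ]
    ring
  have hm2 : ((m : ℝ) + (e + n * f) / A) ^ 2 ≤ 1 / 4 := by
    have := sq_le_sq' (abs_le.1 hm).1 (abs_le.1 hm).2
    norm_num at this ⊢
    exact this
  have hn2 : ((n : ℝ) + (A * d - e * f) / Δ) ^ 2 ≤ 1 / 4 := by
    have := sq_le_sq' (abs_le.1 hn).1 (abs_le.1 hn).2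
    norm_num at this ⊢
    exact this
  have hΔA : Δ / A ≤ B := by
    rw [div_le_iff₀ hA]
    nlinarith [sq_nonneg f]
  have hΔA0 : 0 ≤ Δ / A := by positivity
  have h3 := hC m n
  have h4 : C ≤ C / 2 + 1 / Δ := by nlinarith
  have h5 : C * Δ ≤ 2 := by
    have : C ≤ 2 / Δ := by
      have : 2 / Δ = 2 * (1 / Δ) := by ring
      linarith
    rwa [le_div_iff₀ hΔp] at this
  have hCp : 0 < C := by linarith
  nlinarith

lemma red_main {A B C d e f : ℝ} (hA : 0 < A) (hB : 0 < B) (hC : 0 < C)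
    (hdet : A * B * C + 2 * d * e * f - A * d ^ 2 - B * e ^ 2 - C * f ^ 2 = 1)
    (h0 : ∀ m n : ℤ, 0 ≤ (m : ℝ) ^ 2 * B + (n : ℝ) ^ 2 * C + 2 * m * f + 2 * n * e + 2 * m * n * d)
    (h1 : ∀ m n : ℤ, 0 ≤ (m : ℝ) ^ 2 * A + (n : ℝ) ^ 2 * C + 2 * m * f + 2 * n * d + 2 * m * n * e)
    (h2 : ∀ m n : ℤ, 0 ≤ (m : ℝ) ^ 2 * A + (n : ℝ) ^ 2 * B + 2 * m * e + 2 * n * d + 2 * m * n * f) :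
    A * B * C ≤ 8 / 3 := by
  rcases le_total A B with hab | hab <;> rcases le_total B C with hbc | hbc <;>
    rcases le_total A C with hac | hac
  · exact red_aux hA hab hbc hdet h1 h2
  · exact red_aux hA hab hbc hdet h1 h2
  · have := red_aux (A := A) (B := C) (C := B) (d := d) (e := f) (f := e) hA hac hbc (by linarith)
      (fun m n => by linarith [h2 m n]) (fun m n => by linarith [h1 m n])
    linarith
  · have := red_aux (A := C) (B := A) (C := B) (d := f) (e := d) (f := e) hC hac hab (by linarith)
      (fun m n => by linarith [h0 n m]) (fun m n => by linarith [h1 n m])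
    linarith
  · have := red_aux (A := B) (B := A) (C := C) (d := e) (e := d) (f := f) hB hab hac (by linarith)
      (fun m n => by linarith [h0 m n]) (fun m n => by linarith [h2 n m])
    linarith
  · have := red_aux (A := B) (B := C) (C := A) (d := e) (e := f) (f := d) hB hbc hac (by linarith)
      (fun m n => by linarith [h2 n m]) (fun m n => by linarith [h0 m n])
    linarith
  · have := red_aux (A := C) (B := B) (C := A) (d := f) (e := e) (f := d) hC hbc hab (by linarith)
      (fun m n => by linarith [h1 n m]) (fun m n => by linarith [h0 n m])
    linarith
  · have := red_aux (A := C) (B := B) (C := A) (d := f) (e := e) (f := d) hC hbc hab (by linarith)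
      (fun m n => by linarith [h1 n m]) (fun m n => by linarith [h0 n m])
    linarith

/-- lattices without short vectors -/
def SS (ε : ℝ) : Set SL3R := {p | ∀ v : Fin 3 → ℤ, v ≠ 0 →
  ε ^ 2 ≤ ∑ j, (∑ i, (v i : ℝ) * (p : Matrix (Fin 3) (Fin 3) ℝ) i j) ^ 2}

lemma SS_closed (ε : ℝ) : IsClosed (SS ε) := by
  unfold SS
  have : {p : SL3R | ∀ v : Fin 3 → ℤ, v ≠ 0 →
      ε ^ 2 ≤ ∑ j, (∑ i, (v i : ℝ) * (p : Matrix (Fin 3) (Fin 3) ℝ) i j) ^ 2} =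
      ⋂ v : Fin 3 → ℤ, ⋂ _ : v ≠ 0, {p : SL3R | 
      ε ^ 2 ≤ ∑ j, (∑ i, (v i : ℝ) * (p : Matrix (Fin 3) (Fin 3) ℝ) i j) ^ 2} := by
    ext p
    simp
  rw [this]
  refine isClosed_iInter fun v => isClosed_iInter fun _ => isClosed_le continuous_const ?_
  exact continuous_finsetSum _ fun j _ => (continuous_finsetSum _ fun i _ =>
    continuous_const.mul (sl3_entry_cont i j)).pow 2

lemma SL3Z_row_ne_zero (A : Matrix.SpecialLinearGroup (Fin 3) ℤ) (i : Fin 3) :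
    (fun k => A i k) ≠ 0 := by
  intro h
  have := Matrix.det_eq_zero_of_row_eq_zero (A := (A : Matrix (Fin 3) (Fin 3) ℤ)) i
    (fun j => congrFun h j)
  rw [A.2] at this
  exact one_ne_zero this

lemma SS_row {ε : ℝ} {p γ : SL3R} (hp : p ∈ SS ε) (hγ : γ ∈ SL3Z) (i : Fin 3) :
    ε ^ 2 ≤ ∑ j, ((γ * p : SL3R) : Matrix (Fin 3) (Fin 3) ℝ) i j ^ 2 := by
  obtain ⟨A, hA⟩ := mem_SL3Z.1 hγ
  have := hp _ (SL3Z_row_ne_zero A i)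
  convert this using 4 with j
  rw [Matrix.SpecialLinearGroup.coe_mul, Matrix.mul_apply]
  simp only [hA]

/-- Frobenius norm squared -/
noncomputable def FF (p : SL3R) : ℝ := ∑ i, ∑ j, (p : Matrix (Fin 3) (Fin 3) ℝ) i j ^ 2

lemma exists_min (p : SL3R) : ∃ γ ∈ SL3Z, ∀ γ' ∈ SL3Z, FF (γ * p) ≤ FF (γ' * p) := by
  have hbox : ∀ q : SL3R, FF q ≤ FF p → q ∈ boxSL (Real.sqrt (FF p)) := by
    intro q hq i j
    apply Real.abs_le_sqrt
    refine le_trans ?_ hq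
    unfold FF
    refine le_trans ?_ (Finset.single_le_sum (f := fun i => ∑ j, (q : Matrix (Fin 3) (Fin 3) ℝ) i j ^ 2)
      (fun i _ => Finset.sum_nonneg (fun j _ => sq_nonneg _)) (Finset.mem_univ i))
    exact Finset.single_le_sum (f := fun j => (q : Matrix (Fin 3) (Fin 3) ℝ) i j ^ 2)
      (fun j _ => sq_nonneg _) (Finset.mem_univ j)
  have hK : IsCompact ((fun q => q * p⁻¹) '' boxSL (Real.sqrt (FF p))) :=
    (boxSL_compact _).image (continuous_mul_const _)
  have hfin : {γ : SL3R | γ ∈ SL3Z ∧ FF (γ * p) ≤ FF p}.Finite :=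
    (SL3Z_finite_compact hK).subset fun γ hγ => ⟨hγ.1, γ * p, hbox _ hγ.2, by simp⟩
  obtain ⟨γ, hγ, hmin⟩ := Set.exists_min_image _ (fun γ => FF (γ * p)) hfin
    ⟨1, SL3Z.one_mem, by simp⟩
  refine ⟨γ, hγ.1, fun γ' hγ' => ?_⟩
  by_cases h : FF (γ' * p) ≤ FF p
  · exact hmin γ' ⟨hγ', h⟩
  · exact hγ.2.trans (not_le.1 h).le

lemma mem_SL3Z_of_int (M : Matrix (Fin 3) (Fin 3) ℤ) (h : M.det = 1) :
    ∃ γ ∈ SL3Z, ∀ i j, (γ : Matrix (Fin 3) (Fin 3) ℝ) i j = M i j := by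
  refine ⟨Matrix.SpecialLinearGroup.map (n := Fin 3) (Int.castRingHom ℝ) ⟨M, h⟩, ⟨_, rfl⟩, ?_⟩
  intro i j
  rfl

lemma mahler3 (ε : ℝ) (hε : 0 < ε) : ∃ C, ∀ p ∈ SS ε, ∃ γ ∈ SL3Z, γ * p ∈ boxSL C := by
  refine ⟨Real.sqrt (8 / 3 / ε ^ 4), fun p hp => ?_⟩
  obtain ⟨γ, hγ, hmin⟩ := exists_min p
  refine ⟨γ, hγ, ?_⟩
  have hrow := SS_row hp hγ
  set q := γ * p with hq
  have hmin' : ∀ M : Matrix (Fin 3) (Fin 3) ℤ, M.det = 1 →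
      FF q ≤ ∑ i, ∑ j, (∑ k, (M i k : ℝ) * (q : Matrix (Fin 3) (Fin 3) ℝ) k j) ^ 2 := by
    intro M hM
    obtain ⟨γ', hγ', e⟩ := mem_SL3Z_of_int M hM
    have := hmin _ (SL3Z.mul_mem hγ' hγ)
    rw [mul_assoc, ← hq] at this
    refine this.trans (le_of_eq ?_)
    unfold FF
    simp only [Matrix.SpecialLinearGroup.coe_mul, Matrix.mul_apply, e]
  have hdet := q.2
  rw [Matrix.det_fin_three] at hdet
  have r0 := hrow 0
  have r1 := hrow 1
  have r2 := hrow 2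
  have m0 := fun m n : ℤ => hmin' !![1, m, n; 0, 1, 0; 0, 0, 1] (by simp [Matrix.det_fin_three])
  have m1 := fun m n : ℤ => hmin' !![1, 0, 0; m, 1, n; 0, 0, 1] (by simp [Matrix.det_fin_three])
  have m2 := fun m n : ℤ => hmin' !![1, 0, 0; 0, 1, 0; m, n, 1] (by simp [Matrix.det_fin_three])
  have hent : ∀ i j, |(q : Matrix (Fin 3) (Fin 3) ℝ) i j| ≤
    Real.sqrt (∑ j, (q : Matrix (Fin 3) (Fin 3) ℝ) i j ^ 2) := fun i j => Real.abs_le_sqrt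
      (Finset.single_le_sum (f := fun j => (q : Matrix (Fin 3) (Fin 3) ℝ) i j ^ 2)
      (fun j _ => sq_nonneg _) (Finset.mem_univ j))
  suffices h : ∀ i, ∑ j, (q : Matrix (Fin 3) (Fin 3) ℝ) i j ^ 2 ≤ 8 / 3 / ε ^ 4 from
    fun i j => (hent i j).trans (Real.sqrt_le_sqrt (h i))
  clear hent hmin hmin' hrow
  clear_value q
  change Matrix.SpecialLinearGroup (Fin 3) ℝ at q
  obtain ⟨Q, hQ⟩ := q
  simp only [FF, Fin.sum_univ_three, Matrix.of_apply, Matrix.cons_val_zero, Matrix.cons_val_one,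
    Matrix.cons_val', Matrix.cons_val, Int.cast_zero, Int.cast_one, zero_mul, one_mul, add_zero, zero_add] at *
  have main := red_main (A := Q 0 0 ^ 2 + Q 0 1 ^ 2 + Q 0 2 ^ 2) (B := Q 1 0 ^ 2 + Q 1 1 ^ 2 + Q 1 2 ^ 2)
    (C := Q 2 0 ^ 2 + Q 2 1 ^ 2 + Q 2 2 ^ 2)
    (d := Q 1 0 * Q 2 0 + Q 1 1 * Q 2 1 + Q 1 2 * Q 2 2)
    (e := Q 0 0 * Q 2 0 + Q 0 1 * Q 2 1 + Q 0 2 * Q 2 2)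
    (f := Q 0 0 * Q 1 0 + Q 0 1 * Q 1 1 + Q 0 2 * Q 1 2)
    (lt_of_lt_of_le (by positivity) r0) (lt_of_lt_of_le (by positivity) r1)
    (lt_of_lt_of_le (by positivity) r2)
    (by
      have : (1 : ℝ) = 1 ^ 2 := by norm_num
      rw [this, ← hdet]
      ring)
    (fun m n => by linarith [m0 m n]) (fun m n => by linarith [m1 m n])
    (fun m n => by linarith [m2 m n])
  have hfin : ∀ {A B C : ℝ}, ε ^ 2 ≤ A → ε ^ 2 ≤ B → ε ^ 2 ≤ C → A * B * C ≤ 8 / 3 →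
      C ≤ 8 / 3 / ε ^ 4 := by
    intro A B C hA hB hC h
    rw [le_div_iff₀ (by positivity)]
    have h2 : 0 < ε ^ 2 := by positivity
    have : ε ^ 4 ≤ A * B := by
      have := mul_le_mul hA hB h2.le (h2.le.trans hA)
      calc ε ^ 4 = ε ^ 2 * ε ^ 2 := by ring
        _ ≤ _ := this
    nlinarith
  have g0 := hfin r1 r2 r0 (by linarith)
  have g1 := hfin r0 r2 r1 (by linarith)
  have g2 := hfin r0 r1 r2 (by linarith)
  intro i
  fin_cases i
  · exact g0
  · exact g1
  · exact g2

/-- pieces of the cone orbit -/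
def Orb (g : SL3R) (n : ℝ) : Set SL3R :=
  {q | ∃ γ ∈ SL3Z, ∃ v : ℝ × ℝ, n ≤ v.1 ∧ n ≤ v.2 ∧ q = γ * g * DD v}

/-- the limit set -/
def OM (g : SL3R) : Set SL3R := ⋂ n : ℕ, closure (Orb g n)

lemma Orb_anti (g : SL3R) {m n : ℝ} (h : m ≤ n) : Orb g n ⊆ Orb g m := by
  rintro q ⟨γ, hγ, v, h1, h2, rfl⟩
  exact ⟨γ, hγ, v, h.trans h1, h.trans h2, rfl⟩

lemma OM_closed (g : SL3R) : IsClosed (OM g) := isClosed_iInter fun _ => isClosed_closure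

lemma OM_sub_SS {g : SL3R} {ε : ℝ} (h : Orb g 0 ⊆ SS ε) : OM g ⊆ SS ε := by
  intro p hp
  have := Set.mem_iInter.1 hp 0
  exact closure_minimal (by simpa using h) (SS_closed ε) this

lemma OM_left {g p γ : SL3R} (hp : p ∈ OM g) (hγ : γ ∈ SL3Z) : γ * p ∈ OM g := by
  refine Set.mem_iInter.2 fun n => ?_
  refine map_mem_closure (continuous_const_mul γ) (Set.mem_iInter.1 hp n) ?_
  rintro q ⟨γ', hγ', v, h1, h2, rfl⟩
  exact ⟨γ * γ', SL3Z.mul_mem hγ hγ', v, h1, h2, by simp only [mul_assoc]⟩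

lemma OM_right {g p : SL3R} (hp : p ∈ OM g) (w : ℝ × ℝ) : p * DD w ∈ OM g := by
  refine Set.mem_iInter.2 fun n => ?_
  obtain ⟨m, hm⟩ := exists_nat_gt ((n : ℝ) + ‖w‖)
  refine map_mem_closure (f := fun x : SL3R => x * DD w) (continuous_mul_const (DD w))
    (Set.mem_iInter.1 hp m) ?_
  rintro q ⟨γ', hγ', v, h1, h2, rfl⟩
  have a1 : |w.1| ≤ ‖w‖ := norm_fst_le w
  have a2 : |w.2| ≤ ‖w‖ := norm_snd_le w
  have b1 := (abs_le.1 a1).1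
  have b2 := (abs_le.1 a2).1
  refine ⟨γ', hγ', v + w, ?_, ?_, by rw [DD_add]; simp only [mul_assoc]⟩
  · simp only [Prod.fst_add]; linarith
  · simp only [Prod.snd_add]; linarith

lemma OM_seq {g z : SL3R} {q : ℕ → SL3R} {t : ℕ → ℝ} (ht : Tendsto t atTop atTop)
    (hq : ∀ k, q k ∈ Orb g (t k)) (hz : Tendsto q atTop (𝓝 z)) : z ∈ OM g := by
  refine Set.mem_iInter.2 fun n => mem_closure_of_tendsto hz ?_
  filter_upwards [ht.eventually_ge_atTop (n : ℝ)] with k hk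
  exact Orb_anti g hk (hq k)

lemma OM_nonempty {g : SL3R} {ε : ℝ} (hε : 0 < ε) (h : Orb g 0 ⊆ SS ε) : (OM g).Nonempty := by
  obtain ⟨C, hC⟩ := mahler3 ε hε
  have : ∀ k : ℕ, ∃ q ∈ Orb g k, q ∈ boxSL C := by
    intro k
    have h1 : g * DD ((k : ℝ), (k : ℝ)) ∈ Orb g k :=
      ⟨1, SL3Z.one_mem, (k, k), le_rfl, le_rfl, by simp⟩
    obtain ⟨γ, hγ, hb⟩ := hC _ (h (Orb_anti g (by positivity) h1))
    exact ⟨_, ⟨γ, hγ, (k, k), le_rfl, le_rfl, by simp only [mul_assoc]⟩, hb⟩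
  choose q hq hb using this
  obtain ⟨z, -, φ, hφ, hlim⟩ := (boxSL_compact C).tendsto_subseq hb
  exact ⟨z, OM_seq (t := fun k => ((φ k : ℕ) : ℝ))
    (tendsto_natCast_atTop_atTop.comp hφ.tendsto_atTop) (fun k => hq (φ k)) hlim⟩

lemma OM_orbit {g : SL3R} {ε : ℝ} (hε : 0 < ε) (h : Orb g 0 ⊆ SS ε)
    (horb : ∀ A : Set XSL3, A.Nonempty → IsCompact A →
      (∀ g : SL3R, IsPosDiag3 g → rtSL3 g '' A = A) →
      ∀ x ∈ A, IsCompact (HOrbit3 x)) {p : SL3R} (hp : p ∈ OM g) :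
    IsCompact (HOrbit3 (prX p)) := by
  obtain ⟨C, hC⟩ := mahler3 ε hε
  refine horb (prX '' OM g) ⟨_, p, hp, rfl⟩ ?_ ?_ _ ⟨p, hp, rfl⟩
  · have : prX '' OM g = prX '' (boxSL C ∩ OM g) := by
      apply Set.Subset.antisymm
      · rintro _ ⟨q, hq, rfl⟩
        obtain ⟨γ, hγ, hb⟩ := hC q (OM_sub_SS h hq)
        exact ⟨γ * q, ⟨hb, OM_left hq hγ⟩, (prX_eq.2 ⟨γ, hγ, rfl⟩).symm⟩
      · exact Set.image_mono Set.inter_subset_right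
    rw [this]
    exact ((boxSL_compact C).inter_right (OM_closed g)).image prX_open.continuous
  · intro a ha
    obtain ⟨v, rfl⟩ := posDiag_iff.1 ha
    apply Set.Subset.antisymm
    · rintro _ ⟨_, ⟨q, hq, rfl⟩, rfl⟩
      exact ⟨q * DD v, OM_right hq v, rfl⟩
    · rintro _ ⟨q, hq, rfl⟩
      refine ⟨prX (q * DD (-v)), ⟨_, OM_right hq _, rfl⟩, ?_⟩
      rw [rt_prX, DD_neg, inv_mul_cancel_right]

lemma OM_coord {g : SL3R} {ε : ℝ} (hε : 0 < ε) (h : Orb g 0 ⊆ SS ε) {y : SL3R} (hy : y ∈ OM g)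
    {v : Fin 3 → ℤ} (hv : v ≠ 0) : ∑ i, (v i : ℝ) * (y : Matrix (Fin 3) (Fin 3) ℝ) i 2 ≠ 0 := by
  intro h0
  set x0 := ∑ i, (v i : ℝ) * (y : Matrix (Fin 3) (Fin 3) ℝ) i 0 with hx0
  set x1 := ∑ i, (v i : ℝ) * (y : Matrix (Fin 3) (Fin 3) ℝ) i 1 with hx1
  set δ := ε ^ 2 / (x0 ^ 2 + x1 ^ 2 + 1) with hδ
  have hδp : 0 < δ := by positivity
  set T := - Real.log δ / 2 with hT
  have key := OM_sub_SS h (OM_right hy (-T, 2 * T)) v hv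
  have e : ∀ j, ∑ i, (v i : ℝ) * ((y * DD (-T, 2 * T) : SL3R) : Matrix (Fin 3) (Fin 3) ℝ) i j =
      (∑ i, (v i : ℝ) * (y : Matrix (Fin 3) (Fin 3) ℝ) i j) * Real.exp (LL (-T, 2 * T) j) := by
    intro j
    rw [Finset.sum_mul]
    refine Finset.sum_congr rfl fun i _ => ?_
    rw [mul_DD_apply, mul_assoc]
  simp only [e] at key
  rw [Fin.sum_univ_three, h0, ← hx0, ← hx1] at key
  have l0 : LL (-T, 2 * T) 0 = -T := by simp [LL]; ring
  have l1 : LL (-T, 2 * T) 1 = -T := by simp [LL]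
  rw [l0, l1] at key
  have eT : Real.exp (-T) ^ 2 = δ := by
    rw [← Real.exp_nat_mul]
    have : ((2 : ℕ) : ℝ) * -T = Real.log δ := by rw [hT]; push_cast; ring
    rw [this, Real.exp_log hδp]
  have : ε ^ 2 ≤ (x0 ^ 2 + x1 ^ 2) * δ := by rw [← eT]; linarith [key]
  have h3 : (x0 ^ 2 + x1 ^ 2 + 1) * δ = ε ^ 2 := by
    rw [hδ]
    field_simp
  linarith

lemma stab_contra {y u : SL3R} (hy : IsCompact (HOrbit3 (prX y)))
    (hz : IsCompact (HOrbit3 (prX (y * u))))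
    (hdiag : ∀ i, (u : Matrix (Fin 3) (Fin 3) ℝ) i i = 1)
    (hlow : ∀ i j, j < i → (u : Matrix (Fin 3) (Fin 3) ℝ) i j = 0) :
    ∀ i j, i < j → (u : Matrix (Fin 3) (Fin 3) ℝ) i j = 0 := by
  obtain ⟨r1, hr1, H1⟩ := exists_stab hy
  obtain ⟨r2, hr2, H2⟩ := orbit_cocompact hz
  choose w hw γ hγ e1 using fun n : ℕ => H1 (0, -(n : ℝ))
  choose w' hw' γ' hγ' e2 using fun n : ℕ => H2 ((0, -(n : ℝ)) + w n)
  set V : ℕ → SL3R := fun n => (DD ((0, -(n : ℝ)) + w n))⁻¹ * u * DD ((0, -(n : ℝ)) + w n) with hV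
  -- bounds
  have hb : ∀ n : ℕ, ∀ i j, i < j → |(V n : Matrix (Fin 3) (Fin 3) ℝ) i j| ≤
      |(u : Matrix (Fin 3) (Fin 3) ℝ) i j| * (Real.exp (4 * r1) * Real.exp (-(n : ℝ))) := by
    intro n i j hij
    rw [hV, conj_apply, abs_mul, abs_of_pos (Real.exp_pos _), ← Real.exp_add]
    refine mul_le_mul_of_nonneg_left (Real.exp_le_exp.2 ?_) (abs_nonneg _)
    rw [LL_add, LL_add]
    have b1 := abs_le.1 (LL_bound (hw n) i)
    have b2 := abs_le.1 (LL_bound (hw n) j)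
    have b3 : LL (0, -(n : ℝ)) j - LL (0, -(n : ℝ)) i ≤ -n := by
      have hn : (0 : ℝ) ≤ n := n.cast_nonneg
      fin_cases i <;> fin_cases j <;> simp [LL] at hij ⊢ <;> linarith
    linarith [b1.1, b2.2]
  have hd : ∀ n : ℕ, ∀ i, (V n : Matrix (Fin 3) (Fin 3) ℝ) i i = 1 := by
    intro n i
    rw [hV, conj_apply, hdiag]
    simp
  have hl : ∀ n : ℕ, ∀ i j, j < i → (V n : Matrix (Fin 3) (Fin 3) ℝ) i j = 0 := by
    intro n i j hij
    rw [hV, conj_apply, hlow i j hij, zero_mul]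
  obtain ⟨C, hC⟩ : ∃ C : ℝ, ∀ i j, |(u : Matrix (Fin 3) (Fin 3) ℝ) i j| ≤ C := by
    obtain ⟨C, hC⟩ := compact_sub_box (isCompact_singleton (x := u))
    exact ⟨C, hC rfl⟩
  have hC0 : 0 ≤ C := (abs_nonneg _).trans (hC 0 0)
  have hVbox : ∀ n, V n ∈ boxSL (C * Real.exp (4 * r1) + 1) := by
    intro n i j
    have p1 : 0 ≤ C * Real.exp (4 * r1) := by positivity
    rcases lt_trichotomy i j with hij | hij | hij
    · refine (hb n i j hij).trans ?_
      have : Real.exp (4 * r1) * Real.exp (-(n : ℝ)) ≤ Real.exp (4 * r1) * 1 := by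
        refine mul_le_mul_of_nonneg_left (Real.exp_le_one_iff.2 ?_) (Real.exp_pos _).le
        simp
      have := mul_le_mul (hC i j) this (by positivity) hC0
      linarith
    · subst hij
      rw [hd]
      simp only [abs_one]
      linarith
    · rw [hl n i j hij, abs_zero]
      linarith
  set σ : ℕ → SL3R := fun n => γ' n * (γ n)⁻¹ with hσ
  have eσ : ∀ n, y * u * DD (w' n) = σ n * y * V n := by
    intro n
    rw [← e2 n, hσ]
    have : y = γ n * y * DD ((0, -(n : ℝ)) + w n) := (e1 n).symm
    calc γ' n * (y * u) * DD ((0, -(n : ℝ)) + w n)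
        = γ' n * (γ n)⁻¹ * (γ n * y * DD ((0, -(n : ℝ)) + w n)) * V n := by
          rw [hV]; group
      _ = _ := by rw [e1 n]
  let K : Set SL3R := (fun ab : (ℝ × ℝ) × SL3R => y * u * DD ab.1 * ab.2⁻¹ * y⁻¹) ''
    (Metric.closedBall 0 r2 ×ˢ boxSL (C * Real.exp (4 * r1) + 1))
  have hK : IsCompact K := by
    refine ((isCompact_closedBall _ _).prod (boxSL_compact _)).image ?_
    exact (((continuous_const.mul (DD_cont.comp continuous_fst))).mul continuous_snd.inv).mul
      continuous_const
  have hσK : ∀ n, σ n ∈ {g : SL3R | g ∈ SL3Z ∧ g ∈ K} := by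
    intro n
    refine ⟨SL3Z.mul_mem (hγ' n) (SL3Z.inv_mem (hγ n)), (w' n, V n), ⟨by simpa using hw' n, hVbox n⟩, ?_⟩
    change y * u * DD (w' n) * (V n)⁻¹ * y⁻¹ = σ n
    rw [eσ n]
    group
  have : Finite {g : SL3R | g ∈ SL3Z ∧ g ∈ K} := SL3Z_finite_compact hK
  obtain ⟨⟨s, hs⟩, hinf⟩ := Finite.exists_infinite_fiber
    (fun n : ℕ => (⟨σ n, hσK n⟩ : {g : SL3R | g ∈ SL3Z ∧ g ∈ K}))
  rw [Set.infinite_coe_iff] at hinf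
  set P := (s * y)⁻¹ * (y * u) with hP
  have hVP : ∀ n, σ n = s → V n = P * DD (w' n) := by
    intro n hn
    have := eσ n
    rw [hn] at this
    rw [hP, mul_assoc, this]
    group
  intro i j hij
  have hPij : (P : Matrix (Fin 3) (Fin 3) ℝ) i j = 0 := by
    by_contra hne
    have hpos : 0 < |(P : Matrix (Fin 3) (Fin 3) ℝ) i j| * Real.exp (-(2 * r2)) := by positivity
    have hlim : Tendsto (fun n : ℕ => |(u : Matrix (Fin 3) (Fin 3) ℝ) i j| *
        (Real.exp (4 * r1) * Real.exp (-(n : ℝ)))) atTop (𝓝 0) := by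
      have : Tendsto (fun n : ℕ => Real.exp (-(n : ℝ))) atTop (𝓝 0) :=
        Real.tendsto_exp_neg_atTop_nhds_zero.comp tendsto_natCast_atTop_atTop
      simpa using (this.const_mul (Real.exp (4 * r1))).const_mul |(u : Matrix (Fin 3) (Fin 3) ℝ) i j|
    obtain ⟨N, hN⟩ := eventually_atTop.1 (hlim.eventually_lt_const hpos)
    obtain ⟨n, hn, hnN⟩ := hinf.exists_gt N
    have hn' : σ n = s := congrArg Subtype.val hn
    have h1 := hN n hnN.le
    have h2 := hb n i j hij
    rw [hVP n hn', mul_DD_apply, abs_mul, abs_of_pos (Real.exp_pos _)] at h2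
    have h3 : Real.exp (-(2 * r2)) ≤ Real.exp (LL (w' n) j) :=
      Real.exp_le_exp.2 (abs_le.1 (LL_bound (hw' n) j)).1
    have h4 := mul_le_mul_of_nonneg_left h3 (abs_nonneg ((P : Matrix (Fin 3) (Fin 3) ℝ) i j))
    linarith
  obtain ⟨n, hn⟩ := hinf.nonempty
  have hn' : σ n = s := congrArg Subtype.val hn
  have h5 : (V n : Matrix (Fin 3) (Fin 3) ℝ) i j = 0 := by
    rw [hVP n hn', mul_DD_apply, hPij, zero_mul]
  rw [hV, conj_apply] at h5
  exact (mul_eq_zero.1 h5).resolve_right (Real.exp_pos _).ne'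

/-- the unipotent matrix attached to `α, β` -/
def UU (α β : ℝ) : SL3R := ⟨!![1, α, β; 0, 1, 0; 0, 0, 1], by simp [Matrix.det_fin_three]⟩

lemma SS_left {ε : ℝ} {p γ : SL3R} (hp : p ∈ SS ε) (hγ : γ ∈ SL3Z) : γ * p ∈ SS ε := by
  obtain ⟨A, hA⟩ := mem_SL3Z.1 hγ
  intro v hv
  have hne : Matrix.vecMul v (A : Matrix (Fin 3) (Fin 3) ℤ) ≠ 0 := by
    intro h0
    exact hv (Matrix.eq_zero_of_vecMul_eq_zero (by rw [A.det_coe]; exact one_ne_zero) h0)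
  have := hp _ hne
  convert this using 3 with j _
  simp only [Matrix.SpecialLinearGroup.coe_mul, Matrix.mul_apply, Fin.sum_univ_three, hA,
    Matrix.vecMul, dotProduct]
  push_cast
  ring

lemma three_aux {c a b d : ℝ} (hc : 0 < c) (hc1 : c ≤ 1) (h : c ≤ |a| * |b| * |d|) :
    c ^ 2 ≤ a ^ 2 + b ^ 2 + d ^ 2 := by
  by_contra! hlt
  have ha : |a| < c := abs_lt_of_sq_lt_sq (by nlinarith [sq_nonneg b, sq_nonneg d]) hc.le
  have hb : |b| < c := abs_lt_of_sq_lt_sq (by nlinarith [sq_nonneg a, sq_nonneg d]) hc.le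
  have hd : |d| < c := abs_lt_of_sq_lt_sq (by nlinarith [sq_nonneg b, sq_nonneg a]) hc.le
  have h1 : |a| * |b| ≤ 1 :=
    mul_le_one₀ (ha.le.trans hc1) (abs_nonneg _) (hb.le.trans hc1)
  have h2 : |a| * |b| * |d| ≤ 1 * |d| := mul_le_mul_of_nonneg_right h1 (abs_nonneg _)
  linarith

lemma dist_aux (n m : ℤ) (α : ℝ) : distToInt ((n.natAbs : ℝ) * α) ≤ |(n : ℝ) * α + m| := by
  unfold distToInt
  rcases Int.natAbs_eq n with h | h
  · have := round_le ((n.natAbs : ℝ) * α) (-m)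
    refine this.trans (le_of_eq ?_)
    have h' : (n : ℝ) = (n.natAbs : ℝ) := by
      have := congrArg (fun z : ℤ => (z : ℝ)) h
      simpa only [Int.cast_natCast] using this
    rw [h']
    push_cast
    rw [sub_neg_eq_add]
  · have := round_le ((n.natAbs : ℝ) * α) m
    refine this.trans (le_of_eq ?_)
    have h' : (n : ℝ) = -(n.natAbs : ℝ) := by
      have := congrArg (fun z : ℤ => (z : ℝ)) h
      simpa only [Int.cast_neg, Int.cast_natCast] using this
    rw [h', ← abs_neg]
    congr 1
    ring

lemma Orb_sub_SS {α β c : ℝ} (hc : 0 < c) (hc1 : c ≤ 1)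
    (h : ∀ n : ℕ, 1 ≤ n → c ≤ (n : ℝ) * distToInt (n * α) * distToInt (n * β)) :
    Orb (UU α β) 0 ⊆ SS c := by
  rintro q ⟨γ, hγ, v, h1, h2, rfl⟩
  rw [mul_assoc]
  refine SS_left ?_ hγ
  intro w hw
  have e0 : ∑ i, (w i : ℝ) * ((UU α β * DD v : SL3R) : Matrix (Fin 3) (Fin 3) ℝ) i 0 =
      w 0 * Real.exp (-(v.1 + v.2)) := by
    simp only [Fin.sum_univ_three, mul_DD_apply]
    simp [UU, LL]
  have e1 : ∑ i, (w i : ℝ) * ((UU α β * DD v : SL3R) : Matrix (Fin 3) (Fin 3) ℝ) i 1 =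
      (w 0 * α + w 1) * Real.exp v.1 := by
    simp only [Fin.sum_univ_three, mul_DD_apply]
    simp [UU, LL]; ring
  have e2 : ∑ i, (w i : ℝ) * ((UU α β * DD v : SL3R) : Matrix (Fin 3) (Fin 3) ℝ) i 2 =
      (w 0 * β + w 2) * Real.exp v.2 := by
    simp only [Fin.sum_univ_three, mul_DD_apply]
    simp [UU, LL]; ring
  rw [Fin.sum_univ_three, e0, e1, e2]
  by_cases h0 : w 0 = 0
  · rw [h0]
    simp only [Int.cast_zero, zero_mul, zero_add]
    have x1 : 1 ≤ Real.exp v.1 := Real.one_le_exp h1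
    have x2 : 1 ≤ Real.exp v.2 := Real.one_le_exp h2
    have key : ∀ (m : ℤ) (x : ℝ), m ≠ 0 → 1 ≤ x → 1 ≤ ((m : ℝ) * x) ^ 2 := by
      intro m x hm hx
      have : (1 : ℤ) ≤ m ^ 2 := Int.add_one_le_iff.2 (show (0 : ℤ) < m ^ 2 by positivity)
      have h3 : (1 : ℝ) ≤ (m : ℝ) ^ 2 := by exact_mod_cast this
      rw [mul_pow]
      have h4 : 1 ≤ x ^ 2 := one_le_pow₀ hx
      nlinarith
    have hcc : c ^ 2 ≤ 1 := pow_le_one₀ hc.le hc1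
    by_cases h1' : w 1 = 0
    · have h2' : w 2 ≠ 0 := by
        intro h2'
        apply hw
        ext i
        fin_cases i <;> assumption
      have := key _ _ h2' x2
      nlinarith [sq_nonneg ((w 1 : ℝ) * Real.exp v.1)]
    · have := key _ _ h1' x1
      nlinarith [sq_nonneg ((w 2 : ℝ) * Real.exp v.2)]
  · refine three_aux hc hc1 ?_
    have hN : 1 ≤ (w 0).natAbs := Int.natAbs_pos.2 h0
    refine (h _ hN).trans ?_
    rw [abs_mul, abs_mul, abs_mul, Real.abs_exp, Real.abs_exp, Real.abs_exp]
    have : |(w 0 : ℝ)| * Real.exp (-(v.1 + v.2)) * (|(w 0 : ℝ) * α + w 1| * Real.exp v.1) *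
        (|(w 0 : ℝ) * β + w 2| * Real.exp v.2) =
        |(w 0 : ℝ)| * |(w 0 : ℝ) * α + w 1| * |(w 0 : ℝ) * β + w 2| := by
      have : Real.exp (-(v.1 + v.2)) * Real.exp v.1 * Real.exp v.2 = 1 := by
        rw [← Real.exp_add, ← Real.exp_add, Real.exp_eq_one_iff]; ring
      linear_combination (|(w 0 : ℝ)| * |(w 0 : ℝ) * α + w 1| * |(w 0 : ℝ) * β + w 2|) * this
    rw [this]
    have hn : (((w 0).natAbs : ℕ) : ℝ) = |(w 0 : ℝ)| := by
      rw [Nat.cast_natAbs]; push_cast; rfl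
    rw [← hn]
    have d1 := dist_aux (w 0) (w 1) α
    have d2 := dist_aux (w 0) (w 2) β
    have p2 : 0 ≤ distToInt (((w 0).natAbs : ℝ) * β) := abs_nonneg _
    gcongr

lemma distToInt_mul_zero {x : ℝ} (h : distToInt x = 0) (k : ℕ) : distToInt (k * x) = 0 := by
  unfold distToInt at *
  have hx : x = round x := sub_eq_zero.1 (abs_eq_zero.1 h)
  have : (k : ℝ) * x = ((k * round x : ℤ) : ℝ) := by
    push_cast; rw [← hx]
  rw [this, round_intCast, sub_self, abs_zero]

lemma exists_c {α β : ℝ} (h : Filter.atTop.liminf (fun n : ℕ =>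
        ENNReal.ofReal ((n : ℝ) * distToInt (n * α) * distToInt (n * β))) ≠ 0) :
    ∃ c : ℝ, 0 < c ∧ c ≤ 1 ∧
      ∀ n : ℕ, 1 ≤ n → c ≤ (n : ℝ) * distToInt (n * α) * distToInt (n * β) := by
  set f : ℕ → ℝ := fun n => (n : ℝ) * distToInt (n * α) * distToInt (n * β) with hf
  obtain ⟨d, hd0, hd⟩ := exists_between (pos_iff_ne_zero.2 h)
  have ev := Filter.eventually_lt_of_lt_liminf hd
  obtain ⟨N, hN⟩ := Filter.eventually_atTop.1 ev
  have hfpos : ∀ n, 1 ≤ n → 0 < f n := by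
    intro n hn
    by_contra! hle
    have hn0 : (0 : ℝ) < n := by exact_mod_cast hn
    have h0 : f n = 0 := le_antisymm hle
      (mul_nonneg (mul_nonneg hn0.le (abs_nonneg _)) (abs_nonneg _))
    have h3 : f ((N + 1) * n) = 0 := by
      rcases mul_eq_zero.1 h0 with h1 | h1
      · rcases mul_eq_zero.1 h1 with h2 | h2
        · exact absurd h2 hn0.ne'
        · have := distToInt_mul_zero h2 (N + 1)
          simp only [hf]
          rw [Nat.cast_mul, mul_assoc ((N + 1 : ℕ) : ℝ) (n : ℝ) α, this]
          simp
      · have := distToInt_mul_zero h1 (N + 1)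
        simp only [hf]
        rw [Nat.cast_mul, mul_assoc ((N + 1 : ℕ) : ℝ) (n : ℝ) β, this]
        simp
    have h4 := hN ((N + 1) * n) (by nlinarith)
    change d < ENNReal.ofReal (f ((N + 1) * n)) at h4
    rw [h3, ENNReal.ofReal_zero] at h4
    exact not_lt_zero h4
  have hdt : d ≠ ⊤ := hd.ne_top
  have hdr : 0 < d.toReal := ENNReal.toReal_pos hd0.ne' hdt
  have hfin : ∀ M : ℕ, ∃ c : ℝ, 0 < c ∧ ∀ n, 1 ≤ n → n < M → c ≤ f n := by
    intro M
    induction M with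
    | zero => exact ⟨1, one_pos, fun n _ h => absurd h (Nat.not_lt_zero _)⟩
    | succ M ih =>
      obtain ⟨c, hc, hc'⟩ := ih
      rcases Nat.eq_zero_or_pos M with h0 | h0
      · exact ⟨1, one_pos, fun n h1 h2 => by omega⟩
      · refine ⟨min c (f M), lt_min hc (hfpos M h0), fun n h1 h2 => ?_⟩
        rcases Nat.lt_succ_iff_lt_or_eq.1 h2 with h3 | h3
        · exact (min_le_left _ _).trans (hc' n h1 h3)
        · rw [h3]; exact min_le_right _ _
  obtain ⟨c, hc, hc'⟩ := hfin N
  refine ⟨min 1 (min c d.toReal), lt_min one_pos (lt_min hc hdr), min_le_left _ _, ?_⟩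
  intro n hn
  rcases lt_or_ge n N with h1 | h1
  · exact ((min_le_right _ _).trans (min_le_left _ _)).trans (hc' n hn h1)
  · refine ((min_le_right _ _).trans (min_le_right _ _)).trans ?_
    have h2 := hN n h1
    exact (ENNReal.lt_ofReal_iff_toReal_lt hdt).1 h2 |>.le

lemma nondeg {α β ε : ℝ} (hε : 0 < ε) (h : Orb (UU α β) 0 ⊆ SS ε) {y q u : SL3R}
    (hy : y ∈ OM (UU α β)) (hq : q ∈ Orb (UU α β) 0) (hu : q = y * u)
    (h02 : (u : Matrix (Fin 3) (Fin 3) ℝ) 0 2 = 0) (h12 : (u : Matrix (Fin 3) (Fin 3) ℝ) 1 2 = 0) :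
    False := by
  obtain ⟨γ, hγ, v, h1, h2, e⟩ := hq
  obtain ⟨A, hA⟩ := mem_SL3Z.1 (SL3Z.inv_mem hγ)
  have hne := OM_coord hε h hy (SL3Z_row_ne_zero A 1)
  have e1 : γ⁻¹ * (y * u) = UU α β * DD v := by rw [← hu, e]; group
  have e2 : ((γ⁻¹ * (y * u) : SL3R) : Matrix (Fin 3) (Fin 3) ℝ) 1 2 = 0 := by
    rw [e1, mul_DD_apply]; simp [UU]
  rw [← mul_assoc, Matrix.SpecialLinearGroup.coe_mul, Matrix.mul_apply, Fin.sum_univ_three, h02,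
    h12, mul_zero, mul_zero, zero_add, zero_add, Matrix.SpecialLinearGroup.coe_mul,
    Matrix.mul_apply] at e2
  simp only [hA] at e2
  have h22 := (mul_eq_zero.1 e2).resolve_left hne
  have hdet : (u : Matrix (Fin 3) (Fin 3) ℝ).det = 0 :=
    Matrix.det_eq_zero_of_column_eq_zero 2 (by intro i; fin_cases i <;> assumption)
  rw [u.det_coe] at hdet
  exact one_ne_zero hdet

lemma near_pick {g y : SL3R} (hy : y ∈ OM g) (k : ℕ) : ∃ u : SL3R, y * u ∈ Orb g k ∧
    ∀ i j, |(u : Matrix (Fin 3) (Fin 3) ℝ) i j - (1 : Matrix (Fin 3) (Fin 3) ℝ) i j| <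
      1 / ((k : ℝ) + 1) := by
  have h1 := mem_closure_iff_frequently.1 (Set.mem_iInter.1 hy k)
  have h2 : ∀ᶠ q in 𝓝 y, ∀ i j, |((y⁻¹ * q : SL3R) : Matrix (Fin 3) (Fin 3) ℝ) i j -
      (1 : Matrix (Fin 3) (Fin 3) ℝ) i j| < 1 / ((k : ℝ) + 1) := by
    refine Filter.eventually_all.2 fun i => Filter.eventually_all.2 fun j => ?_
    have hc : Continuous fun q : SL3R => |((y⁻¹ * q : SL3R) : Matrix (Fin 3) (Fin 3) ℝ) i j -
        (1 : Matrix (Fin 3) (Fin 3) ℝ) i j| :=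
      (((sl3_entry_cont i j).comp (continuous_const_mul y⁻¹)).sub continuous_const).abs
    refine (hc.tendsto y).eventually_lt_const ?_
    rw [inv_mul_cancel]
    simp
    positivity
  obtain ⟨q, hq, hq'⟩ := (h1.and_eventually h2).exists
  exact ⟨y⁻¹ * q, by rwa [mul_inv_cancel_left], hq'⟩

lemma step1 {α β ε : ℝ} (hε : 0 < ε) (h : Orb (UU α β) 0 ⊆ SS ε) {y : SL3R}
    (hy : y ∈ OM (UU α β)) {r : ℝ}
    (H : ∀ v : ℝ × ℝ, ∃ w : ℝ × ℝ, ‖w‖ ≤ r ∧ ∃ γ ∈ SL3Z, γ * y * DD (v + w) = y) (k : ℕ) :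
    ∃ u : SL3R, y * u ∈ Orb (UU α β) ((k : ℝ) - r) ∧
      (∀ i, |(u : Matrix (Fin 3) (Fin 3) ℝ) i i - 1| ≤ 1 / ((k : ℝ) + 1)) ∧
      (∀ i j, j < i → |(u : Matrix (Fin 3) (Fin 3) ℝ) i j| ≤
        1 / ((k : ℝ) + 1) * Real.exp (4 * r)) ∧
      (∀ i j, i < j → |(u : Matrix (Fin 3) (Fin 3) ℝ) i j| ≤ Real.exp (4 * r)) ∧
      Real.exp (-(4 * r)) ≤ |(u : Matrix (Fin 3) (Fin 3) ℝ) 0 1| +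
        |(u : Matrix (Fin 3) (Fin 3) ℝ) 1 2| + |(u : Matrix (Fin 3) (Fin 3) ℝ) 0 2| := by
  obtain ⟨u, hq, hu⟩ := near_pick hy k
  have hk1 : 1 / ((k : ℝ) + 1) ≤ 1 := by
    rw [div_le_one (by positivity)]
    linarith [k.cast_nonneg (α := ℝ)]
  have hoff : ∀ i j, i ≠ j → |(u : Matrix (Fin 3) (Fin 3) ℝ) i j| ≤ 1 / ((k : ℝ) + 1) := by
    intro i j hij
    have := (hu i j).le
    rwa [Matrix.one_apply_ne hij, sub_zero] at this
  set a := |(u : Matrix (Fin 3) (Fin 3) ℝ) 0 1| with ha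
  set b := |(u : Matrix (Fin 3) (Fin 3) ℝ) 1 2| with hb
  set d := |(u : Matrix (Fin 3) (Fin 3) ℝ) 0 2| with hd
  have ha0 : 0 ≤ a := abs_nonneg _
  have hb0 : 0 ≤ b := abs_nonneg _
  have hd0 : 0 ≤ d := abs_nonneg _
  have ha1 : a ≤ 1 := (hoff 0 1 (by decide)).trans hk1
  have hb1 : b ≤ 1 := (hoff 1 2 (by decide)).trans hk1
  have hd1 : d ≤ 1 := (hoff 0 2 (by decide)).trans hk1
  set m := max (max a b) (Real.sqrt d) with hm
  have hma : a ≤ m := (le_max_left _ _).trans (le_max_left _ _)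
  have hmb : b ≤ m := (le_max_right _ _).trans (le_max_left _ _)
  have hmd' : Real.sqrt d ≤ m := le_max_right _ _
  have hm1 : m ≤ 1 := max_le (max_le ha1 hb1) (Real.sqrt_le_one.2 hd1)
  have hm0' : 0 ≤ m := ha0.trans hma
  have hmd : d ≤ m ^ 2 := (Real.sqrt_le_left hm0').1 hmd'
  have hm0 : 0 < m := by
    rcases hm0'.lt_or_eq with h1 | h1
    · exact h1
    · exfalso
      have e1 : b = 0 := le_antisymm (by linarith) hb0
      have e2 : d = 0 := le_antisymm (by rw [← h1] at hmd; simpa using hmd) hd0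
      exact nondeg hε h hy (Orb_anti _ (by positivity) hq) rfl (abs_eq_zero.1 e2)
        (abs_eq_zero.1 e1)
  have hatt : m = a ∨ m = b ∨ m ^ 2 = d := by
    rcases max_choice (max a b) (Real.sqrt d) with h1 | h1
    · rcases max_choice a b with h2 | h2
      · left; rw [hm, h1, h2]
      · right; left; rw [hm, h1, h2]
    · right; right; rw [hm, h1, Real.sq_sqrt hd0]
  clear_value m
  set T := - Real.log m with hT
  have hT0 : 0 ≤ T := by
    have := Real.log_nonpos hm0' hm1
    linarith
  have heT : Real.exp T * m = 1 := by
    rw [hT, Real.exp_neg, Real.exp_log hm0, inv_mul_cancel₀ hm0.ne']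
  have heT2 : Real.exp (2 * T) * m ^ 2 = 1 := by
    have : Real.exp (2 * T) = Real.exp T ^ 2 := by
      rw [← Real.exp_nat_mul]; norm_num
    rw [this, ← mul_pow, heT, one_pow]
  obtain ⟨w, hw, γ, hγ, e⟩ := H (0, T)
  have hfac : ∀ i j, |(((DD ((0, T) + w))⁻¹ * u * DD ((0, T) + w) : SL3R) :
      Matrix (Fin 3) (Fin 3) ℝ) i j| = |(u : Matrix (Fin 3) (Fin 3) ℝ) i j| *
      Real.exp (LL (0, T) j - LL (0, T) i) * Real.exp (LL w j - LL w i) := by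
    intro i j
    rw [conj_apply, abs_mul, Real.abs_exp, mul_assoc, ← Real.exp_add, LL_add, LL_add]
    congr 2
    ring
  have hup : ∀ i j, Real.exp (LL w j - LL w i) ≤ Real.exp (4 * r) := by
    intro i j
    apply Real.exp_le_exp.2
    linarith [(abs_le.1 (LL_bound hw i)).1, (abs_le.1 (LL_bound hw j)).2]
  have hdn : ∀ i j, Real.exp (-(4 * r)) ≤ Real.exp (LL w j - LL w i) := by
    intro i j
    apply Real.exp_le_exp.2
    linarith [(abs_le.1 (LL_bound hw i)).2, (abs_le.1 (LL_bound hw j)).1]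
  have l01 : LL (0, T) 1 - LL (0, T) 0 = T := by simp [LL]
  have l12 : LL (0, T) 2 - LL (0, T) 1 = T := by simp [LL]
  have l02 : LL (0, T) 2 - LL (0, T) 0 = 2 * T := by simp [LL]; ring
  refine ⟨(DD ((0, T) + w))⁻¹ * u * DD ((0, T) + w), ?_, ?_, ?_, ?_, ?_⟩
  · obtain ⟨γ', hγ', v, h1, h2, e'⟩ := hq
    have n1 := (abs_le.1 ((norm_fst_le w).trans hw : |w.1| ≤ r)).1
    have n2 := (abs_le.1 ((norm_snd_le w).trans hw : |w.2| ≤ r)).1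
    refine ⟨γ * γ', SL3Z.mul_mem hγ hγ', v + ((0, T) + w), ?_, ?_, ?_⟩
    · simp only [Prod.fst_add]; linarith
    · simp only [Prod.snd_add]; linarith
    · have e3 : y * (DD ((0, T) + w))⁻¹ = γ * y := by
        rw [mul_inv_eq_iff_eq_mul]; exact e.symm
      calc y * ((DD ((0, T) + w))⁻¹ * u * DD ((0, T) + w))
          = (y * (DD ((0, T) + w))⁻¹) * u * DD ((0, T) + w) := by simp only [mul_assoc]
        _ = γ * (y * u) * DD ((0, T) + w) := by rw [e3]; simp only [mul_assoc]
        _ = _ := by rw [e', DD_add v]; simp only [mul_assoc]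
  · intro i
    rw [conj_apply, sub_self, Real.exp_zero, mul_one]
    have := (hu i i).le
    rwa [Matrix.one_apply_eq] at this
  · intro i j hij
    rw [hfac]
    refine mul_le_mul ?_ (hup i j) (Real.exp_pos _).le (by positivity)
    have : Real.exp (LL (0, T) j - LL (0, T) i) ≤ 1 := by
      apply Real.exp_le_one_iff.2
      fin_cases i <;> fin_cases j <;> simp [LL] at hij ⊢ <;> linarith
    calc _ ≤ |(u : Matrix (Fin 3) (Fin 3) ℝ) i j| * 1 :=
          mul_le_mul_of_nonneg_left this (abs_nonneg _)
      _ ≤ _ := by rw [mul_one]; exact hoff i j hij.ne'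
  · intro i j hij
    rw [hfac]
    have key : |(u : Matrix (Fin 3) (Fin 3) ℝ) i j| * Real.exp (LL (0, T) j - LL (0, T) i) ≤ 1 := by
      have hcase : (i = 0 ∧ j = 1) ∨ (i = 1 ∧ j = 2) ∨ (i = 0 ∧ j = 2) := by
        revert i j; decide
      rcases hcase with ⟨rfl, rfl⟩ | ⟨rfl, rfl⟩ | ⟨rfl, rfl⟩
      · rw [l01, ← ha, ← heT, mul_comm]
        gcongr
      · rw [l12, ← hb, ← heT, mul_comm]
        gcongr
      · rw [l02, ← hd, ← heT2, mul_comm]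
        gcongr
    calc _ ≤ 1 * Real.exp (4 * r) := mul_le_mul key (hup i j) (Real.exp_pos _).le zero_le_one
      _ = _ := one_mul _
  · rw [hfac, hfac, hfac, l01, l12, l02, ← ha, ← hb, ← hd]
    have p1 : 0 ≤ a * Real.exp T * Real.exp (LL w 1 - LL w 0) := by positivity
    have p2 : 0 ≤ b * Real.exp T * Real.exp (LL w 2 - LL w 1) := by positivity
    have p3 : 0 ≤ d * Real.exp (2 * T) * Real.exp (LL w 2 - LL w 0) := by positivity
    rcases hatt with h1 | h1 | h1
    · have : a * Real.exp T = 1 := by rw [← h1, mul_comm]; exact heT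
      rw [this, one_mul] at p1 ⊢
      linarith [hdn 0 1]
    · have : b * Real.exp T = 1 := by rw [← h1, mul_comm]; exact heT
      rw [this, one_mul] at p2 ⊢
      linarith [hdn 1 2]
    · have : d * Real.exp (2 * T) = 1 := by rw [← h1, mul_comm]; exact heT2
      rw [this, one_mul] at p3 ⊢
      linarith [hdn 0 2]

lemma final_contra {α β ε : ℝ} (hε : 0 < ε) (h : Orb (UU α β) 0 ⊆ SS ε)
    (horb : ∀ A : Set XSL3, A.Nonempty → IsCompact A →
      (∀ g : SL3R, IsPosDiag3 g → rtSL3 g '' A = A) →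
      ∀ x ∈ A, IsCompact (HOrbit3 x)) : False := by
  obtain ⟨y, hy⟩ := OM_nonempty hε h
  have hyc := OM_orbit hε h horb hy
  obtain ⟨r, hr, H⟩ := exists_stab hyc
  choose u hq hd hl hu hs using step1 hε h hy H
  have hk1 : ∀ k : ℕ, 1 / ((k : ℝ) + 1) ≤ 1 := by
    intro k
    rw [div_le_one (by positivity)]
    linarith [k.cast_nonneg (α := ℝ)]
  have hbox : ∀ k, u k ∈ boxSL (Real.exp (4 * r) + 2) := by
    intro k i j
    have hp := Real.exp_pos (4 * r)
    rcases lt_trichotomy i j with hij | hij | hij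
    · linarith [hu k i j hij]
    · subst hij
      have := abs_le.1 ((hd k i).trans (hk1 k))
      exact abs_le.2 ⟨by linarith [this.1], by linarith [this.2]⟩
    · have h1 := hl k i j hij
      have h2 := mul_le_mul_of_nonneg_right (hk1 k) hp.le
      linarith
  obtain ⟨z, -, φ, hφ, hlim⟩ := (boxSL_compact _).tendsto_subseq hbox
  have hent : ∀ i j, Tendsto (fun k => (u (φ k) : Matrix (Fin 3) (Fin 3) ℝ) i j) atTop
      (𝓝 ((z : Matrix (Fin 3) (Fin 3) ℝ) i j)) := fun i j =>
    ((sl3_entry_cont i j).tendsto z).comp hlim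
  have h0 : Tendsto (fun k => 1 / (((φ k : ℕ) : ℝ) + 1)) atTop (𝓝 0) :=
    tendsto_one_div_add_atTop_nhds_zero_nat.comp hφ.tendsto_atTop
  have zd : ∀ i, (z : Matrix (Fin 3) (Fin 3) ℝ) i i = 1 := by
    intro i
    have h1 : Tendsto (fun k => (u (φ k) : Matrix (Fin 3) (Fin 3) ℝ) i i - 1) atTop (𝓝 0) :=
      squeeze_zero_norm (fun k => hd (φ k) i) h0
    have h2 := tendsto_nhds_unique h1 ((hent i i).sub_const 1)
    linarith
  have zl : ∀ i j, j < i → (z : Matrix (Fin 3) (Fin 3) ℝ) i j = 0 := by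
    intro i j hij
    have h1 : Tendsto (fun k => (u (φ k) : Matrix (Fin 3) (Fin 3) ℝ) i j) atTop (𝓝 0) :=
      squeeze_zero_norm (fun k => hl (φ k) i j hij) (by simpa using h0.mul_const (Real.exp (4 * r)))
    exact tendsto_nhds_unique (hent i j) h1
  have zs : Real.exp (-(4 * r)) ≤ |(z : Matrix (Fin 3) (Fin 3) ℝ) 0 1| +
        |(z : Matrix (Fin 3) (Fin 3) ℝ) 1 2| + |(z : Matrix (Fin 3) (Fin 3) ℝ) 0 2| :=
    ge_of_tendsto' (((hent 0 1).abs.add (hent 1 2).abs).add (hent 0 2).abs) fun k => hs (φ k)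
  have hz : y * z ∈ OM (UU α β) := by
    refine OM_seq (t := fun k => ((φ k : ℕ) : ℝ) - r) (q := fun k => y * u (φ k)) ?_
      (fun k => hq (φ k)) ?_
    · exact tendsto_atTop_add_const_right _ (-r)
        (tendsto_natCast_atTop_atTop.comp hφ.tendsto_atTop)
    · exact ((continuous_const_mul y).tendsto z).comp hlim
  have hup := stab_contra hyc (OM_orbit hε h horb hz) zd zl
  rw [hup 0 1 (by decide), hup 1 2 (by decide), hup 0 2 (by decide)] at zs
  simp only [abs_zero, add_zero] at zs
  linarith [Real.exp_pos (-(4 * r))]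

/-- Cassels–Swinnerton-Dyer / Margulis: if every nonempty compact
`H`-invariant subset of `X = SL(3,ℤ)\SL(3,ℝ)` is a union of compact `H`-orbits (i.e.
every point of such a set has compact `H`-orbit), then Littlewood's conjecture holds:
`liminf_{n→∞} n‖nα‖‖nβ‖ = 0` for all real `α`, `β`. -/
theorem margulis_compact_orbits_implies_littlewood
    (horb : ∀ A : Set XSL3, A.Nonempty → IsCompact A →
      (∀ g : SL3R, IsPosDiag3 g → rtSL3 g '' A = A) →
      ∀ x ∈ A, IsCompact (HOrbit3 x)) :
    ∀ α β : ℝ,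
      Filter.atTop.liminf (fun n : ℕ =>
        ENNReal.ofReal ((n : ℝ) * distToInt (n * α) * distToInt (n * β))) = 0 := by
  intro α β
  by_contra hne
  obtain ⟨c, hc, hc1, hn⟩ := exists_c hne
  exact final_contra hc (Orb_sub_SS hc hc1 hn) horb
end
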